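/- Let D be a convex domain in the Euclidean plane that is neither a parallelogram nor a centrally symmetric hexagon. If D admits a k-fold translative tiling of the plane for some positive integer k, then k ≥ 5. Equivalently, besides parallelograms and centrally symmetric hexagons, no convex domain can form a one-, two-, three- or four-fold translative tiling of the plane. -/

import Mathlib

open Pointwise

/-- `K + X` is a `k`-fold translative tiling of the plane: the translate multiset
`(x i)` is discrete, every point of the plane belongs to at least `k` of the translates
`K + x i`, and every point belongs to at most `k` of the translates `interior K + x i`
(multiplicity counted over the index set). -/
def IsKFoldTranslativeTiling {ι : Type} (K : Set (ℝ × ℝ)) (x : ι → ℝ × ℝ) (k : ℕ) : Prop :=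
  (∀ R : ℝ, {i : ι | ‖x i‖ ≤ R}.Finite) ∧
  (∀ p : ℝ × ℝ, ∃ s : Finset ι, k ≤ s.card ∧ ∀ i ∈ s, p - x i ∈ K) ∧
  (∀ p : ℝ × ℝ, ∀ s : Finset ι, (∀ i ∈ s, p - x i ∈ interior K) → s.card ≤ k)

/-- `P` is a (two-dimensional) convex polygon whose vertex set is the finite set `V`:
`P` is the convex hull of `V`, every element of `V` is an extreme point of `P`
(so `V` is exactly the vertex set), and `P` has nonempty interior. -/
def IsConvexPolygon (P : Set (ℝ × ℝ)) (V : Finset (ℝ × ℝ)) : Prop :=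
  P = convexHull ℝ (V : Set (ℝ × ℝ)) ∧
  (∀ v ∈ V, v ∈ Set.extremePoints ℝ P) ∧
  (interior P).Nonempty

/-- `P` is symmetric about some point `c`. -/
def IsCentrallySymmetric (P : Set (ℝ × ℝ)) : Prop :=
  ∃ c : ℝ × ℝ, ∀ p ∈ P, 2 • c - p ∈ P

/-- The segment `[a, b]` is an edge of the convex polygon `P` with vertex set `V`. -/
def IsEdge (P : Set (ℝ × ℝ)) (V : Finset (ℝ × ℝ)) (a b : ℝ × ℝ) : Prop :=
  a ∈ V ∧ b ∈ V ∧ a ≠ b ∧ segment ℝ a b ⊆ frontier P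

/-- `D` is a parallelogram: the set of points `v + s • a + t • b` with `s, t ∈ [0,1]`,
for some linearly independent vectors `a, b`. -/
def IsParallelogram (D : Set (ℝ × ℝ)) : Prop :=
  ∃ v a b : ℝ × ℝ, LinearIndependent ℝ ![a, b] ∧
    D = (fun st : ℝ × ℝ => v + st.1 • a + st.2 • b) ''
      (Set.Icc (0 : ℝ) 1 ×ˢ Set.Icc (0 : ℝ) 1)

/-- `D` is a centrally symmetric hexagon: a convex polygon with exactly `6` vertices
which is symmetric about a point. -/
def IsCentrallySymmetricHexagon (D : Set (ℝ × ℝ)) : Prop :=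
  ∃ V : Finset (ℝ × ℝ), IsConvexPolygon D V ∧ V.card = 6 ∧ IsCentrallySymmetric D


namespace KT
open Set Filter Topology Bornology

/-- planar cross product -/
def cr (a b : ℝ × ℝ) : ℝ := a.1 * b.2 - a.2 * b.1

lemma cr_add_right (a b c : ℝ × ℝ) : cr a (b + c) = cr a b + cr a c := by
  simp [cr]; ring
lemma cr_add_left (a b c : ℝ × ℝ) : cr (a + b) c = cr a c + cr b c := by
  simp [cr]; ring
lemma cr_sub_right (a b c : ℝ × ℝ) : cr a (b - c) = cr a b - cr a c := by
  simp [cr]; ring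
lemma cr_sub_left (a b c : ℝ × ℝ) : cr (a - b) c = cr a c - cr b c := by
  simp [cr]; ring
lemma cr_smul_right (a b : ℝ × ℝ) (t : ℝ) : cr a (t • b) = t * cr a b := by
  simp [cr]; ring
lemma cr_smul_left (a b : ℝ × ℝ) (t : ℝ) : cr (t • a) b = t * cr a b := by
  simp [cr]; ring
lemma cr_neg_right (a b : ℝ × ℝ) : cr a (-b) = - cr a b := by
  simp [cr]; ring
lemma cr_neg_left (a b : ℝ × ℝ) : cr (-a) b = - cr a b := by
  simp [cr]; ring
lemma cr_self (a : ℝ × ℝ) : cr a a = 0 := by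
  simp [cr]; ring
lemma cr_zero_right (a : ℝ × ℝ) : cr a 0 = 0 := by simp [cr]
lemma cr_zero_left (a : ℝ × ℝ) : cr 0 a = 0 := by simp [cr]
lemma cr_comm (a b : ℝ × ℝ) : cr a b = - cr b a := by simp [cr]; ring
lemma cr_sum_right {α : Type*} (s : Finset α) (a : ℝ × ℝ) (f : α → ℝ × ℝ) :
    cr a (∑ i ∈ s, f i) = ∑ i ∈ s, cr a (f i) := by
  classical
  induction s using Finset.induction_on with
  | empty => simp [cr_zero_right]
  | insert i s hi ih => rw [Finset.sum_insert hi, Finset.sum_insert hi, cr_add_right, ih]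

lemma cr_cont {α : Type*} [TopologicalSpace α] {f g : α → ℝ × ℝ} (hf : Continuous f)
    (hg : Continuous g) : Continuous (fun y => cr (f y) (g y)) := by
  unfold cr; fun_prop

/-- expansion of a vector in a basis -/
lemma cr_expand {u v : ℝ × ℝ} (h : cr u v ≠ 0) (y : ℝ × ℝ) :
    y = (cr y v / cr u v) • u + (cr u y / cr u v) • v := by
  have h' : u.1 * v.2 - u.2 * v.1 ≠ 0 := h
  ext
  · simp only [cr, Prod.fst_add, Prod.smul_fst, smul_eq_mul]
    rw [div_mul_eq_mul_div, div_mul_eq_mul_div, ← add_div, eq_div_iff h']; ring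
  · simp only [cr, Prod.snd_add, Prod.smul_snd, smul_eq_mul]
    rw [div_mul_eq_mul_div, div_mul_eq_mul_div, ← add_div, eq_div_iff h']; ring

/-- a vector parallel to `r` -/
lemma cr_eq_zero {r y : ℝ × ℝ} (hr : r ≠ 0) (h : cr r y = 0) : ∃ t : ℝ, y = t • r := by
  have h' : r.1 * y.2 - r.2 * y.1 = 0 := h
  by_cases h1 : r.1 = 0
  · have h2 : r.2 ≠ 0 := fun h2 => hr (by ext <;> simp [h1, h2])
    refine ⟨y.2 / r.2, ?_⟩
    have : y.1 = 0 := by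
      rw [h1] at h'
      have : r.2 * y.1 = 0 := by linarith
      exact (mul_eq_zero.mp this).resolve_left h2
    ext
    · simp [h1, this]
    · simp; field_simp
  · refine ⟨y.1 / r.1, ?_⟩
    ext
    · simp; field_simp
    · simp; field_simp; linarith

lemma tri_int {D : Set (ℝ × ℝ)} (hc : Convex ℝ D) {a u v : ℝ × ℝ} (ha : a ∈ D)
    (hu : a + u ∈ D) (hv : a + v ∈ D) (huv : cr u v ≠ 0) {s t : ℝ} (hs : 0 < s) (ht : 0 < t)
    (hst : s + t < 1) : a + s • u + t • v ∈ interior D := by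
  rw [mem_interior]
  refine ⟨{y | 0 < cr (y - a) v / cr u v ∧ 0 < cr u (y - a) / cr u v ∧
    cr (y - a) v / cr u v + cr u (y - a) / cr u v < 1}, ?_, ?_, ?_⟩
  · rintro y ⟨h1, h2, h3⟩
    have := cr_expand huv (y - a)
    set p := cr (y - a) v / cr u v
    set q := cr u (y - a) / cr u v
    have hy : y = (1 - p - q) • a + p • (a + u) + q • (a + v) := by
      have : y = a + (p • u + q • v) := by rw [← this]; abel
      rw [this]
      ext <;> simp <;> ring
    rw [hy]
    have := hc.sum_mem (t := Finset.univ) (w := ![1 - p - q, p, q]) (z := ![a, a + u, a + v])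
      (by intro i _; fin_cases i <;> simp <;> linarith) (by simp [Fin.sum_univ_three]; ring)
      (by intro i _; fin_cases i <;> simp [ha, hu, hv])
    simpa [Fin.sum_univ_three] using this
  · have c1 : Continuous (fun y : ℝ × ℝ => cr (y - a) v / cr u v) :=
      (cr_cont (by fun_prop) (by fun_prop)).div_const _
    have c2 : Continuous (fun y : ℝ × ℝ => cr u (y - a) / cr u v) :=
      (cr_cont (by fun_prop) (by fun_prop)).div_const _
    exact (isOpen_lt continuous_const c1).inter
      ((isOpen_lt continuous_const c2).inter (isOpen_lt (c1.add c2) continuous_const))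
  · have e1 : cr (a + s • u + t • v - a) v / cr u v = s := by
      have : cr (a + s • u + t • v - a) v = s * cr u v := by
        simp [cr]; ring
      rw [this]; field_simp
    have e2 : cr u (a + s • u + t • v - a) / cr u v = t := by
      have : cr u (a + s • u + t • v - a) = t * cr u v := by
        simp [cr]; ring
      rw [this]; field_simp
    simp only [mem_ofPred_eq, e1, e2]
    exact ⟨hs, ht, hst⟩

lemma mid_int {D : Set (ℝ × ℝ)} (hc : Convex ℝ D) {p a b c : ℝ × ℝ} (hp : p ∈ D)
    (h1 : p + a + b ∈ D) (h2 : p + b + c ∈ D) (hab : 0 < cr a b) (hbc : 0 < cr b c)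
    (hac : 0 < cr a c) : p + b ∈ interior D := by
  have hD : 0 < cr (a + b) (b + c) := by
    rw [cr_add_left, cr_add_right, cr_add_right, cr_self]; linarith
  have key : p + b = p + (cr b c / cr (a + b) (b + c)) • (a + b)
      + (cr a b / cr (a + b) (b + c)) • (b + c) := by
    have := cr_expand hD.ne' b
    have e1 : cr b (b + c) = cr b c := by rw [cr_add_right, cr_self]; ring
    have e2 : cr (a + b) b = cr a b := by rw [cr_add_left, cr_self]; ring
    rw [e1, e2] at this
    rw [add_assoc, ← this]
  rw [key]
  refine tri_int hc hp (by rwa [← add_assoc]) (by rwa [← add_assoc]) hD.ne' (by positivity)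
    (by positivity) ?_
  rw [← add_div, div_lt_one hD, cr_add_left, cr_add_right, cr_add_right, cr_self]
  linarith

/-- the tiling hypotheses -/
structure Tl {ι : Type} (D : Set (ℝ × ℝ)) (x : ι → ℝ × ℝ) (k : ℕ) : Prop where
  cpt : IsCompact D
  conv : Convex ℝ D
  int : (interior D).Nonempty
  kpos : 0 < k
  tile : IsKFoldTranslativeTiling D x k

variable {ι : Type} {D : Set (ℝ × ℝ)} {x : ι → ℝ × ℝ} {k : ℕ}

lemma Tl.fin_bdd (T : Tl D x k) {B : Set (ℝ × ℝ)} (hB : IsBounded B) : {i | x i ∈ B}.Finite := by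
  obtain ⟨R, hR⟩ := hB.exists_norm_le
  exact (T.tile.1 R).subset fun i hi => hR _ hi

lemma Tl.fin_D (T : Tl D x k) (z : ℝ × ℝ) : {i | z - x i ∈ D}.Finite := by
  have hB : IsBounded ((fun y => z - y) '' D) :=
    (T.cpt.image (by fun_prop)).isBounded
  exact (T.fin_bdd hB).subset fun i hi => ⟨z - x i, hi, by simp⟩

/-- local upper semicontinuity of the covering indices -/
lemma Tl.near (T : Tl D x k) (z : ℝ × ℝ) :
    ∀ᶠ z' in 𝓝 z, ∀ i, z' - x i ∈ D → z - x i ∈ D := by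
  have hB : IsBounded ((fun q : (ℝ × ℝ) × (ℝ × ℝ) => q.1 - q.2) '' (Metric.closedBall z 1 ×ˢ D)) :=
    (((isCompact_closedBall z 1).prod T.cpt).image (by fun_prop)).isBounded
  have hf := T.fin_bdd hB
  have h1 : ∀ᶠ z' in 𝓝 z, ∀ i ∈ {i | x i ∈ ((fun q : (ℝ × ℝ) × (ℝ × ℝ) => q.1 - q.2) ''
      (Metric.closedBall z 1 ×ˢ D))}, z' - x i ∈ D → z - x i ∈ D := by
    rw [Filter.eventually_all_finite hf]
    intro i _
    by_cases h : z - x i ∈ D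
    · exact Eventually.of_forall fun _ _ => h
    · have : ∀ᶠ z' in 𝓝 z, z' - x i ∈ Dᶜ :=
        (show Continuous (fun z' : ℝ × ℝ => z' - x i) by fun_prop).continuousAt.eventually_mem
          (T.cpt.isClosed.isOpen_compl.mem_nhds h)
      filter_upwards [this] with z' hz' h2
      exact absurd h2 hz'
  filter_upwards [h1, Metric.closedBall_mem_nhds z one_pos] with z' h2 h3 i h4
  exact h2 i ⟨(z', z' - x i), ⟨h3, h4⟩, by simp⟩ h4

lemma Tl.exact (T : Tl D x k) {z : ℝ × ℝ} (h : ∀ i, z - x i ∈ D → z - x i ∈ interior D) :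
    {i | z - x i ∈ D}.ncard = k := by
  have hf := T.fin_D z
  apply le_antisymm
  · rw [ncard_eq_toFinset_card _ hf]
    exact T.tile.2.2 z _ fun i hi => h i (by simpa using hi)
  · obtain ⟨s, hs, hs2⟩ := T.tile.2.1 z
    refine hs.trans ?_
    rw [← ncard_coe_finset]
    exact ncard_le_ncard (fun i hi => hs2 i hi) hf

lemma Tl.ne (T : Tl D x k) : ∃ i : ι, True := by
  obtain ⟨s, hs, _⟩ := T.tile.2.1 0
  have : s.Nonempty := by
    rw [← Finset.card_pos]; exact lt_of_lt_of_le T.kpos hs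
  exact ⟨this.choose, trivial⟩

end KT


namespace KT
open Set Filter Topology Bornology
variable {ι : Type} {D : Set (ℝ × ℝ)} {x : ι → ℝ × ℝ} {k : ℕ}

/-- the face of `D` maximizing `cr r` is the segment from `A` to `A + τ r` -/
structure MaxFace (D : Set (ℝ × ℝ)) (r A : ℝ × ℝ) (τ : ℝ) : Prop where
  nn : 0 ≤ τ
  mem : ∀ s ∈ Icc 0 τ, A + s • r ∈ D
  le : ∀ y ∈ D, cr r y ≤ cr r A
  eq : ∀ y ∈ D, cr r y = cr r A → ∃ s ∈ Icc 0 τ, y = A + s • r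

lemma line_tendsto (y d : ℝ × ℝ) : Tendsto (fun δ : ℝ => y + δ • d) (𝓝[>] 0) (𝓝 y) := by
  have : Continuous (fun δ : ℝ => y + δ • d) := by fun_prop
  have h := this.tendsto 0
  simp only [zero_smul, add_zero] at h
  exact h.mono_left nhdsWithin_le_nhds

/-- rotated vector -/
def rot (r : ℝ × ℝ) : ℝ × ℝ := (-r.2, r.1)

lemma cr_rot {r : ℝ × ℝ} (hr : r ≠ 0) : 0 < cr r (rot r) := by
  simp only [cr, rot]
  by_contra h
  apply hr
  ext
  · simp; nlinarith [sq_nonneg r.1, sq_nonneg r.2]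
  · simp; nlinarith [sq_nonneg r.1, sq_nonneg r.2]

lemma int_lt {r y : ℝ × ℝ} {H : ℝ} (hr : r ≠ 0) (h : ∀ y ∈ D, cr r y ≤ H)
    (hy : y ∈ interior D) : cr r y < H := by
  have h1 : ∀ᶠ δ : ℝ in 𝓝[>] 0, y + δ • rot r ∈ interior D :=
    (line_tendsto y (rot r)).eventually_mem (isOpen_interior.mem_nhds hy)
  obtain ⟨δ, h2, h3⟩ := (h1.and self_mem_nhdsWithin).exists
  have := h _ (interior_subset h2)
  rw [cr_add_right, cr_smul_right] at this
  have := mul_pos (show (0:ℝ) < δ from h3) (cr_rot hr)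
  linarith

lemma combo_int (hc : Convex ℝ D) {o y : ℝ × ℝ} (ho : o ∈ interior D) (hy : y ∈ D) {t : ℝ}
    (ht : 0 < t) (ht1 : t ≤ 1) : y + t • (o - y) ∈ interior D := by
  have := hc.combo_interior_self_mem_interior ho hy ht (sub_nonneg.2 ht1) (by ring)
  convert this using 1
  ext <;> simp <;> ring

lemma mid_line_int (hc : Convex ℝ D) (hi : (interior D).Nonempty) {r y p q : ℝ × ℝ} (hr : r ≠ 0)
    {e0 e : ℝ} (hy : y ∈ D) (hy0 : y + e0 • r ∈ D) (he : 0 < e) (hee : e < e0)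
    (hp : p ∈ D) (hq : q ∈ D) (hpy : cr r y < cr r p) (hqy : cr r q < cr r y) :
    y + e • r ∈ interior D := by
  obtain ⟨o, ho⟩ := hi
  obtain ⟨o', ho', he'⟩ : ∃ o' ∈ interior D, cr r o' = cr r y := by
    rcases lt_trichotomy (cr r o) (cr r y) with h | h | h
    · refine ⟨p + ((cr r p - cr r y) / (cr r p - cr r o)) • (o - p), ?_, ?_⟩
      · apply combo_int hc ho hp
        · apply div_pos <;> linarith
        · rw [div_le_one] <;> linarith
      · rw [cr_add_right, cr_smul_right, cr_sub_right]
        have : cr r p - cr r o ≠ 0 := by linarith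
        field_simp; ring
    · exact ⟨o, ho, h⟩
    · refine ⟨q + ((cr r y - cr r q) / (cr r o - cr r q)) • (o - q), ?_, ?_⟩
      · apply combo_int hc ho hq
        · apply div_pos <;> linarith
        · rw [div_le_one] <;> linarith
      · rw [cr_add_right, cr_smul_right, cr_sub_right]
        have : cr r o - cr r q ≠ 0 := by linarith
        field_simp; ring
  obtain ⟨σ, hσ⟩ := cr_eq_zero (y := o' - y) hr (by rw [cr_sub_right]; linarith)
  have ho2 : o' = y + σ • r := by rw [← hσ]; abel
  rcases lt_trichotomy e σ with h | h | h
  · have := combo_int hc ho' hy (t := e / σ) (div_pos he (by linarith))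
      (by rw [div_le_one] <;> linarith)
    convert this using 2
    rw [hσ, smul_smul, div_mul_cancel₀ _ (by linarith)]
  · rw [h, ← ho2]; exact ho'
  · have := combo_int hc ho' hy0 (t := (e0 - e) / (e0 - σ)) (div_pos (by linarith) (by linarith))
      (by rw [div_le_one] <;> linarith)
    convert this using 1
    have h3 : o' - (y + e0 • r) = (-(e0 - σ)) • r := by
      rw [ho2]; ext <;> simp <;> ring
    rw [h3, smul_smul]
    have : (e0 - e) / (e0 - σ) * -(e0 - σ) = e - e0 := by
      have : e0 - σ ≠ 0 := by linarith
      field_simp; ring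
    rw [this]; ext <;> simp <;> ring

lemma face_push (hc : Convex ℝ D) (hi : (interior D).Nonempty) {r A : ℝ × ℝ} {τ : ℝ} (hr : r ≠ 0)
    (F : MaxFace D r A τ) {s : ℝ} (hs : s ∈ Ioo 0 τ) {d : ℝ × ℝ} (hd : cr r d < 0) :
    ∀ᶠ δ : ℝ in 𝓝[>] 0, A + s • r + δ • d ∈ interior D := by
  obtain ⟨o, ho⟩ := hi
  have hτ : 0 < τ := hs.1.trans hs.2
  have hA : A ∈ D := by simpa using F.mem 0 ⟨le_rfl, F.nn⟩
  have hlt : cr r o < cr r A := int_lt hr F.le ho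
  have hne : cr r (o - A) ≠ 0 := by rw [cr_sub_right]; linarith
  have hex := cr_expand hne d
  set α := cr d (o - A) / cr r (o - A)
  have hβ : 0 < cr r d / cr r (o - A) := by
    apply div_pos_of_neg_of_neg hd
    rw [cr_sub_right]; linarith
  set β := cr r d / cr r (o - A)
  have c1 : ∀ᶠ δ : ℝ in 𝓝[>] 0, 0 < (s + δ * α) / τ := by
    have : Continuous (fun δ : ℝ => (s + δ * α) / τ) := by fun_prop
    have h := (this.tendsto 0).mono_left (nhdsWithin_le_nhds (s := Ioi 0))
    exact h.eventually (lt_mem_nhds (by simp; exact div_pos hs.1 hτ))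
  have c2 : ∀ᶠ δ : ℝ in 𝓝[>] 0, (s + δ * α) / τ + δ * β < 1 := by
    have : Continuous (fun δ : ℝ => (s + δ * α) / τ + δ * β) := by fun_prop
    have h := (this.tendsto 0).mono_left (nhdsWithin_le_nhds (s := Ioi 0))
    exact h.eventually (gt_mem_nhds (by simp; rw [div_lt_one hτ]; exact hs.2))
  filter_upwards [c1, c2, self_mem_nhdsWithin] with δ h1 h2 h3
  have := tri_int hc hA (u := τ • r) (v := o - A) (F.mem τ ⟨F.nn, le_rfl⟩)
    (by simpa using interior_subset ho) (by rw [cr_smul_left]; exact mul_ne_zero hτ.ne' hne)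
    h1 (mul_pos h3 hβ) h2
  convert this using 1
  rw [hex, smul_smul, div_mul_cancel₀ _ hτ.ne', smul_add, smul_smul, smul_smul, add_smul]
  abel

lemma face_out {r A : ℝ × ℝ} {τ : ℝ} (F : MaxFace D r A τ) {s : ℝ} {d : ℝ × ℝ}
    (hd : 0 < cr r d) {δ : ℝ} (hδ : 0 < δ) : A + s • r + δ • d ∉ D := by
  intro h
  have := F.le _ h
  rw [cr_add_right, cr_add_right, cr_smul_right, cr_smul_right, cr_self] at this
  have := mul_pos hδ hd
  linarith

/-- counting near a point on open edges -/
lemma Tl.half (T : Tl D x k) {r A B : ℝ × ℝ} {τ τ' : ℝ} (hr : r ≠ 0)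
    (F : MaxFace D r A τ) (G : MaxFace D (-r) B τ') {z : ℝ × ℝ}
    (h : ∀ i, z - x i ∈ D → z - x i ∈ interior D ∨ (∃ s ∈ Ioo 0 τ, z - x i = A + s • r) ∨
      (∃ s ∈ Ioo 0 τ', z - x i = B + s • (-r))) :
    {i | z - x i ∈ interior D}.ncard + {i | ∃ s ∈ Ioo 0 τ, z - x i = A + s • r}.ncard = k := by
  have hf := T.fin_D z
  have hd1 : cr r (- rot r) < 0 := by rw [cr_neg_right]; linarith [cr_rot hr]
  have hd2 : 0 < cr (-r) (- rot r) := by rw [cr_neg_right, cr_neg_left]; linarith [cr_rot hr]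
  have e1 : ∀ᶠ δ : ℝ in 𝓝[>] 0, ∀ i ∈ {i | z - x i ∈ D},
      (z + δ • (- rot r) - x i ∈ interior D ∧ ((z - x i ∈ interior D) ∨
        (∃ s ∈ Ioo 0 τ, z - x i = A + s • r))) ∨
      (z + δ • (- rot r) - x i ∉ D ∧ ¬ ((z - x i ∈ interior D) ∨
        (∃ s ∈ Ioo 0 τ, z - x i = A + s • r))) := by
    rw [Filter.eventually_all_finite hf]
    intro i hi
    have hre : ∀ δ : ℝ, z + δ • (- rot r) - x i = z - x i + δ • (- rot r) := fun δ => by abel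
    simp only [hre]
    rcases h i hi with h1 | ⟨s, hs, h1⟩ | ⟨s, hs, h1⟩
    · filter_upwards [(line_tendsto (z - x i) (- rot r)).eventually_mem
        (isOpen_interior.mem_nhds h1)] with δ h2
      exact Or.inl ⟨h2, Or.inl h1⟩
    · filter_upwards [face_push T.conv T.int hr F hs hd1] with δ h2
      rw [h1]
      exact Or.inl ⟨h2, Or.inr ⟨s, hs, rfl⟩⟩
    · filter_upwards [self_mem_nhdsWithin] with δ h2
      right
      rw [h1]
      refine ⟨face_out G hd2 h2, ?_⟩
      have hz : cr (-r) (B + s • -r) = cr (-r) B := by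
        rw [cr_add_right, cr_smul_right, cr_self]; ring
      rintro (h3 | ⟨s', hs', h3⟩)
      · have := int_lt (neg_ne_zero.2 hr) G.le h3
        linarith
      · obtain ⟨o, ho⟩ := T.int
        have a1 := int_lt (neg_ne_zero.2 hr) G.le ho
        have a2 := int_lt hr F.le ho
        rw [h3] at hz
        rw [cr_add_right, cr_smul_right] at hz
        simp only [cr_neg_left, cr_self] at hz a1
        linarith
  have e2 := (line_tendsto z (- rot r)).eventually (T.near z)
  obtain ⟨δ, h1, h2⟩ := (e1.and e2).exists
  have key : {i | z + δ • (- rot r) - x i ∈ D} =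
      {i | z - x i ∈ interior D} ∪ {i | ∃ s ∈ Ioo 0 τ, z - x i = A + s • r} := by
    ext i
    simp only [mem_ofPred_eq, mem_union]
    constructor
    · intro h3
      rcases h1 i (h2 i h3) with h4 | h4
      · exact h4.2
      · exact absurd h3 h4.1
    · intro h3
      have : z - x i ∈ D := by
        rcases h3 with h3 | ⟨s, hs, h3⟩
        · exact interior_subset h3
        · rw [h3]; exact F.mem s ⟨hs.1.le, hs.2.le⟩
      rcases h1 i this with h4 | h4
      · exact interior_subset h4.1
      · exact absurd h3 h4.2
  have hk := T.exact (z := z + δ • (- rot r)) (by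
    intro i h3
    rcases h1 i (h2 i h3) with h4 | h4
    · exact h4.1
    · exact absurd h3 h4.1)
  have f1 : {i | z - x i ∈ interior D}.Finite :=
    hf.subset fun i hi => interior_subset (s := D) hi
  have f2 : {i | ∃ s ∈ Ioo 0 τ, z - x i = A + s • r}.Finite := by
    refine hf.subset ?_
    rintro i ⟨s, hs, h3⟩
    show z - x i ∈ D
    rw [h3]; exact F.mem s ⟨hs.1.le, hs.2.le⟩
  have dj : Disjoint {i | z - x i ∈ interior D} {i | ∃ s ∈ Ioo 0 τ, z - x i = A + s • r} := by
    rw [Set.disjoint_left]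
    rintro i h3 ⟨s, hs, h4⟩
    have : z - x i ∈ interior D := h3
    have := int_lt hr F.le this
    rw [h4, cr_add_right, cr_smul_right, cr_self] at this
    linarith
  rw [key, ncard_union_eq dj f1 f2] at hk
  exact hk

lemma Tl.edge (T : Tl D x k) {r A B : ℝ × ℝ} {τ τ' : ℝ} (hr : r ≠ 0)
    (F : MaxFace D r A τ) (G : MaxFace D (-r) B τ') (z : ℝ × ℝ) :
    {i | ∃ s ∈ Ico 0 τ, z - x i = A + s • r}.ncard =
    {i | ∃ s ∈ Ioc 0 τ', z - x i = B + s • (-r)}.ncard := by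
  have hf := T.fin_D z
  have hA : A ∈ D := by simpa using F.mem 0 ⟨le_rfl, F.nn⟩
  have hB : B ∈ D := by simpa using G.mem 0 ⟨le_rfl, G.nn⟩
  obtain ⟨o, ho⟩ := T.int
  have a1 := int_lt (neg_ne_zero.2 hr) G.le ho
  have a2 := int_lt hr F.le ho
  simp only [cr_neg_left] at a1
  have e1 : ∀ᶠ δ : ℝ in 𝓝[>] 0, ∀ i ∈ {i | z - x i ∈ D},
      (z + δ • r - x i ∈ D → z + δ • r - x i ∈ interior D ∨
        (∃ s ∈ Ioo 0 τ, z + δ • r - x i = A + s • r) ∨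
        (∃ s ∈ Ioo 0 τ', z + δ • r - x i = B + s • (-r))) ∧
      ((∃ s ∈ Ico 0 τ, z - x i = A + s • r) ↔ (∃ s ∈ Ioo 0 τ, z + δ • r - x i = A + s • r)) ∧
      ((∃ s ∈ Ioc 0 τ', z - x i = B + s • (-r)) ↔
        (∃ s ∈ Ioo 0 τ', z + δ • r - x i = B + s • (-r))) := by
    rw [Filter.eventually_all_finite hf]
    intro i hi
    have hre : ∀ δ : ℝ, z + δ • r - x i = z - x i + δ • r := fun δ => by abel
    simp only [hre]
    have hyD : z - x i ∈ D := hi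
    generalize z - x i = y at hyD
    have p1 : ∀ δ s : ℝ, y + δ • r = A + s • r → cr r y = cr r A := by
      intro δ s h
      have := congrArg (cr r) h
      simp only [cr_add_right, cr_smul_right, cr_self] at this
      linarith
    have p2 : ∀ δ s : ℝ, y + δ • r = B + s • (-r) → cr r y = cr r B := by
      intro δ s h
      have := congrArg (cr r) h
      simp only [cr_add_right, cr_smul_right, cr_self, cr_neg_right] at this
      linarith
    have p1' : ∀ s : ℝ, y = A + s • r → cr r y = cr r A := by
      intro s h
      exact p1 0 s (by simpa using h)
    have p2' : ∀ s : ℝ, y = B + s • (-r) → cr r y = cr r B := by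
      intro s h
      exact p2 0 s (by simpa using h)
    have sinj : ∀ s t : ℝ, s • r = t • r → s = t := fun s t h => smul_left_injective ℝ hr h
    by_cases hmax : cr r y = cr r A
    · obtain ⟨s, hs, hy⟩ := F.eq y hyD hmax
      have hnB : cr r y ≠ cr r B := by linarith
      have tow : ∀ δ t : ℝ, y + δ • r = A + t • r ↔ t = s + δ := by
        intro δ t
        rw [hy]
        constructor
        · intro h
          refine (sinj _ _ ?_).symm
          rw [add_smul]
          rw [add_assoc] at h
          exact add_left_cancel h
        · rintro rfl; rw [add_smul, add_assoc]
      have tow0 : ∀ t : ℝ, y = A + t • r ↔ t = s := by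
        intro t
        have := tow 0 t
        simpa using this
      have hsm : ∀ᶠ δ : ℝ in 𝓝[>] 0, s < τ → s + δ < τ := by
        by_cases h : s < τ
        · have : ∀ᶠ δ : ℝ in 𝓝[>] 0, δ < τ - s :=
            nhdsWithin_le_nhds (gt_mem_nhds (by linarith))
          filter_upwards [this] with δ h2 _
          linarith
        · exact Eventually.of_forall fun _ h2 => absurd h2 h
      filter_upwards [hsm, self_mem_nhdsWithin] with δ h1 h2
      have h2 : 0 < δ := h2
      refine ⟨?_, ?_, ?_⟩
      · intro h3
        right; left
        obtain ⟨t, ht, h4⟩ := F.eq _ h3 (by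
          rw [cr_add_right, cr_smul_right, cr_self]; linarith)
        have h5 := (tow δ t).1 h4
        have : s < τ := by linarith [ht.2]
        exact ⟨t, ⟨by linarith [hs.1], by linarith [h1 this]⟩, h4⟩
      · simp only [tow, tow0, exists_eq_right]
        constructor
        · intro h; exact ⟨by linarith [h.1], h1 h.2⟩
        · intro h; exact ⟨hs.1, by linarith [h.2]⟩
      · constructor
        · rintro ⟨s, _, h⟩; exact absurd (p2' s h) hnB
        · rintro ⟨s, _, h⟩; exact absurd (p2 _ s h) hnB
    by_cases hmin : cr r y = cr r B
    · obtain ⟨s, hs, hy⟩ := G.eq y hyD (by rw [cr_neg_left, cr_neg_left, hmin])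
      have tow : ∀ δ t : ℝ, y + δ • r = B + t • (-r) ↔ t = s - δ := by
        intro δ t
        rw [hy]
        constructor
        · intro h
          refine (sinj _ _ ?_)
          rw [sub_smul]
          rw [add_assoc, smul_neg, smul_neg] at h
          have := add_left_cancel h
          rw [← neg_inj, ← this]; abel
        · rintro rfl; rw [sub_smul, smul_neg, smul_neg, sub_neg_eq_add, add_assoc]
      have tow0 : ∀ t : ℝ, y = B + t • (-r) ↔ t = s := by
        intro t
        have := tow 0 t
        simpa using this
      have hsm : ∀ᶠ δ : ℝ in 𝓝[>] 0, 0 < s → 0 < s - δ := by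
        by_cases h : 0 < s
        · have : ∀ᶠ δ : ℝ in 𝓝[>] 0, δ < s :=
            nhdsWithin_le_nhds (gt_mem_nhds (by linarith))
          filter_upwards [this] with δ h2 _
          linarith
        · exact Eventually.of_forall fun _ h2 => absurd h2 h
      filter_upwards [hsm, self_mem_nhdsWithin] with δ h1 h2
      have h2 : 0 < δ := h2
      refine ⟨?_, ?_, ?_⟩
      · intro h3
        right; right
        obtain ⟨t, ht, h4⟩ := G.eq _ h3 (by
          simp only [cr_add_right, cr_smul_right, cr_self, cr_neg_left]; linarith)
        have h5 := (tow δ t).1 h4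
        have : 0 < s := by linarith [ht.1]
        exact ⟨t, ⟨by linarith [h1 this], by linarith [hs.2]⟩, h4⟩
      · constructor
        · rintro ⟨s, _, h⟩; exact absurd (p1' s h) hmax
        · rintro ⟨s, _, h⟩; exact absurd (p1 _ s h) hmax
      · simp only [tow, tow0, exists_eq_right]
        constructor
        · intro h; exact ⟨h1 h.1, by linarith [h.2]⟩
        · intro h; exact ⟨by linarith [h.1], hs.2⟩
    have hlt : cr r y < cr r A := lt_of_le_of_ne (F.le y hyD) hmax
    have hgt : cr r B < cr r y := by
      have := G.le y hyD
      rw [cr_neg_left, cr_neg_left] at this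
      exact lt_of_le_of_ne (by linarith) (Ne.symm hmin)
    have hmain : ∀ᶠ δ : ℝ in 𝓝[>] 0, y + δ • r ∈ D → y + δ • r ∈ interior D := by
      by_cases h : ∃ e0 : ℝ, 0 < e0 ∧ y + e0 • r ∈ D
      · obtain ⟨e0, he0, h⟩ := h
        have : ∀ᶠ δ : ℝ in 𝓝[>] 0, δ < e0 := nhdsWithin_le_nhds (gt_mem_nhds he0)
        filter_upwards [this, self_mem_nhdsWithin] with δ h2 h3 _
        exact mid_line_int T.conv T.int hr hyD h h3 h2 hA hB hlt hgt
      · filter_upwards [self_mem_nhdsWithin] with δ h3 h4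
        exact absurd ⟨δ, h3, h4⟩ h
    filter_upwards [hmain] with δ h1
    refine ⟨fun h => Or.inl (h1 h), ?_, ?_⟩
    · constructor
      · rintro ⟨s, _, h⟩; exact absurd (p1' s h) hmax
      · rintro ⟨s, _, h⟩; exact absurd (p1 _ s h) hmax
    · constructor
      · rintro ⟨s, _, h⟩; exact absurd (p2' s h) hmin
      · rintro ⟨s, _, h⟩; exact absurd (p2 _ s h) hmin
  have e2 := (line_tendsto z r).eventually (T.near z)
  obtain ⟨δ, h1, h2⟩ := (e1.and e2).exists
  have k1 : {i | ∃ s ∈ Ico 0 τ, z - x i = A + s • r} =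
      {i | ∃ s ∈ Ioo 0 τ, z + δ • r - x i = A + s • r} := by
    ext i
    constructor
    · rintro ⟨s, hs, h⟩
      exact (h1 i (by show _ ∈ D; rw [h]; exact F.mem s ⟨hs.1, hs.2.le⟩)).2.1.1 ⟨s, hs, h⟩
    · rintro ⟨s, hs, h⟩
      exact (h1 i (h2 i (by rw [h]; exact F.mem s ⟨hs.1.le, hs.2.le⟩))).2.1.2 ⟨s, hs, h⟩
  have k2 : {i | ∃ s ∈ Ioc 0 τ', z - x i = B + s • (-r)} =
      {i | ∃ s ∈ Ioo 0 τ', z + δ • r - x i = B + s • (-r)} := by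
    ext i
    constructor
    · rintro ⟨s, hs, h⟩
      exact (h1 i (by show _ ∈ D; rw [h]; exact G.mem s ⟨hs.1.le, hs.2⟩)).2.2.1 ⟨s, hs, h⟩
    · rintro ⟨s, hs, h⟩
      exact (h1 i (h2 i (by rw [h]; exact G.mem s ⟨hs.1.le, hs.2.le⟩))).2.2.2 ⟨s, hs, h⟩
  rw [k1, k2]
  have m1 := T.half hr F G (z := z + δ • r) fun i hi => (h1 i (h2 i hi)).1 hi
  have m2 := T.half (neg_ne_zero.2 hr) G (by rw [neg_neg]; exact F) (z := z + δ • r) fun i hi => by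
    rw [neg_neg]
    rcases (h1 i (h2 i hi)).1 hi with h | h | h
    · exact Or.inl h
    · exact Or.inr (Or.inr h)
    · exact Or.inr (Or.inl h)
  omega

end KT


namespace KT
open Set Filter Topology Bornology
variable {ι : Type} {D : Set (ℝ × ℝ)} {x : ι → ℝ × ℝ} {k : ℕ}

/-- abstract growth lemma -/
lemma growth (u : ℕ → ℤ → ℕ) (k M : ℕ) (hb : ∀ n j, u n j ≤ k)
    (h : ∀ n j, ∑ l ∈ Finset.range (M + 1), u n (j + l) ≤ ∑ l ∈ Finset.range M, u (n + 1) (j + l)) :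
    u 0 0 = 0 := by
  by_contra h0
  set S : ℕ → ℕ → ℕ := fun n R => ∑ j ∈ Finset.Ico (-(R:ℤ)) R, u n j with hS
  have sh : ∀ n (a b : ℤ) (l : ℕ), ∑ j ∈ Finset.Ico a b, u n (j + l) =
      ∑ j ∈ Finset.Ico (a + l) (b + l), u n j := by
    intro n a b l
    rw [← Finset.map_add_right_Ico, Finset.sum_map]; rfl
  have step : ∀ n R, (M + 1) * S n R ≤ M * S (n + 1) (R + (M + 1)) := by
    intro n R
    have h1 := Finset.sum_le_sum fun j (_ : j ∈ Finset.Ico (-(R:ℤ) - (M + 1)) (R:ℤ)) => h n j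
    rw [Finset.sum_comm, Finset.sum_comm (t := Finset.range M)] at h1
    calc (M + 1) * S n R = ∑ l ∈ Finset.range (M + 1), S n R := by simp
      _ ≤ _ := by
        refine Finset.sum_le_sum fun l hl => ?_
        rw [sh]
        refine Finset.sum_le_sum_of_subset fun j hj => ?_
        simp only [Finset.mem_range, Finset.mem_Ico] at *
        omega
      _ ≤ _ := h1
      _ ≤ ∑ l ∈ Finset.range M, S (n + 1) (R + (M + 1)) := by
        refine Finset.sum_le_sum fun l hl => ?_
        rw [sh]
        refine Finset.sum_le_sum_of_subset fun j hj => ?_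
        simp only [Finset.mem_range, Finset.mem_Ico] at *
        push_cast
        omega
      _ = _ := by simp
  have it : ∀ n, (M + 1) ^ n ≤ M ^ n * S n (1 + n * (M + 1)) := by
    intro n
    induction n with
    | zero =>
      simp only [pow_zero, zero_mul, one_mul, add_zero]
      have : u 0 0 ≤ S 0 1 := Finset.single_le_sum (f := u 0) (fun _ _ => Nat.zero_le _) (by simp)
      omega
    | succ n ih =>
      calc (M + 1) ^ (n + 1) = (M + 1) ^ n * (M + 1) := pow_succ _ _
        _ ≤ (M ^ n * S n (1 + n * (M + 1))) * (M + 1) := Nat.mul_le_mul_right _ ih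
        _ = M ^ n * ((M + 1) * S n (1 + n * (M + 1))) := by ring
        _ ≤ M ^ n * (M * S (n + 1) (1 + n * (M + 1) + (M + 1))) :=
          Nat.mul_le_mul_left _ (step _ _)
        _ = _ := by rw [pow_succ]; ring_nf
  have bd : ∀ n R, S n R ≤ 2 * R * k := by
    intro n R
    calc S n R ≤ ∑ j ∈ Finset.Ico (-(R:ℤ)) R, k := Finset.sum_le_sum fun j _ => hb n j
      _ = 2 * R * k := by simp; left; omega
  have fin : ∀ n : ℕ, (1:ℝ) ≤ ((M:ℝ) / (M + 1)) ^ n * 2 * k +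
      (n * ((M:ℝ) / (M + 1)) ^ n) * (2 * (M + 1) * k) := by
    intro n
    have h1 := (it n).trans (Nat.mul_le_mul_left _ (bd n _))
    have h2 : ((M:ℝ) + 1) ^ n ≤ (M:ℝ) ^ n * (2 * (1 + n * (M + 1)) * k) := by exact_mod_cast h1
    have hp : (0:ℝ) < ((M:ℝ) + 1) ^ n := by positivity
    rw [div_pow]
    calc (1:ℝ) = ((M:ℝ) + 1) ^ n / ((M:ℝ) + 1) ^ n := by field_simp
      _ ≤ ((M:ℝ) ^ n * (2 * (1 + n * (M + 1)) * k)) / ((M:ℝ) + 1) ^ n := by gcongr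
      _ = _ := by field_simp
  have r0 : (0:ℝ) ≤ (M:ℝ) / (M + 1) := by positivity
  have r1 : (M:ℝ) / (M + 1) < 1 := by rw [div_lt_one (by positivity)]; linarith
  have t1 := (((tendsto_pow_atTop_nhds_zero_of_lt_one r0 r1).mul_const 2).mul_const (k:ℝ)).add
    ((tendsto_self_mul_const_pow_of_lt_one r0 r1).mul_const (2 * ((M:ℝ) + 1) * k))
  have := ge_of_tendsto' t1 fin
  norm_num at this

/-- number of translation vectors on a half-open segment -/
noncomputable def nseg (x : ι → ℝ × ℝ) (r p : ℝ × ℝ) (t : ℝ) : ℕ :=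
  {i | ∃ s ∈ Ico 0 t, p - x i = s • r}.ncard

lemma Tl.nseg_fin (T : Tl D x k) (r p : ℝ × ℝ) (t : ℝ) :
    {i | ∃ s ∈ Ico 0 t, p - x i = s • r}.Finite := by
  have hB : IsBounded ((fun s : ℝ => p - s • r) '' (Icc 0 t)) :=
    (isCompact_Icc.image (by fun_prop)).isBounded
  refine (T.fin_bdd hB).subset ?_
  rintro i ⟨s, hs, h⟩
  exact ⟨s, ⟨hs.1, hs.2.le⟩, by simp only; rw [← h]; abel⟩

lemma Tl.nseg_add (T : Tl D x k) {r : ℝ × ℝ} (hr : r ≠ 0) (p : ℝ × ℝ) {a b : ℝ} (ha : 0 ≤ a)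
    (hb : 0 ≤ b) : nseg x r p (a + b) = nseg x r p a + nseg x r (p - a • r) b := by
  unfold nseg
  rw [← ncard_union_eq _ (T.nseg_fin _ _ _) (T.nseg_fin _ _ _)]
  · congr 1
    ext i
    constructor
    · rintro ⟨s, hs, h⟩
      by_cases hsa : s < a
      · exact Or.inl ⟨s, ⟨hs.1, hsa⟩, h⟩
      · refine Or.inr ⟨s - a, ⟨by linarith, by linarith [hs.2]⟩, ?_⟩
        rw [sub_smul, ← h]; abel
    · rintro (⟨s, hs, h⟩ | ⟨s, hs, h⟩)
      · exact ⟨s, ⟨hs.1, by linarith [hs.2]⟩, h⟩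
      · refine ⟨s + a, ⟨by linarith [hs.1], by linarith [hs.2]⟩, ?_⟩
        rw [add_smul, ← h]; abel
  · rw [Set.disjoint_left]
    rintro i ⟨s, hs, h⟩ ⟨s', hs', h'⟩
    have : s • r = (s' + a) • r := by
      rw [add_smul, ← h, ← h']; abel
    have : s = s' + a := smul_left_injective ℝ hr this
    linarith [hs.2, hs'.1]

lemma Tl.nseg_mul (T : Tl D x k) {r : ℝ × ℝ} (hr : r ≠ 0) (p : ℝ × ℝ) {δ : ℝ} (hδ : 0 ≤ δ)
    (a : ℕ) : nseg x r p (a * δ) = ∑ l ∈ Finset.range a, nseg x r (p - (l * δ) • r) δ := by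
  induction a with
  | zero => simp [nseg]
  | succ a ih =>
    rw [Finset.sum_range_succ, ← ih, ← T.nseg_add hr p (by positivity) hδ]
    congr 1; push_cast; ring

lemma Tl.nseg_mono (T : Tl D x k) (r p : ℝ × ℝ) {a b : ℝ} (h : a ≤ b) :
    nseg x r p a ≤ nseg x r p b := by
  refine ncard_le_ncard ?_ (T.nseg_fin _ _ _)
  rintro i ⟨s, hs, h'⟩
  exact ⟨s, ⟨hs.1, hs.2.trans_le h⟩, h'⟩

lemma Tl.nseg_small (T : Tl D x k) (r : ℝ × ℝ) : ∃ δ : ℝ, 0 < δ ∧ ∀ p, nseg x r p δ ≤ k := by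
  obtain ⟨o, ho⟩ := T.int
  have h1 : ∀ᶠ δ : ℝ in 𝓝 0, o + δ • r ∈ interior D := by
    have : Continuous (fun δ : ℝ => o + δ • r) := by fun_prop
    exact this.continuousAt.eventually_mem (isOpen_interior.mem_nhds (by simpa using ho))
  rw [Metric.eventually_nhds_iff] at h1
  obtain ⟨δ, hδ, h⟩ := h1
  refine ⟨δ, hδ, fun p => ?_⟩
  unfold nseg
  rw [ncard_eq_toFinset_card _ (T.nseg_fin _ _ _)]
  refine T.tile.2.2 (p + o) _ ?_
  intro i hi
  rw [Finite.mem_toFinset] at hi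
  obtain ⟨s, hs, h'⟩ := hi
  have : p + o - x i = o + s • r := by rw [← h']; abel
  rw [this]
  apply h
  rw [Real.dist_eq, sub_zero, abs_of_nonneg hs.1]
  exact hs.2

lemma Tl.len_aux (T : Tl D x k) {r w : ℝ × ℝ} {τ τ' : ℝ} (hr : r ≠ 0) (h0 : 0 ≤ τ')
    (h : ∀ p, nseg x r p τ = nseg x r (p + w) τ') : τ ≤ τ' := by
  by_contra hlt
  push Not at hlt
  obtain ⟨δ0, hδ0, hs⟩ := T.nseg_small r
  have hτ : 0 < τ := h0.trans_lt hlt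
  obtain ⟨M1, hM1⟩ := exists_nat_gt (τ / δ0)
  obtain ⟨M2, hM2⟩ := exists_nat_gt (τ / (τ - τ'))
  set M := max M1 M2
  have hMa : τ / δ0 < M := hM1.trans_le (by exact_mod_cast le_max_left _ _)
  have hMb : τ / (τ - τ') < M := hM2.trans_le (by exact_mod_cast le_max_right _ _)
  rw [div_lt_iff₀ hδ0] at hMa
  rw [div_lt_iff₀ (by linarith)] at hMb
  set δ := τ / (M + 1) with hδ
  have hδp : 0 < δ := by positivity
  have hMδ : ((M + 1 : ℕ) : ℝ) * δ = τ := by rw [hδ]; push_cast; field_simp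
  have hδ1 : δ ≤ δ0 := by
    rw [hδ, div_le_iff₀ (by positivity)]; nlinarith
  have hδ2 : τ' ≤ M * δ := by
    have : M * δ = τ - δ := by rw [← hMδ]; push_cast; ring
    rw [this]
    have : δ ≤ τ - τ' := by rw [hδ, div_le_iff₀ (by positivity)]; nlinarith
    linarith
  obtain ⟨i0, _⟩ := T.ne
  have := growth (fun n j => nseg x r (x i0 + n • w - (j * δ) • r) δ) k M
    (fun n j => (T.nseg_mono r _ hδ1).trans (hs _)) (by
      intro n j
      have e1 := T.nseg_mul hr (x i0 + n • w - (j * δ) • r) hδp.le (M + 1)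
      have e2 := T.nseg_mul hr (x i0 + (n + 1) • w - (j * δ) • r) hδp.le M
      have e3 := h (x i0 + n • w - (j * δ) • r)
      rw [hMδ] at e1
      have e4 : x i0 + n • w - (j * δ) • r + w = x i0 + (n + 1) • w - (j * δ) • r := by
        rw [add_smul, one_smul]; abel
      rw [e4] at e3
      have e5 := T.nseg_mono r (x i0 + (n + 1) • w - (j * δ) • r) hδ2
      have e6 : ∀ q : ℝ × ℝ, ∀ l : ℕ, q - ((j:ℝ) * δ) • r - ((l:ℝ) * δ) • r =
          q - (((j + l : ℤ) : ℝ) * δ) • r := by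
        intro q l
        push_cast
        rw [add_mul, add_smul]; abel
      simp only [e6] at e1 e2
      rw [← e1, ← e2, e3]
      exact e5)
  simp only [Nat.cast_zero, zero_smul, add_zero, Int.cast_zero, zero_mul, sub_zero] at this
  unfold nseg at this
  rw [ncard_eq_zero (T.nseg_fin _ _ _)] at this
  have : i0 ∈ (∅ : Set ι) := by
    rw [← this]
    exact ⟨0, ⟨le_rfl, hδp⟩, by simp⟩
  exact this

lemma Tl.edge' (T : Tl D x k) {r A B : ℝ × ℝ} {τ τ' : ℝ} (hr : r ≠ 0)
    (F : MaxFace D r A τ) (G : MaxFace D (-r) B τ') (p : ℝ × ℝ) :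
    nseg x r p τ = nseg x r (p + (A - B + τ' • r)) τ' := by
  have := T.edge hr F G (p + A)
  unfold nseg
  convert this using 2
  · ext i
    have : ∀ s : ℝ, p - x i = s • r ↔ p + A - x i = A + s • r := by
      intro s
      rw [← add_right_inj A]
      congr! 1; abel
    simp only [mem_ofPred_eq, this]
  · ext i
    constructor
    · rintro ⟨s, hs, h⟩
      refine ⟨τ' - s, ⟨by linarith [hs.2], by linarith [hs.1]⟩, ?_⟩
      rw [smul_neg, sub_smul, ← h]; abel
    · rintro ⟨s, hs, h⟩
      refine ⟨τ' - s, ⟨by linarith [hs.2], by linarith [hs.1]⟩, ?_⟩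
      have h2 : p - x i = B + s • -r - A := by rw [← h]; abel
      have h3 : p + (A - B + τ' • r) - x i = (p - x i) + (A - B + τ' • r) := by abel
      rw [h3, h2, sub_smul, smul_neg]; abel

lemma Tl.len_eq (T : Tl D x k) {r A B : ℝ × ℝ} {τ τ' : ℝ} (hr : r ≠ 0)
    (F : MaxFace D r A τ) (G : MaxFace D (-r) B τ') : τ = τ' := by
  refine le_antisymm (T.len_aux hr G.nn (T.edge' hr F G)) ?_
  exact T.len_aux (neg_ne_zero.2 hr) F.nn (T.edge' (neg_ne_zero.2 hr) G (by rw [neg_neg]; exact F))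

end KT


namespace KT
open Set Filter Topology Bornology
variable {ι : Type} {D : Set (ℝ × ℝ)} {x : ι → ℝ × ℝ} {k : ℕ}

/-- pushing a point of the open edge of a triangle towards the third vertex -/
lemma tri_push (hc : Convex ℝ D) {a u w d : ℝ × ℝ} (ha : a ∈ D) (hu : a + u ∈ D) (hw : a + w ∈ D)
    {s : ℝ} (hs0 : 0 < s) (hs1 : s < 1) (hd : 0 < cr u w * cr u d) :
    ∀ᶠ δ : ℝ in 𝓝[>] 0, a + s • u + δ • d ∈ interior D := by
  have hne : cr u w ≠ 0 := fun h => by rw [h] at hd; simp at hd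
  have hex := cr_expand hne d
  set α := cr d w / cr u w
  have hβ : 0 < cr u d / cr u w := by
    have : cr u d / cr u w = cr u w * cr u d / (cr u w ^ 2) := by field_simp
    rw [this]; positivity
  set β := cr u d / cr u w
  have c1 : ∀ᶠ δ : ℝ in 𝓝[>] 0, 0 < s + δ * α := by
    have : Continuous (fun δ : ℝ => s + δ * α) := by fun_prop
    have h := (this.tendsto 0).mono_left (nhdsWithin_le_nhds (s := Ioi 0))
    exact h.eventually (lt_mem_nhds (by simpa using hs0))
  have c2 : ∀ᶠ δ : ℝ in 𝓝[>] 0, s + δ * α + δ * β < 1 := by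
    have : Continuous (fun δ : ℝ => s + δ * α + δ * β) := by fun_prop
    have h := (this.tendsto 0).mono_left (nhdsWithin_le_nhds (s := Ioi 0))
    exact h.eventually (gt_mem_nhds (by simpa using hs1))
  filter_upwards [c1, c2, self_mem_nhdsWithin] with δ h1 h2 h3
  have := tri_int hc ha hu hw hne h1 (mul_pos h3 hβ) h2
  convert this using 1
  rw [hex, smul_add, smul_smul, smul_smul, add_smul]
  abel

lemma MaxFace.memA {r A : ℝ × ℝ} {τ : ℝ} (F : MaxFace D r A τ) : A ∈ D := by
  simpa using F.mem 0 ⟨le_rfl, F.nn⟩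

lemma MaxFace.memB {r A : ℝ × ℝ} {τ : ℝ} (F : MaxFace D r A τ) : A + τ • r ∈ D :=
  F.mem τ ⟨F.nn, le_rfl⟩

lemma exists_maxFace (hD : IsCompact D) (hc : Convex ℝ D) (hne : D.Nonempty) {r : ℝ × ℝ}
    (hr : r ≠ 0) : ∃ A τ, MaxFace D r A τ := by
  have cc : Continuous (fun y => cr r y) := cr_cont continuous_const continuous_id
  obtain ⟨q, hq, hmax⟩ := hD.exists_isMaxOn hne cc.continuousOn
  have hFc : IsCompact (D ∩ {y | cr r y = cr r q}) :=
    hD.inter_right (isClosed_eq cc continuous_const)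
  have hFn : (D ∩ {y | cr r y = cr r q}).Nonempty := ⟨q, hq, rfl⟩
  have gc : Continuous (fun y : ℝ × ℝ => r.1 * y.1 + r.2 * y.2) := by fun_prop
  obtain ⟨A, hA, hAm⟩ := hFc.exists_isMinOn hFn gc.continuousOn
  obtain ⟨B, hB, hBm⟩ := hFc.exists_isMaxOn hFn gc.continuousOn
  have hrr : 0 < r.1 * r.1 + r.2 * r.2 := by
    have := cr_rot hr
    simp only [cr, rot] at this
    linarith
  have par : ∀ y ∈ D ∩ {y | cr r y = cr r q}, ∃ s : ℝ, y = A + s • r := by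
    rintro y ⟨hy, hy2⟩
    obtain ⟨s, hs⟩ := cr_eq_zero (y := y - A) hr (by
      rw [cr_sub_right, hy2, hA.2]; ring)
    exact ⟨s, by rw [← hs]; abel⟩
  obtain ⟨τ, hτ⟩ := par B hB
  have hτ0 : 0 ≤ τ := by
    have h1 : r.1 * A.1 + r.2 * A.2 ≤ r.1 * B.1 + r.2 * B.2 := hAm hB
    rw [hτ] at h1
    simp at h1
    by_contra hn
    nlinarith
  refine ⟨A, τ, hτ0, ?_, ?_, ?_⟩
  · intro s hs
    rcases hτ0.eq_or_lt with h | h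
    · have : s = 0 := le_antisymm (by rw [h]; exact hs.2) hs.1
      rw [this]; simpa using hA.1
    · have := hc.add_smul_sub_mem hA.1 hB.1 (t := s / τ) ⟨div_nonneg hs.1 h.le,
        (div_le_one h).2 hs.2⟩
      convert this using 2
      rw [hτ, add_sub_cancel_left, smul_smul, div_mul_cancel₀ _ h.ne']
  · intro y hy
    rw [hA.2]
    exact hmax hy
  · intro y hy hy2
    have hyF : y ∈ D ∩ {y | cr r y = cr r q} := ⟨hy, by rw [mem_ofPred_eq, hy2]; exact hA.2⟩
    obtain ⟨s, hs⟩ := par y hyF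
    refine ⟨s, ⟨?_, ?_⟩, hs⟩
    · have h1 : r.1 * A.1 + r.2 * A.2 ≤ r.1 * y.1 + r.2 * y.2 := hAm hyF
      rw [hs] at h1
      simp at h1
      by_contra hn
      nlinarith
    · have h1 : r.1 * y.1 + r.2 * y.2 ≤ r.1 * B.1 + r.2 * B.2 := hBm hyF
      rw [hs, hτ] at h1
      simp at h1
      by_contra hn
      nlinarith

lemma MaxFace.ext_cases {r A : ℝ × ℝ} {τ : ℝ} (F : MaxFace D r A τ) {p : ℝ × ℝ}
    (hp : p ∈ extremePoints ℝ D) (h : cr r p = cr r A) : p = A ∨ p = A + τ • r := by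
  obtain ⟨s, hs, hps⟩ := F.eq p hp.1 h
  by_contra hn
  push Not at hn
  have h0 : 0 < s := by
    rcases hs.1.eq_or_lt with h | h
    · exact absurd (by rw [hps, ← h]; simp) hn.1
    · exact h
  have h1 : s < τ := by
    rcases hs.2.eq_or_lt with h | h
    · exact absurd (by rw [hps, ← h]) hn.2
    · exact h
  have hτ : 0 < τ := h0.trans h1
  have : p ∈ openSegment ℝ A (A + τ • r) := by
    refine ⟨1 - s / τ, s / τ, ?_, by positivity, by ring, ?_⟩
    · have := (div_lt_one hτ).2 h1; linarith
    · rw [hps, smul_add, smul_smul, div_mul_cancel₀ _ hτ.ne', sub_smul, one_smul]; abel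
  exact hn.1 (hp.2 F.memA F.memB this).symm

lemma MaxFace.ext_A {r A : ℝ × ℝ} {τ : ℝ} (F : MaxFace D r A τ) (hr : r ≠ 0) :
    A ∈ extremePoints ℝ D := by
  refine ⟨F.memA, ?_⟩
  rintro y hy z hz ⟨a, b, ha, hb, hab, h⟩
  have h1 := F.le y hy
  have h2 := F.le z hz
  have h3 : a * cr r y + b * cr r z = cr r A := by
    rw [← h, cr_add_right, cr_smul_right, cr_smul_right]
  have h4 : a * cr r A + b * cr r A = cr r A := by rw [← add_mul, hab, one_mul]
  have e1 : cr r y = cr r A := by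
    refine le_antisymm h1 ?_
    by_contra hn; push Not at hn
    nlinarith
  have e2 : cr r z = cr r A := by
    refine le_antisymm h2 ?_
    by_contra hn; push Not at hn
    nlinarith
  obtain ⟨s, hs, hys⟩ := F.eq y hy e1
  obtain ⟨t, ht, hzt⟩ := F.eq z hz e2
  have h5 : (a * s + b * t) • r = 0 := by
    have : a • y + b • z = (a + b) • A + (a * s + b * t) • r := by
      rw [hys, hzt]
      ext <;> simp <;> ring
    rw [h, hab, one_smul] at this
    exact (left_eq_add.1 this)
  have h6 : a * s + b * t = 0 := (smul_eq_zero.1 h5).resolve_right hr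
  have h7 : s = 0 := by
    have := mul_nonneg ha.le hs.1
    have := mul_nonneg hb.le ht.1
    have : a * s = 0 := by linarith
    exact (mul_eq_zero.1 this).resolve_left ha.ne'
  rw [hys, h7]; simp

/-- the face in reversed parametrization is not a face of `-r`; instead use reflection -/
lemma MaxFace.ext_B {r A : ℝ × ℝ} {τ : ℝ} (F : MaxFace D r A τ) (hr : r ≠ 0) :
    A + τ • r ∈ extremePoints ℝ D := by
  refine ⟨F.memB, ?_⟩
  rintro y hy z hz ⟨a, b, ha, hb, hab, h⟩
  have h1 := F.le y hy
  have h2 := F.le z hz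
  have h3 : a * cr r y + b * cr r z = cr r A := by
    rw [← cr_smul_right, ← cr_smul_right, ← cr_add_right, h, cr_add_right, cr_smul_right, cr_self]
    ring
  have h4 : a * cr r A + b * cr r A = cr r A := by rw [← add_mul, hab, one_mul]
  have e1 : cr r y = cr r A := by
    refine le_antisymm h1 ?_
    by_contra hn; push Not at hn
    nlinarith
  have e2 : cr r z = cr r A := by
    refine le_antisymm h2 ?_
    by_contra hn; push Not at hn
    nlinarith
  obtain ⟨s, hs, hys⟩ := F.eq y hy e1
  obtain ⟨t, ht, hzt⟩ := F.eq z hz e2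
  have h5 : (a * s + b * t) • r = τ • r := by
    have : a • y + b • z = (a + b) • A + (a * s + b * t) • r := by
      rw [hys, hzt]
      ext <;> simp <;> ring
    rw [h, hab, one_smul] at this
    exact (add_left_cancel this).symm
  have h6 : a * s + b * t = τ := smul_left_injective ℝ hr h5
  have h7 : s = τ := by
    refine le_antisymm hs.2 ?_
    by_contra hn; push Not at hn
    have e8 : a * τ + b * τ = τ := by rw [← add_mul, hab, one_mul]
    nlinarith [ht.2]
  rw [hys, h7]

lemma ext_not_int {p : ℝ × ℝ} (hp : p ∈ extremePoints ℝ D) : p ∉ interior D := by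
  intro hi
  have h1 := (line_tendsto p (1, 0)).eventually_mem (isOpen_interior.mem_nhds hi)
  have h2 := (line_tendsto p (-1, 0)).eventually_mem (isOpen_interior.mem_nhds hi)
  obtain ⟨δ, ⟨h1, h2⟩, h3⟩ := ((h1.and h2).and self_mem_nhdsWithin).exists
  have h3 : 0 < δ := h3
  have : p ∈ openSegment ℝ (p + δ • ((1:ℝ), (0:ℝ))) (p + δ • ((-1:ℝ), (0:ℝ))) :=
    ⟨1/2, 1/2, by norm_num, by norm_num, by norm_num, by ext <;> simp <;> ring⟩
  have := hp.2 (interior_subset h1) (interior_subset h2) this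
  have := congrArg Prod.fst this
  simp at this
  linarith

lemma exists_near_frontier (hD : IsCompact D) (hc : Convex ℝ D) (hi : (interior D).Nonempty)
    {p : ℝ × ℝ} (hp : p ∈ D) (hpi : p ∉ interior D) {U : Set (ℝ × ℝ)} (hU : U ∈ 𝓝 p) :
    ∃ q ∈ U, q ∈ D ∧ q ∉ interior D ∧ q ≠ p := by
  obtain ⟨ρ, hρ, hB⟩ := Metric.mem_nhds_iff.1 hU
  obtain ⟨b, hb, hbD⟩ : ∃ b ∈ Metric.ball p ρ, b ∉ D := by
    by_contra hn
    push Not at hn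
    exact hpi (mem_interior.2 ⟨Metric.ball p ρ, hn, Metric.isOpen_ball, Metric.mem_ball_self hρ⟩)
  obtain ⟨a0, ha0, ha0D⟩ : ∃ a ∈ Metric.ball p ρ, a ∈ interior D := by
    have : p ∈ closure (interior D) := by
      rw [hc.closure_interior_eq_closure_of_nonempty_interior hi]; exact subset_closure hp
    obtain ⟨a, ha, hd⟩ := mem_closure_iff_nhds.1 this _ (Metric.ball_mem_nhds p hρ)
    exact ⟨a, ha, hd⟩
  have hbp : b - p ≠ 0 := fun h => hbD (by rw [sub_eq_zero.1 h]; exact hp)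
  obtain ⟨a, ha, haD, hcr⟩ : ∃ a ∈ Metric.ball p ρ, a ∈ interior D ∧ cr (b - p) (a - p) ≠ 0 := by
    by_cases h : cr (b - p) (a0 - p) = 0
    · have h1 := (line_tendsto a0 (rot (b - p))).eventually_mem (isOpen_interior.mem_nhds ha0D)
      have h2 := (line_tendsto a0 (rot (b - p))).eventually_mem (Metric.isOpen_ball.mem_nhds ha0)
      obtain ⟨δ, ⟨h1, h2⟩, h3⟩ := ((h1.and h2).and self_mem_nhdsWithin).exists
      refine ⟨_, h2, h1, ?_⟩
      have : a0 + δ • rot (b - p) - p = (a0 - p) + δ • rot (b - p) := by abel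
      rw [this, cr_add_right, h, cr_smul_right, zero_add]
      exact (mul_pos h3 (cr_rot hbp)).ne'
    · exact ⟨a0, ha0, ha0D, h⟩
  have hpre : IsPreconnected (segment ℝ a b) := (convex_segment a b).isPreconnected
  obtain ⟨q, hq, hqf⟩ : ∃ q ∈ segment ℝ a b, q ∈ D ∧ q ∉ interior D := by
    by_contra hn
    push Not at hn
    obtain ⟨y, -, hy1, hy2⟩ := hpre (interior D) Dᶜ isOpen_interior hD.isClosed.isOpen_compl
      (fun y hy => by
        by_cases h : y ∈ D
        · exact Or.inl (hn y hy h)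
        · exact Or.inr h)
      ⟨a, left_mem_segment _ _ _, haD⟩ ⟨b, right_mem_segment _ _ _, hbD⟩
    exact hy2 (interior_subset hy1)
  refine ⟨q, hB ((convex_ball p ρ).segment_subset ha hb hq), hqf.1, hqf.2, ?_⟩
  rintro rfl
  obtain ⟨s, t, hs, ht, hst, h⟩ := hq
  apply hcr
  rw [← h]
  have : s = 1 - t := by linarith
  rw [this]
  by_cases ht0 : t = 1
  · exfalso; apply hbp; rw [← h, this, ht0]; simp
  · simp [cr]; ring_nf


lemma Tl.A2 (T : Tl D x k) (i0 : ι) {p : ℝ × ℝ} (hp : p ∈ D) (hpi : p ∉ interior D) :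
    ∃ i, p - (x i - x i0) ∈ D ∧ ∀ y ∈ interior D, y - (x i - x i0) ∉ interior D := by
  by_contra hn
  push Not at hn
  have hfin : {i | p - (x i - x i0) ∈ D}.Finite := by
    refine (T.fin_D (p + x i0)).subset fun i hi => ?_
    show p + x i0 - x i ∈ D
    convert (show p - (x i - x i0) ∈ D from hi) using 1; abel
  choose! o ho ho2 using hn
  set K := convexHull ℝ (o '' {i | p - (x i - x i0) ∈ D}) with hK
  have hKc : IsCompact K := (hfin.image o).isCompact_convexHull ℝ
  have hKi : K ⊆ interior D := by
    refine convexHull_min ?_ T.conv.interior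
    rintro _ ⟨i, hi, rfl⟩
    exact ho i hi
  have hKcv : Convex ℝ K := convex_convexHull ℝ _
  have hpK : Kᶜ ∈ 𝓝 p := hKc.isClosed.isOpen_compl.mem_nhds fun h => hpi (hKi h)
  obtain ⟨ρ, hρ, hB⟩ := Metric.mem_nhds_iff.1 hpK
  have hnear : ∀ q, ∀ᶠ z in 𝓝 q, ∀ i, z - (x i - x i0) ∈ D → q - (x i - x i0) ∈ D := by
    intro q
    have h1 : Tendsto (fun z => z + x i0) (𝓝 q) (𝓝 (q + x i0)) :=
      (continuous_add_const (x i0)).tendsto q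
    filter_upwards [h1.eventually (T.near (q + x i0))] with z hz i hi
    have := hz i (by convert hi using 1; abel)
    convert this using 1; abel
  obtain ⟨p1, ⟨hU1, hU2⟩, hp1, hp1i, hne⟩ := exists_near_frontier T.cpt T.conv T.int hp hpi
    (Filter.inter_mem (Metric.ball_mem_nhds p hρ) (hnear p))
  have hU2 : ∀ i, p1 - (x i - x i0) ∈ D → p - (x i - x i0) ∈ D := hU2
  set u := p1 - p with hu
  have hu0 : u ≠ 0 := sub_ne_zero.2 hne
  have hp1u : p1 = p + u := by rw [hu]; abel
  have miss : ∀ y ∈ K, cr u (y - p) ≠ 0 := by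
    intro y hy h0
    obtain ⟨t, ht⟩ := cr_eq_zero hu0 h0
    have hyt : y = p + t • u := by rw [← ht]; abel
    have hyi := hKi hy
    rcases lt_or_ge t 0 with h | h
    · have := combo_int T.conv hyi hp1 (t := 1 / (1 - t)) (by
        apply div_pos <;> linarith) (by rw [div_le_one] <;> linarith)
      apply hpi
      convert this using 1
      have h3 : y - p1 = (-(1 - t)) • u := by rw [hyt, hp1u]; ext <;> simp <;> ring
      have h4 : 1 / (1 - t) * -(1 - t) = -1 := by
        have : 1 - t ≠ 0 := by linarith
        field_simp
      rw [h3, smul_smul, h4, hp1u]; ext <;> simp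
    · rcases lt_or_ge t 1 with h1 | h1
      · have : y ∈ Metric.ball p ρ := by
          rw [mem_ball_iff_norm, ht, norm_smul, Real.norm_eq_abs, abs_of_nonneg h]
          have h5 : ‖u‖ < ρ := by
            have := hU1
            rw [mem_ball_iff_norm] at this
            exact this
          nlinarith [norm_nonneg u]
        exact hB this hy
      · have := combo_int T.conv hyi hp (t := 1 / t) (by
          apply div_pos <;> linarith) (by rw [div_le_one] <;> linarith)
        apply hp1i
        convert this using 1
        rw [ht, smul_smul, one_div_mul_cancel (by linarith), one_smul, hp1u]
  have hoK : ∀ i, p - (x i - x i0) ∈ D → o i ∈ K := fun i hi =>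
    subset_convexHull ℝ _ ⟨i, hi, rfl⟩
  have hi0 : p - (x i0 - x i0) ∈ D := by simpa using hp
  have side : ∀ i, p - (x i - x i0) ∈ D → 0 < cr u (o i - p) * cr u (o i0 - p) := by
    intro i hi
    by_contra hneg
    push Not at hneg
    have a1 := miss _ (hoK i hi)
    have a2 := miss _ (hoK i0 hi0)
    set α := cr u (o i - p)
    set β := cr u (o i0 - p)
    have hlt : α * β < 0 := lt_of_le_of_ne hneg (mul_ne_zero a1 a2)
    have hab : α - β ≠ 0 := fun h => by
      have : α = β := by linarith
      rw [this] at hlt; nlinarith [sq_nonneg β]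
    have hpos : 0 < (α - β) ^ 2 := by positivity
    have m := hKcv.add_smul_sub_mem (hoK i hi) (hoK i0 hi0) (t := α / (α - β)) (by
      have : α / (α - β) = (α ^ 2 - α * β) / (α - β) ^ 2 := by field_simp
      rw [this]
      constructor
      · apply div_nonneg _ hpos.le; nlinarith [sq_nonneg α]
      · rw [div_le_one hpos]; nlinarith [sq_nonneg β])
    apply miss _ m
    have : o i + (α / (α - β)) • (o i0 - o i) - p =
        (o i - p) + (α / (α - β)) • ((o i0 - p) - (o i - p)) := by
      rw [sub_sub_sub_cancel_right]; abel
    rw [this, cr_add_right, cr_smul_right, cr_sub_right u (o i0 - p)]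
    show α + α / (α - β) * (β - α) = 0
    field_simp; ring
  obtain ⟨z, hzD, hzn⟩ : ∃ z, z ∉ D ∧ ∀ i, z - (x i - x i0) ∈ D → p1 - (x i - x i0) ∈ D := by
    by_contra hcon
    push Not at hcon
    apply hp1i
    rw [mem_interior_iff_mem_nhds]
    filter_upwards [hnear p1] with z hz
    by_contra hzD
    obtain ⟨i, h1, h2⟩ := hcon z hzD
    exact h2 (hz i h1)
  obtain ⟨s, hs, hsD⟩ := T.tile.2.1 (z + x i0)
  have hsD' : ∀ i ∈ s, z - (x i - x i0) ∈ D := by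
    intro i hi
    convert hsD i hi using 1; abel
  have hi0s : i0 ∉ s := fun h => hzD (by simpa using hsD' i0 h)
  classical
  have hall : ∀ i ∈ insert i0 s, p - (x i - x i0) ∈ D ∧ p1 - (x i - x i0) ∈ D := by
    intro i hi
    rcases Finset.mem_insert.1 hi with h | h
    · subst h; simp only [sub_self, sub_zero]; exact ⟨hp, hp1⟩
    · have := hzn i (hsD' i h)
      exact ⟨hU2 i this, this⟩
  have hev : ∀ᶠ δ : ℝ in 𝓝[>] 0, ∀ i ∈ insert i0 s,
      p - (x i - x i0) + (1 / 2 : ℝ) • u + δ • (o i0 - p) ∈ interior D := by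
    rw [Filter.eventually_all_finset]
    intro i hi
    obtain ⟨h1, h2⟩ := hall i hi
    refine tri_push T.conv (w := o i - p) h1 ?_ ?_ (by norm_num) (by norm_num) (side i h1)
    · convert h2 using 1; rw [hp1u]; abel
    · convert interior_subset (ho2 i h1) using 1; abel
  obtain ⟨δ, hδ⟩ := hev.exists
  have := T.tile.2.2 (p + x i0 + (1 / 2 : ℝ) • u + δ • (o i0 - p)) (insert i0 s) (by
    intro i hi
    convert hδ i hi using 1; abel)
  rw [Finset.card_insert_of_notMem hi0s] at this
  omega

lemma dual_cr (f : StrongDual ℝ (ℝ × ℝ)) : ∃ r, ∀ y, f y = cr r y := by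
  refine ⟨(f (0, 1), - f (1, 0)), fun y => ?_⟩
  have : y = y.1 • ((1:ℝ), (0:ℝ)) + y.2 • ((0:ℝ), (1:ℝ)) := by ext <;> simp
  conv_lhs => rw [this, map_add, map_smul, map_smul]
  simp [cr]; ring

lemma Tl.ext_finite (T : Tl D x k) : (extremePoints ℝ D).Finite := by
  obtain ⟨i0, -⟩ := T.ne
  set J := {i | ∃ p ∈ D, p - (x i - x i0) ∈ D} with hJ
  have hJf : J.Finite := by
    have hB : IsBounded ((fun q : (ℝ × ℝ) × (ℝ × ℝ) => q.1 - q.2 + x i0) '' (D ×ˢ D)) :=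
      ((T.cpt.prod T.cpt).image (by fun_prop)).isBounded
    refine (T.fin_bdd hB).subset ?_
    rintro i ⟨p, hp, hp2⟩
    exact ⟨(p, _), ⟨hp, hp2⟩, by simp only; abel⟩
  have key : ∀ i, (∀ y ∈ interior D, y - (x i - x i0) ∉ interior D) →
      {p | p ∈ extremePoints ℝ D ∧ p - (x i - x i0) ∈ D}.Finite := by
    intro i hdis
    set v := x i - x i0
    have hpre : Convex ℝ ((fun y => y - v) ⁻¹' interior D) := by
      have : (fun y : ℝ × ℝ => y - v) = (fun y => y + (-v)) := by ext y <;> simp [sub_eq_add_neg]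
      rw [this]
      exact T.conv.interior.translate_preimage_left _
    obtain ⟨f, c, hf1, hf2⟩ := geometric_hahn_banach_open_open T.conv.interior isOpen_interior
      hpre (isOpen_interior.preimage (by fun_prop)) (by
        rw [Set.disjoint_left]
        exact hdis)
    obtain ⟨r, hr⟩ := dual_cr f
    obtain ⟨oo, hoo⟩ := T.int
    have hr0 : r ≠ 0 := by
      rintro rfl
      have h1 := hf1 oo hoo
      have h2 := hf2 (oo + v) (by simpa using hoo)
      rw [hr, cr_zero_left] at h1 h2
      linarith
    have hcl : ∀ y ∈ D, y ∈ closure (interior D) := fun y hy => by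
      rw [T.conv.closure_interior_eq_closure_of_nonempty_interior ⟨oo, hoo⟩]
      exact subset_closure hy
    have g1 : ∀ y ∈ D, cr r y ≤ c := by
      intro y hy
      rw [← hr]
      exact closure_minimal (fun y hy => (hf1 y hy).le)
        (isClosed_le f.continuous continuous_const) (hcl y hy)
    have g2 : ∀ y ∈ D, c ≤ cr r (y + v) := by
      intro y hy
      rw [← hr]
      exact closure_minimal (fun y hy => (hf2 (y + v) (by simpa using hy)).le)
        (isClosed_le continuous_const (f.continuous.comp (continuous_add_const v))) (hcl y hy)
    obtain ⟨A, τ, F⟩ := exists_maxFace T.cpt T.conv (T.int.mono interior_subset) hr0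
    refine (Set.Finite.insert A (Set.finite_singleton (A + τ • r))).subset ?_
    rintro p ⟨hp, hp2⟩
    refine F.ext_cases hp ?_
    have h1 := g2 _ hp2
    rw [sub_add_cancel] at h1
    exact le_antisymm (F.le _ hp.1) ((g1 A F.memA).trans h1)
  have : extremePoints ℝ D ⊆ ⋃ i ∈ {i ∈ J | ∀ y ∈ interior D, y - (x i - x i0) ∉ interior D},
      {p | p ∈ extremePoints ℝ D ∧ p - (x i - x i0) ∈ D} := by
    intro p hp
    obtain ⟨i, h1, h2⟩ := T.A2 i0 hp.1 (ext_not_int hp)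
    exact mem_biUnion (⟨⟨p, hp.1, h1⟩, h2⟩ : i ∈ {i ∈ J | _}) ⟨hp, h1⟩
  refine Set.Finite.subset (Set.Finite.biUnion (hJf.subset fun i hi => hi.1) ?_) this
  intro i hi
  exact key i hi.2

lemma Tl.hull (T : Tl D x k) : convexHull ℝ (extremePoints ℝ D) = D := by
  have := closure_convexHull_extremePoints T.cpt T.conv
  rwa [(T.ext_finite.isClosed_convexHull ℝ).closure_eq] at this

end KT


namespace KT
open Set Filter Topology Bornology
variable {ι : Type} {D : Set (ℝ × ℝ)} {x : ι → ℝ × ℝ} {k : ℕ}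

lemma MaxFace.unique {r A A' : ℝ × ℝ} {τ τ' : ℝ} (F : MaxFace D r A τ) (F' : MaxFace D r A' τ')
    (hr : r ≠ 0) : A = A' ∧ τ = τ' := by
  have sinj : ∀ s t : ℝ, s • r = t • r → s = t := fun s t h => smul_left_injective ℝ hr h
  have he : cr r A = cr r A' := le_antisymm (F'.le _ F.memA) (F.le _ F'.memA)
  obtain ⟨s, hs, h1⟩ := F.eq A' F'.memA he.symm
  obtain ⟨s', hs', h2⟩ := F'.eq A F.memA he
  have h3 : s + s' = 0 := by
    apply sinj
    rw [zero_smul, add_smul]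
    have : A = A + (s • r + s' • r) := by
      conv_lhs => rw [h2, h1]
      abel
    exact (left_eq_add.1 this)
  have h4 : s = 0 := by linarith [hs.1, hs'.1]
  have hA : A = A' := by rw [h1, h4]; simp
  refine ⟨hA, ?_⟩
  subst hA
  have hb : ∀ σ : ℝ, cr r (A + σ • r) = cr r A := by
    intro σ; rw [cr_add_right, cr_smul_right, cr_self]; ring
  obtain ⟨a, ha, h5⟩ := F.eq _ F'.memB (hb _)
  obtain ⟨b, hb', h6⟩ := F'.eq _ F.memB (hb _)
  have h7 := sinj _ _ (add_left_cancel h5)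
  have h8 := sinj _ _ (add_left_cancel h6)
  linarith [ha.2, hb'.2]

lemma MaxFace.scale {r A : ℝ × ℝ} {τ c : ℝ} (F : MaxFace D r A τ) (hc : 0 < c) :
    MaxFace D (c • r) A (τ / c) := by
  refine ⟨div_nonneg F.nn hc.le, ?_, ?_, ?_⟩
  · intro s hs
    rw [smul_smul]
    exact F.mem _ ⟨mul_nonneg hs.1 hc.le, (le_div_iff₀ hc).1 hs.2⟩
  · intro y hy
    rw [cr_smul_left, cr_smul_left]
    exact mul_le_mul_of_nonneg_left (F.le y hy) hc.le
  · intro y hy h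
    rw [cr_smul_left, cr_smul_left] at h
    obtain ⟨s, hs, h1⟩ := F.eq y hy (mul_left_cancel₀ hc.ne' h)
    refine ⟨s / c, ⟨div_nonneg hs.1 hc.le, (div_le_div_iff_of_pos_right hc).2 hs.2⟩, ?_⟩
    rw [smul_smul, div_mul_cancel₀ _ hc.ne']; exact h1

/-- edge vectors -/
def edgeSet (D : Set (ℝ × ℝ)) : Set (ℝ × ℝ) := {v | v ≠ 0 ∧ ∃ A, MaxFace D v A 1}

lemma Tl.edgeSet_fin (T : Tl D x k) : (edgeSet D).Finite := by
  have hf := T.ext_finite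
  refine ((hf.prod hf).image (fun q : (ℝ × ℝ) × (ℝ × ℝ) => q.2 - q.1)).subset ?_
  rintro v ⟨hv, A, F⟩
  exact ⟨(A, A + (1:ℝ) • v), ⟨F.ext_A hv, F.ext_B hv⟩, by simp⟩

lemma Tl.edgeSet_neg (T : Tl D x k) {v : ℝ × ℝ} (hv : v ∈ edgeSet D) : -v ∈ edgeSet D := by
  obtain ⟨h0, A, F⟩ := hv
  refine ⟨neg_ne_zero.2 h0, ?_⟩
  obtain ⟨B, τ, G⟩ := exists_maxFace T.cpt T.conv (T.int.mono interior_subset) (neg_ne_zero.2 h0)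
  have := T.len_eq h0 F G
  subst this
  exact ⟨B, G⟩

lemma edgeSet_of_face {r A : ℝ × ℝ} {τ : ℝ} (F : MaxFace D r A τ) (hr : r ≠ 0) (hτ : 0 < τ) :
    τ • r ∈ edgeSet D := by
  refine ⟨smul_ne_zero hτ.ne' hr, A, ?_⟩
  have := F.scale hτ
  rwa [div_self hτ.ne'] at this

lemma Tl.edge_par (T : Tl D x k) {r A e : ℝ × ℝ} {τ : ℝ} (F : MaxFace D r A τ) (hr : r ≠ 0)
    (he : e ∈ edgeSet D) (hp : cr r e = 0) : e = τ • r ∨ e = -(τ • r) := by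
  obtain ⟨c, hc⟩ := cr_eq_zero hr hp
  have key : ∀ c : ℝ, 0 < c → c • r ∈ edgeSet D → c = τ := by
    rintro c hc ⟨h0, B, G⟩
    have := G.scale (inv_pos.2 hc)
    rw [smul_smul, inv_mul_cancel₀ hc.ne', one_smul] at this
    have := (this.unique F hr).2
    simpa using this
  rcases lt_trichotomy c 0 with h | h | h
  · right
    have := T.edgeSet_neg he
    rw [hc, ← neg_smul] at this
    rw [hc, ← key (-c) (by linarith) this]; simp
  · exact absurd (by rw [hc, h]; simp) he.1
  · left
    rw [hc] at he
    rw [hc, key c h he]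

lemma exists_slope {S : Set (ℝ × ℝ)} (hS : S.Finite) (h0 : ∀ v ∈ S, v ≠ 0) :
    ∃ t : ℝ, ∀ v ∈ S, v.1 + t * v.2 ≠ 0 := by
  have : ((fun v : ℝ × ℝ => - v.1 / v.2) '' S).Finite := hS.image _
  obtain ⟨t, ht⟩ := this.infinite_compl.nonempty
  refine ⟨t, fun v hv h => ?_⟩
  by_cases h2 : v.2 = 0
  · apply h0 v hv
    rw [h2] at h
    ext
    · simpa using h
    · exact h2
  · apply ht
    refine ⟨v, hv, ?_⟩
    simp only
    field_simp
    linarith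

/-- the support function of `D` -/
noncomputable def supp (D : Set (ℝ × ℝ)) (r : ℝ × ℝ) : ℝ := sSup (cr r '' D)

lemma Tl.supp_le (T : Tl D x k) {r y : ℝ × ℝ} (hy : y ∈ D) : cr r y ≤ supp D r := by
  refine le_csSup ?_ ⟨y, hy, rfl⟩
  exact (T.cpt.image (cr_cont continuous_const continuous_id)).bddAbove

lemma Tl.supp_face (T : Tl D x k) {r A : ℝ × ℝ} {τ : ℝ} (F : MaxFace D r A τ) :
    supp D r = cr r A := by
  refine le_antisymm ?_ (T.supp_le F.memA)
  refine csSup_le ⟨_, A, F.memA, rfl⟩ ?_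
  rintro _ ⟨y, hy, rfl⟩
  exact F.le y hy

lemma Tl.supp_local (T : Tl D x k) {r0 A : ℝ × ℝ} {τ : ℝ} (F : MaxFace D r0 A τ) :
    ∀ᶠ r in 𝓝 r0, supp D r = max (cr r A) (cr r (A + τ • r0)) := by
  have h1 : ∀ᶠ r in 𝓝 r0, ∀ v ∈ extremePoints ℝ D, cr r v ≤ max (cr r A) (cr r (A + τ • r0)) := by
    rw [Filter.eventually_all_finite T.ext_finite]
    intro v hv
    rcases (F.le v hv.1).eq_or_lt with h | h
    · obtain rfl | rfl := F.ext_cases hv h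
      · exact Eventually.of_forall fun r => le_max_left _ _
      · exact Eventually.of_forall fun r => le_max_right _ _
    · have c1 : Continuous (fun r => cr r v) := cr_cont continuous_id continuous_const
      have c2 : Continuous (fun r => cr r A) := cr_cont continuous_id continuous_const
      have := (isOpen_lt c1 c2).mem_nhds h
      filter_upwards [this] with r hr
      exact le_max_of_le_left (le_of_lt hr)
  filter_upwards [h1] with r hr
  refine le_antisymm ?_ (max_le (T.supp_le F.memA) (T.supp_le F.memB))
  refine csSup_le ⟨_, A, F.memA, rfl⟩ ?_
  rintro _ ⟨y, hy, rfl⟩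
  set M := max (cr r A) (cr r (A + τ • r0))
  have hcv : Convex ℝ {y | cr r y ≤ M} := by
    intro a ha b hb s t hs ht hst
    simp only [mem_ofPred_eq] at *
    rw [cr_add_right, cr_smul_right, cr_smul_right]
    calc s * cr r a + t * cr r b ≤ s * M + t * M := by gcongr
      _ = M := by rw [← add_mul, hst, one_mul]
  have : D ⊆ {y | cr r y ≤ M} := by
    rw [← T.hull]
    exact convexHull_min hr hcv
  exact this hy

lemma cr_unique {w r1 : ℝ × ℝ} (h : ∀ᶠ r in 𝓝 r1, cr r w = 0) : w = 0 := by
  have h1 : cr r1 w = 0 := h.self_of_nhds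
  have key : ∀ d, cr d w = 0 := by
    intro d
    obtain ⟨δ, h2, h3⟩ := (((line_tendsto r1 d).eventually h).and self_mem_nhdsWithin).exists
    rw [cr_add_left, h1, cr_smul_left, zero_add] at h2
    exact (mul_eq_zero.1 h2).resolve_left (ne_of_gt h3)
  have a := key (1, 0)
  have b := key (0, 1)
  simp [cr] at a b
  ext
  · simpa using b
  · simpa using a

lemma loc_lin (g : ℝ × ℝ → ℝ) (h : ∀ r0, r0 ≠ 0 → ∃ c, ∀ᶠ r in 𝓝 r0, g r = cr r c) :
    ∃ c, ∀ r, r ≠ 0 → g r = cr r c := by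
  choose! C hC using h
  have hpc : IsPreconnected ({0}ᶜ : Set (ℝ × ℝ)) := by
    refine (isConnected_compl_singleton_of_one_lt_rank ?_ 0).isPreconnected
    rw [← Module.finrank_eq_rank, Module.finrank_prod, Module.finrank_self]
    norm_num
  have : PreconnectedSpace ({0}ᶜ : Set (ℝ × ℝ)) := isPreconnected_iff_preconnectedSpace.1 hpc
  have hl : IsLocallyConstant (fun r : ({0}ᶜ : Set (ℝ × ℝ)) => C r) := by
    rw [IsLocallyConstant.iff_eventually_eq]
    intro r0
    have h1 := (hC r0 r0.2).eventually_nhds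
    have h2 : ∀ᶠ r : ({0}ᶜ : Set (ℝ × ℝ)) in 𝓝 r0, ∀ᶠ y in 𝓝 (r : ℝ × ℝ), g y = cr y (C r0) :=
      (continuous_subtype_val.tendsto r0).eventually h1
    filter_upwards [h2] with r hr
    have := hC r r.2
    rw [← sub_eq_zero]
    apply cr_unique (r1 := (r : ℝ × ℝ))
    filter_upwards [hr, this] with y h3 h4
    rw [cr_sub_right, ← h3, ← h4]; ring
  have ne : ((1, 0) : ℝ × ℝ) ∈ ({0}ᶜ : Set (ℝ × ℝ)) := by simp
  refine ⟨C (1, 0), fun r hr => ?_⟩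
  rw [(hC r hr).self_of_nhds]
  congr 1
  exact hl.apply_eq_of_preconnectedSpace ⟨r, hr⟩ ⟨(1, 0), ne⟩

lemma abs_local {r0 e : ℝ × ℝ} (h : cr r0 e ≠ 0) :
    ∀ᶠ r in 𝓝 r0, |cr r e| = cr r ((if 0 < cr r0 e then (1:ℝ) else -1) • e) := by
  have c1 : Continuous (fun r => cr r e) := cr_cont continuous_id continuous_const
  rcases lt_or_gt_of_ne h with h | h
  · have := (isOpen_lt c1 continuous_const).mem_nhds h
    filter_upwards [this] with r hr
    have hr : cr r e < 0 := hr
    rw [if_neg (by linarith), cr_smul_right, abs_of_neg hr]; ring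
  · have := (isOpen_lt continuous_const c1).mem_nhds h
    filter_upwards [this] with r hr
    have hr : 0 < cr r e := hr
    rw [if_pos h, cr_smul_right, abs_of_pos hr]; ring

lemma Tl.supp_formula (T : Tl D x k) (E : Finset (ℝ × ℝ)) (hE : ∀ e ∈ E, e ∈ edgeSet D)
    (hE1 : ∀ v ∈ edgeSet D, v ∈ E ∨ -v ∈ E) (hE2 : ∀ v ∈ E, -v ∉ E) :
    ∃ c, ∀ r, r ≠ 0 → supp D r = cr r c + (1 / 2) * ∑ e ∈ E, |cr r e| := by
  suffices ∃ c, ∀ r, r ≠ 0 → supp D r - (1 / 2) * ∑ e ∈ E, |cr r e| = cr r c by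
    obtain ⟨c, hc⟩ := this
    exact ⟨c, fun r hr => by linarith [hc r hr]⟩
  apply loc_lin
  intro r0 hr0
  obtain ⟨A, τ, F⟩ := exists_maxFace T.cpt T.conv (T.int.mono interior_subset) hr0
  classical
  set E1 := E.filter (fun e => cr r0 e ≠ 0) with hE1d
  refine ⟨A + (τ / 2) • r0 - (1 / 2 : ℝ) • ∑ e ∈ E1,
    (if 0 < cr r0 e then (1:ℝ) else -1) • e, ?_⟩
  have h1 : ∀ᶠ r in 𝓝 r0, ∀ e ∈ E1,
      |cr r e| = cr r ((if 0 < cr r0 e then (1:ℝ) else -1) • e) := by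
    rw [Filter.eventually_all_finset]
    intro e he
    exact abs_local (Finset.mem_filter.1 he).2
  filter_upwards [h1, T.supp_local F] with r h2 h3
  have h4 : ∑ e ∈ E, |cr r e| = ∑ e ∈ E1, |cr r e| + |cr r (τ • r0)| := by
    rw [← Finset.sum_filter_add_sum_filter_not E (fun e => cr r0 e ≠ 0)]
    congr 1
    rcases F.nn.eq_or_lt with h | h
    · rw [← h, zero_smul, cr_zero_right, abs_zero]
      apply Finset.sum_eq_zero
      intro e he
      rw [Finset.mem_filter, not_not] at he
      have := T.edge_par F hr0 (hE e he.1) he.2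
      rw [← h] at this
      have h0 := (hE e he.1).1
      simp at this
      exact absurd this h0
    · have hmem := edgeSet_of_face F hr0 h
      have : ∃ e0 ∈ E, e0 = τ • r0 ∨ e0 = -(τ • r0) := by
        rcases hE1 _ hmem with h | h
        · exact ⟨_, h, Or.inl rfl⟩
        · exact ⟨_, h, Or.inr rfl⟩
      obtain ⟨e0, he0, hh⟩ := this
      have hsing : E.filter (fun e => ¬ (cr r0 e ≠ 0)) = {e0} := by
        ext e
        rw [Finset.mem_filter, not_not, Finset.mem_singleton]
        constructor
        · rintro ⟨h5, h6⟩
          have := T.edge_par F hr0 (hE e h5) h6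
          rcases this with a | a <;> rcases hh with b | b
          · rw [a, b]
          · exact absurd (by rw [b, ← a] at he0; exact he0) (hE2 e h5)
          · exact absurd (by rw [a, neg_neg, ← b]; exact he0) (hE2 e h5)
          · rw [a, b]
        · rintro rfl
          refine ⟨he0, ?_⟩
          rcases hh with b | b
          · rw [b, cr_smul_right, cr_self, mul_zero]
          · rw [b, cr_neg_right, cr_smul_right, cr_self, mul_zero, neg_zero]
      rw [hsing, Finset.sum_singleton]
      rcases hh with b | b
      · rw [b]
      · rw [b, cr_neg_right, abs_neg]
  rw [h3, h4, Finset.sum_congr rfl h2, ← cr_sum_right]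
  simp only [cr_add_right, cr_sub_right, cr_smul_right]
  have h5 : max (cr r A) (cr r A + τ * cr r r0) = cr r A + τ * cr r r0 / 2 + |τ * cr r r0| / 2 := by
    rcases le_total 0 (τ * cr r r0) with h | h
    · rw [max_eq_right (by linarith), abs_of_nonneg h]; ring
    · rw [max_eq_left (by linarith), abs_of_nonpos h]; ring
  rw [h5]; ring

end KT


namespace KT
open Set Filter Topology Bornology
variable {ι : Type} {D : Set (ℝ × ℝ)} {x : ι → ℝ × ℝ} {k : ℕ}

/-- zonogon spanned by `e` at the vertex `V` -/
def zono {m : ℕ} (V : ℝ × ℝ) (e : Fin m → ℝ × ℝ) : Set (ℝ × ℝ) :=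
  (fun t : Fin m → ℝ => V + ∑ j, t j • e j) '' (Set.pi univ fun _ => Icc (0:ℝ) 1)

lemma zono_cpt {m : ℕ} (V : ℝ × ℝ) (e : Fin m → ℝ × ℝ) : IsCompact (zono V e) :=
  (isCompact_univ_pi fun _ => isCompact_Icc).image (by fun_prop)

lemma zono_conv {m : ℕ} (V : ℝ × ℝ) (e : Fin m → ℝ × ℝ) : Convex ℝ (zono V e) := by
  rintro _ ⟨s, hs, rfl⟩ _ ⟨t, ht, rfl⟩ a b ha hb hab
  refine ⟨fun j => a * s j + b * t j, ?_, ?_⟩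
  · intro j _
    have := (convex_Icc (0:ℝ) 1) (hs j trivial) (ht j trivial) ha hb hab
    simpa using this
  · simp only [smul_add, add_smul, Finset.sum_add_distrib, Finset.smul_sum, smul_smul]
    have : V = a • V + b • V := by rw [← add_smul, hab, one_smul]
    nth_rewrite 1 [this]
    abel

lemma zono_le {m : ℕ} (V : ℝ × ℝ) (e : Fin m → ℝ × ℝ) (r : ℝ × ℝ) {y : ℝ × ℝ} (hy : y ∈ zono V e) :
    cr r y ≤ cr r (V + (1 / 2 : ℝ) • ∑ j, e j) + (1 / 2) * ∑ j, |cr r (e j)| := by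
  obtain ⟨t, ht, rfl⟩ := hy
  simp only [cr_add_right, cr_smul_right, cr_sum_right, Finset.mul_sum]
  rw [add_assoc, ← Finset.sum_add_distrib]
  gcongr with j _
  have h1 := (ht j trivial).1
  have h2 := (ht j trivial).2
  rcases abs_cases (cr r (e j)) with ⟨h, h'⟩ | ⟨h, h'⟩ <;> rw [h] <;> nlinarith

lemma zono_max {m : ℕ} (V : ℝ × ℝ) (e : Fin m → ℝ × ℝ) (r : ℝ × ℝ) : ∃ y ∈ zono V e,
    cr r y = cr r (V + (1 / 2 : ℝ) • ∑ j, e j) + (1 / 2) * ∑ j, |cr r (e j)| := by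
  refine ⟨_, ⟨fun j => if 0 ≤ cr r (e j) then 1 else 0, ?_, rfl⟩, ?_⟩
  · intro j _
    simp only
    split_ifs <;> simp
  · simp only [cr_add_right, cr_smul_right, cr_sum_right, Finset.mul_sum]
    rw [add_assoc, ← Finset.sum_add_distrib]
    congr 1
    refine Finset.sum_congr rfl fun j _ => ?_
    split_ifs with h
    · rw [abs_of_nonneg h]; ring
    · rw [abs_of_neg (not_le.1 h)]; ring

lemma sort_dirs (E : Finset (ℝ × ℝ)) (t : ℝ) (h1 : ∀ v ∈ E, 0 < v.1 + t * v.2)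
    (h2 : ∀ a ∈ E, ∀ b ∈ E, a ≠ b → cr a b ≠ 0) :
    ∃ (m : ℕ) (e : Fin m → ℝ × ℝ), Function.Injective e ∧ E = Finset.univ.image e ∧
      ∀ i j, i < j → 0 < cr (e i) (e j) := by
  classical
  set μ : ℝ × ℝ → ℝ := fun v => v.2 / (v.1 + t * v.2)
  have hcr : ∀ a ∈ E, ∀ b ∈ E, cr a b = (a.1 + t * a.2) * (b.1 + t * b.2) * (μ b - μ a) := by
    intro a ha b hb
    have p1 := (h1 a ha).ne'
    have p2 := (h1 b hb).ne'
    have q1 : (a.1 + t * a.2) * μ a = a.2 := mul_div_cancel₀ _ p1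
    have q2 : (b.1 + t * b.2) * μ b = b.2 := mul_div_cancel₀ _ p2
    calc cr a b = (a.1 + t * a.2) * b.2 - (b.1 + t * b.2) * a.2 := by simp only [cr]; ring
      _ = (a.1 + t * a.2) * ((b.1 + t * b.2) * μ b) -
          (b.1 + t * b.2) * ((a.1 + t * a.2) * μ a) := by rw [q1, q2]
      _ = _ := by ring
  have hinj : ∀ a ∈ E, ∀ b ∈ E, μ a = μ b → a = b := by
    intro a ha b hb h
    by_contra hne
    apply h2 a ha b hb hne
    rw [hcr a ha b hb, h]; ring
  set f := (E.image μ).orderEmbOfFin rfl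
  have hf : ∀ i, ∃ v ∈ E, μ v = f i := fun i => Finset.mem_image.1 (Finset.orderEmbOfFin_mem _ rfl i)
  choose e he1 he2 using hf
  refine ⟨_, e, ?_, ?_, ?_⟩
  · intro i j hij
    apply f.injective
    rw [← he2, ← he2, hij]
  · ext v
    constructor
    · intro hv
      have : μ v ∈ (E.image μ : Finset ℝ) := Finset.mem_image_of_mem _ hv
      have hr : μ v ∈ Set.range f := by
        rw [Finset.range_orderEmbOfFin]; exact this
      obtain ⟨i, hi⟩ := hr
      rw [Finset.mem_image]
      exact ⟨i, Finset.mem_univ _, hinj _ (he1 i) _ hv (by rw [he2, hi])⟩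
    · intro hv
      obtain ⟨i, _, rfl⟩ := Finset.mem_image.1 hv
      exact he1 i
  · intro i j hij
    rw [hcr _ (he1 i) _ (he1 j), he2, he2]
    have := f.strictMono hij
    have := h1 _ (he1 i)
    have := h1 _ (he1 j)
    apply mul_pos (by positivity)
    linarith

lemma Tl.zono (T : Tl D x k) : ∃ (m : ℕ) (V : ℝ × ℝ) (e : Fin m → ℝ × ℝ), (∀ i, e i ≠ 0) ∧
    (∀ i j, i < j → 0 < cr (e i) (e j)) ∧ D = KT.zono V e := by
  obtain ⟨t, ht⟩ := exists_slope T.edgeSet_fin fun v hv => hv.1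
  classical
  set E := (T.edgeSet_fin.toFinset).filter (fun v => 0 < v.1 + t * v.2) with hEdef
  have hEm : ∀ v, v ∈ E ↔ v ∈ edgeSet D ∧ 0 < v.1 + t * v.2 := by
    intro v; rw [hEdef, Finset.mem_filter, Finite.mem_toFinset]
  have hE1 : ∀ v ∈ edgeSet D, v ∈ E ∨ -v ∈ E := by
    intro v hv
    rw [hEm, hEm]
    rcases lt_or_gt_of_ne (ht v hv) with h | h
    · right
      refine ⟨T.edgeSet_neg hv, ?_⟩
      simp only [Prod.fst_neg, Prod.snd_neg]; linarith
    · exact Or.inl ⟨hv, h⟩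
  have hE2 : ∀ v ∈ E, -v ∉ E := by
    intro v hv hv2
    rw [hEm] at hv hv2
    have := hv2.2
    simp only [Prod.fst_neg, Prod.snd_neg] at this
    linarith [hv.2]
  have hpar : ∀ a ∈ E, ∀ b ∈ E, a ≠ b → cr a b ≠ 0 := by
    intro a ha b hb hab h0
    obtain ⟨hae, A, F⟩ := ((hEm a).1 ha).1
    rcases T.edge_par F hae ((hEm b).1 hb).1 h0 with h | h
    · apply hab; rw [h]; simp
    · apply hE2 a ha; rw [h] at hb; simpa using hb
  obtain ⟨c, hc⟩ := T.supp_formula E (fun e he => ((hEm e).1 he).1) hE1 hE2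
  obtain ⟨m, e, hinj, himg, hpos⟩ := sort_dirs E t (fun v hv => ((hEm v).1 hv).2) hpar
  have hsum : ∀ r, ∑ v ∈ E, |cr r v| = ∑ j, |cr r (e j)| := by
    intro r
    rw [himg, Finset.sum_image fun a _ b _ h => hinj h]
  refine ⟨m, c - (1 / 2 : ℝ) • ∑ j, e j, e, ?_, hpos, ?_⟩
  · intro i
    have : e i ∈ E := by rw [himg]; exact Finset.mem_image_of_mem _ (Finset.mem_univ _)
    exact ((hEm _).1 this).1.1
  · have hcen : c - (1 / 2 : ℝ) • ∑ j, e j + (1 / 2 : ℝ) • ∑ j, e j = c := by abel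
    apply Subset.antisymm
    · intro p hp
      by_contra hn
      obtain ⟨f, u, h1, h2⟩ := geometric_hahn_banach_closed_point (zono_conv _ _)
        (zono_cpt _ _).isClosed hn
      obtain ⟨r, hr⟩ := dual_cr f
      simp only [hr] at h1 h2
      obtain ⟨y, hy, hy2⟩ := zono_max (c - (1 / 2 : ℝ) • ∑ j, e j) e r
      have h3 := h1 y hy
      have hr0 : r ≠ 0 := by
        rintro rfl
        rw [cr_zero_left] at h2 h3
        linarith
      have h4 := T.supp_le (r := r) hp
      rw [hc r hr0, hsum] at h4
      rw [hcen] at hy2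
      linarith
    · intro p hp
      by_contra hn
      obtain ⟨f, u, h1, h2⟩ := geometric_hahn_banach_closed_point T.conv T.cpt.isClosed hn
      obtain ⟨r, hr⟩ := dual_cr f
      simp only [hr] at h1 h2
      obtain ⟨o, ho⟩ := T.int
      have hr0 : r ≠ 0 := by
        rintro rfl
        have := h1 o (interior_subset ho)
        rw [cr_zero_left] at h2 this
        linarith
      obtain ⟨A, τ, F⟩ := exists_maxFace T.cpt T.conv ⟨o, interior_subset ho⟩ hr0
      have h3 := h1 A F.memA
      rw [← T.supp_face F, hc r hr0, hsum] at h3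
      have h4 := zono_le _ e r hp
      rw [hcen] at h4
      linarith

/-- zonogon presentation with cyclically indexed edge vectors -/
structure Pres (D : Set (ℝ × ℝ)) (m : ℕ) (V : ℝ × ℝ) (e : ℕ → ℝ × ℝ) : Prop where
  anti : ∀ j, e (j + m) = - e j
  pos : ∀ i j, i < j → j < i + m → 0 < cr (e i) (e j)
  mem : ∀ y, y ∈ D ↔ ∃ t : ℕ → ℝ, (∀ j, t j ∈ Icc (0:ℝ) 1) ∧ y = V + ∑ j ∈ Finset.range m, t j • e j

lemma Tl.pres (T : Tl D x k) : ∃ m V e, 2 ≤ m ∧ Pres D m V e := by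
  obtain ⟨m, V, e, hne, hpos, hD⟩ := T.zono
  have hmem : ∀ y, y ∈ D ↔ ∃ t : ℕ → ℝ, (∀ j, t j ∈ Icc (0:ℝ) 1) ∧
      y = V + ∑ j : Fin m, t j • e j := by
    intro y
    rw [hD]
    constructor
    · rintro ⟨t, ht, rfl⟩
      refine ⟨fun j => if h : j < m then t ⟨j, h⟩ else 0, ?_, ?_⟩
      · intro j
        simp only
        split_ifs with h
        · exact ht _ trivial
        · simp
      · simp
    · rintro ⟨t, ht, rfl⟩
      exact ⟨fun j => t j, fun j _ => ht j, rfl⟩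
  have hm : 2 ≤ m := by
    by_contra hlt
    push Not at hlt
    obtain ⟨r, hr, h⟩ : ∃ r : ℝ × ℝ, r ≠ 0 ∧ ∀ j : Fin m, cr r (e j) = 0 := by
      interval_cases m
      · exact ⟨(1, 0), by simp, fun j => j.elim0⟩
      · refine ⟨e 0, hne 0, fun j => ?_⟩
        rw [Subsingleton.elim j 0, cr_self]
    have hall : ∀ y ∈ D, cr r y ≤ cr r V := by
      intro y hy
      obtain ⟨t, ht, rfl⟩ := (hmem y).1 hy
      rw [cr_add_right, cr_sum_right]
      simp [cr_smul_right, h]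
    obtain ⟨o, ho⟩ := T.int
    have h1 := int_lt hr hall ho
    obtain ⟨t, ht, h2⟩ := (hmem o).1 (interior_subset ho)
    rw [h2, cr_add_right, cr_sum_right] at h1
    simp [cr_smul_right, h] at h1
  have hm0 : 0 < m := by omega
  set e' : ℕ → ℝ × ℝ := fun j => ((-1 : ℝ) ^ (j / m)) • e ⟨j % m, Nat.mod_lt _ hm0⟩ with he'
  refine ⟨m, V, e', hm, ?_, ?_, ?_⟩
  · intro j
    simp only [he', Nat.add_div_right _ hm0, Nat.add_mod_right, pow_succ]
    simp
  · intro i j hij hj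
    have hi := Nat.div_add_mod i m
    have hj' := Nat.div_add_mod j m
    have hia := Nat.mod_lt i hm0
    have hja := Nat.mod_lt j hm0
    simp only [he', cr_smul_left, cr_smul_right]
    set q := i / m
    set q' := j / m
    have hq : q' = q ∨ q' = q + 1 := by
      have h1 : q ≤ q' := Nat.div_le_div_right hij.le
      have h2 : q' < q + 2 := by
        by_contra hcon
        push Not at hcon
        have := Nat.mul_le_mul_left m hcon
        have e1 : m * (q + 2) = m * q + 2 * m := by ring
        omega
      omega
    have sq : ((-1 : ℝ) ^ q) * ((-1 : ℝ) ^ q) = 1 := by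
      rw [← mul_pow]; simp
    rcases hq with h | h
    · rw [h] at hj' ⊢
      have hlt : (⟨i % m, hia⟩ : Fin m) < ⟨j % m, hja⟩ := by
        rw [Fin.mk_lt_mk]; omega
      have := hpos _ _ hlt
      rw [← mul_assoc, sq, one_mul]; exact this
    · rw [h] at hj' ⊢
      have e1 : m * (q + 1) = m * q + m := by ring
      have hlt : (⟨j % m, hja⟩ : Fin m) < ⟨i % m, hia⟩ := by
        rw [Fin.mk_lt_mk]; omega
      have := hpos _ _ hlt
      rw [← mul_assoc, pow_succ, mul_assoc ((-1:ℝ)^q), mul_comm (-1 : ℝ)]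
      rw [← mul_assoc, sq, cr_comm]; linarith
  · intro y
    rw [hmem]
    have : ∀ t : ℕ → ℝ, ∑ j ∈ Finset.range m, t j • e' j = ∑ j : Fin m, t j • e j := by
      intro t
      rw [Finset.sum_range]
      refine Finset.sum_congr rfl fun j _ => ?_
      simp only [he', Nat.div_eq_of_lt j.2, pow_zero, one_smul]
      congr 2
      ext; exact Nat.mod_eq_of_lt j.2
    simp only [this]

end KT


namespace KT
open Set Filter Topology Bornology
variable {ι : Type} {D : Set (ℝ × ℝ)} {x : ι → ℝ × ℝ} {k : ℕ} {m : ℕ} {V : ℝ × ℝ} {e : ℕ → ℝ × ℝ}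

lemma Pres.rotate (P : Pres D m V e) (hm : 1 ≤ m) : Pres D m (V + e 0) (fun j => e (j + 1)) := by
  obtain ⟨n, rfl⟩ : ∃ n, m = n + 1 := ⟨m - 1, by omega⟩
  refine ⟨?_, ?_, ?_⟩
  · intro j
    have := P.anti (j + 1)
    rw [← this]; congr 1; ring
  · intro i j h1 h2
    exact P.pos _ _ (by omega) (by omega)
  · intro y
    rw [P.mem]
    have hlast : e (n + 1) = - e 0 := by have := P.anti 0; rwa [zero_add] at this
    constructor
    · rintro ⟨t, ht, rfl⟩
      refine ⟨fun j => if j = n then 1 - t 0 else t (j + 1), ?_, ?_⟩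
      · intro j
        simp only
        split_ifs
        · exact ⟨by linarith [(ht 0).2], by linarith [(ht 0).1]⟩
        · exact ht _
      · rw [Finset.sum_range_succ', Finset.sum_range_succ]
        simp only [if_true, hlast]
        have : ∑ j ∈ Finset.range n, (if j = n then 1 - t 0 else t (j + 1)) • e (j + 1) =
            ∑ j ∈ Finset.range n, t (j + 1) • e (j + 1) := by
          refine Finset.sum_congr rfl fun j hj => ?_
          rw [if_neg (Finset.mem_range.1 hj).ne]
        rw [this, smul_neg, sub_smul, one_smul]
        abel
    · rintro ⟨t, ht, rfl⟩
      refine ⟨fun j => if j = 0 then 1 - t n else t (j - 1), ?_, ?_⟩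
      · intro j
        simp only
        split_ifs
        · exact ⟨by linarith [(ht n).2], by linarith [(ht n).1]⟩
        · exact ht _
      · rw [Finset.sum_range_succ (fun j => t j • e (j + 1)),
          Finset.sum_range_succ' (fun j => (if j = 0 then 1 - t n else t (j - 1)) • e j)]
        simp only [if_true, hlast, Nat.add_eq_zero_iff, one_ne_zero, and_false, if_false,
          Nat.add_sub_cancel]
        rw [smul_neg, sub_smul, one_smul]
        abel

/-- vertices -/
def vt (V : ℝ × ℝ) (e : ℕ → ℝ × ℝ) (i : ℕ) : ℝ × ℝ := V + ∑ j ∈ Finset.range i, e j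

lemma vt_zero : vt V e 0 = V := by simp [vt]
lemma vt_succ (i : ℕ) : vt V e (i + 1) = vt V e i + e i := by
  simp [vt, Finset.sum_range_succ, add_assoc]

lemma Pres.rot (P : Pres D m V e) (hm : 1 ≤ m) (i : ℕ) :
    Pres D m (vt V e i) (fun j => e (j + i)) := by
  induction i with
  | zero => simpa [vt_zero] using P
  | succ i ih =>
    have := ih.rotate hm
    simp only [zero_add] at this
    rw [vt_succ]
    convert this using 2
    ring_nf

lemma Pres.ext_V (P : Pres D m V e) (hm : 2 ≤ m) : V ∈ extremePoints ℝ D := by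
  set r := e (m - 1) - e 0
  have hr : ∀ j ∈ Finset.range m, cr r (e j) < 0 := by
    intro j hj
    rw [Finset.mem_range] at hj
    rw [cr_sub_left, cr_comm (e (m - 1))]
    by_cases h0 : j = 0
    · subst h0
      rw [cr_self]
      have := P.pos 0 (m - 1) (by omega) (by omega)
      linarith
    · have h1 := P.pos 0 j (by omega) (by omega)
      by_cases h2 : j = m - 1
      · rw [← h2, cr_self]; linarith
      · have := P.pos j (m - 1) (by omega) (by omega)
        linarith
  have hr0 : r ≠ 0 := by
    intro h
    have := hr 0 (Finset.mem_range.2 (by omega))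
    rw [h, cr_zero_left] at this
    exact lt_irrefl _ this
  have hV : V ∈ D := (P.mem V).2 ⟨fun _ => 0, by simp, by simp⟩
  have hle : ∀ t : ℕ → ℝ, (∀ j, t j ∈ Icc (0:ℝ) 1) →
      ∀ j ∈ Finset.range m, t j * cr r (e j) ≤ 0 := by
    intro t ht j hj
    have := hr j hj
    nlinarith [(ht j).1]
  have F : MaxFace D r V 0 := by
    refine ⟨le_rfl, ?_, ?_, ?_⟩
    · intro s hs
      have : s = 0 := le_antisymm hs.2 hs.1
      rw [this]; simpa using hV
    · intro y hy
      obtain ⟨t, ht, rfl⟩ := (P.mem y).1 hy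
      rw [cr_add_right, cr_sum_right]
      simp only [cr_smul_right]
      have := Finset.sum_nonpos (hle t ht)
      linarith
    · intro y hy h
      obtain ⟨t, ht, rfl⟩ := (P.mem y).1 hy
      rw [cr_add_right, cr_sum_right] at h
      simp only [cr_smul_right] at h
      have h2 : ∑ j ∈ Finset.range m, t j * cr r (e j) = 0 := by linarith
      rw [Finset.sum_eq_zero_iff_of_nonpos (hle t ht)] at h2
      refine ⟨0, by simp, ?_⟩
      rw [Finset.sum_eq_zero]
      · simp
      · intro j hj
        have := (mul_eq_zero.1 (h2 j hj)).resolve_right (hr j hj).ne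
        rw [this, zero_smul]
  exact F.ext_A hr0

lemma Pres.ext_vt (P : Pres D m V e) (hm : 2 ≤ m) (i : ℕ) : vt V e i ∈ extremePoints ℝ D :=
  (P.rot (by omega) i).ext_V hm

lemma Pres.par (P : Pres D 2 V e) : IsParallelogram D := by
  refine ⟨V, e 0, e 1, ?_, ?_⟩
  · have h := P.pos 0 1 (by norm_num) (by norm_num)
    rw [LinearIndependent.pair_iff]
    intro s t hst
    have h1 := congrArg (fun y => cr y (e 1)) hst
    have h2 := congrArg (cr (e 0)) hst
    simp only [cr_add_left, cr_add_right, cr_smul_left, cr_smul_right, cr_self, cr_zero_left,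
      cr_zero_right, mul_zero, add_zero, zero_add] at h1 h2
    exact ⟨(mul_eq_zero.1 h1).resolve_right h.ne', (mul_eq_zero.1 h2).resolve_right h.ne'⟩
  · ext y
    rw [P.mem]
    constructor
    · rintro ⟨t, ht, rfl⟩
      exact ⟨(t 0, t 1), ⟨ht 0, ht 1⟩, by simp [Finset.sum_range_succ, add_assoc]⟩
    · rintro ⟨⟨s, t⟩, ⟨h1, h2⟩, rfl⟩
      refine ⟨fun j => if j = 0 then s else t, ?_, ?_⟩
      · intro j
        simp only
        split_ifs
        · exact h1
        · exact h2
      · simp [Finset.sum_range_succ, add_assoc]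

lemma Pres.hex (P : Pres D 3 V e) (hc : Convex ℝ D) (hi : (interior D).Nonempty) :
    IsCentrallySymmetricHexagon D := by
  have hab := P.pos 0 1 (by norm_num) (by norm_num)
  have hbc := P.pos 1 2 (by norm_num) (by norm_num)
  have hac := P.pos 0 2 (by norm_num) (by norm_num)
  have e3 : e 3 = - e 0 := P.anti 0
  have e4 : e 4 = - e 1 := P.anti 1
  have w0 := P.ext_vt (by norm_num) 0
  have w1 := P.ext_vt (by norm_num) 1
  have w2 := P.ext_vt (by norm_num) 2
  have w3 := P.ext_vt (by norm_num) 3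
  have w4 := P.ext_vt (by norm_num) 4
  have w5 := P.ext_vt (by norm_num) 5
  have v1 : vt V e 1 = V + e 0 := by simp [vt, Finset.sum_range_succ]
  have v2 : vt V e 2 = V + e 0 + e 1 := by simp [vt, Finset.sum_range_succ]; abel
  have v3 : vt V e 3 = V + e 0 + e 1 + e 2 := by simp [vt, Finset.sum_range_succ]; abel
  have v4 : vt V e 4 = V + e 1 + e 2 := by rw [vt_succ, v3, e3]; abel
  have v5 : vt V e 5 = V + e 2 := by rw [vt_succ, v4, e4]; abel
  rw [vt_zero] at w0
  rw [v1] at w1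
  rw [v2] at w2
  rw [v3] at w3
  rw [v4] at w4
  rw [v5] at w5
  have pm := P.mem
  simp only [Finset.sum_range_succ, Finset.sum_range_zero, zero_add] at pm
  generalize e 0 = a at *
  generalize e 1 = b at *
  generalize e 2 = c at *
  have hba : cr b a = - cr a b := cr_comm b a
  have hca : cr c a = - cr a c := cr_comm c a
  have hcb : cr c b = - cr b c := cr_comm c b
  classical
  refine ⟨{V, V + a, V + a + b, V + a + b + c, V + b + c, V + c}, ⟨?_, ?_, hi⟩, ?_, ?_⟩
  · apply Subset.antisymm
    · intro p hp
      by_contra hn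
      obtain ⟨f, u, h1, h2⟩ := geometric_hahn_banach_closed_point (convex_convexHull ℝ _)
        ((Finset.finite_toSet _).isClosed_convexHull ℝ) hn
      obtain ⟨r, hr⟩ := dual_cr f
      simp only [hr] at h1 h2
      have h3 : ∀ v ∈ ({V, V + a, V + a + b, V + a + b + c, V + b + c, V + c} : Finset (ℝ × ℝ)),
          cr r v < u := fun v hv => h1 v (subset_convexHull ℝ _ hv)
      simp only [Finset.mem_insert, Finset.mem_singleton, forall_eq_or_imp, forall_eq,
        cr_add_right] at h3
      obtain ⟨t, ht, rfl⟩ := (pm p).1 hp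
      simp only [cr_add_right, cr_smul_right] at h2
      have key : cr r b * cr a c = cr r a * cr b c + cr r c * cr a b := by
        simp only [cr]; ring
      have t0 := ht 0
      have t1 := ht 1
      have t2 := ht 2
      generalize cr r a = α at *
      generalize cr r b = β at *
      generalize cr r c = γ at *
      obtain ⟨g0, g1, g2, g3, g4, g5⟩ := h3
      rcases lt_or_ge 0 α with hα | hα <;> rcases lt_or_ge 0 β with hβ | hβ <;>
        rcases lt_or_ge 0 γ with hγ | hγ
      · nlinarith [t0.2, t1.2, t2.2]
      · nlinarith [t0.2, t1.2, t2.1]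
      · exfalso; nlinarith [mul_pos hα hbc, mul_pos hγ hab]
      · nlinarith [t0.2, t1.1, t2.1]
      · nlinarith [t0.1, t1.2, t2.2]
      · exfalso; nlinarith [mul_pos hβ hac]
      · nlinarith [t0.1, t1.1, t2.2]
      · nlinarith [t0.1, t1.1, t2.1]
    · refine convexHull_min ?_ hc
      intro v hv
      simp only [Finset.coe_insert, Finset.coe_singleton, mem_insert_iff, mem_singleton_iff] at hv
      rcases hv with rfl | rfl | rfl | rfl | rfl | rfl
      · exact w0.1
      · exact w1.1
      · exact w2.1
      · exact w3.1
      · exact w4.1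
      · exact w5.1
  · intro v hv
    simp only [Finset.mem_insert, Finset.mem_singleton] at hv
    rcases hv with rfl | rfl | rfl | rfl | rfl | rfl <;> assumption
  · rw [Finset.card_insert_of_notMem, Finset.card_insert_of_notMem, Finset.card_insert_of_notMem,
      Finset.card_insert_of_notMem, Finset.card_insert_of_notMem, Finset.card_singleton]
    all_goals
      simp only [Finset.mem_insert, Finset.mem_singleton, not_or]
      repeat' apply And.intro
    all_goals
      intro h
      have h1 := congrArg (cr a) h
      have h2 := congrArg (cr b) h
      have h3 := congrArg (cr c) h
      simp only [cr_add_right, cr_self, hba, hca, hcb] at h1 h2 h3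
      linarith
  · refine ⟨V + (1 / 2 : ℝ) • (a + b + c), ?_⟩
    intro p hp
    obtain ⟨t, ht, rfl⟩ := (pm p).1 hp
    refine (pm _).2 ⟨fun j => 1 - t j, ?_, ?_⟩
    · intro j; exact ⟨by linarith [(ht j).2], by linarith [(ht j).1]⟩
    · ext <;> simp <;> ring

end KT


namespace KT
open Set Filter Topology Bornology
variable {ι : Type} {D : Set (ℝ × ℝ)} {x : ι → ℝ × ℝ} {k : ℕ} {m : ℕ} {V : ℝ × ℝ} {e : ℕ → ℝ × ℝ}

/-- the translation carrying an edge to the opposite edge -/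
def bs (e : ℕ → ℝ × ℝ) (m : ℕ) : ℝ × ℝ := ∑ j ∈ Finset.range (m - 1), e (j + 1)

/-- multiplicity -/
noncomputable def mu (x : ι → ℝ × ℝ) (y : ℝ × ℝ) : ℕ := {i | x i = y}.ncard

lemma Tl.mu_fin (T : Tl D x k) (y : ℝ × ℝ) : {i | x i = y}.Finite :=
  T.fin_bdd (B := {y}) isBounded_singleton

lemma Tl.mu_pos (T : Tl D x k) {y : ℝ × ℝ} : 0 < mu x y ↔ ∃ i, x i = y := by
  rw [mu, ncard_pos (T.mu_fin y)]; rfl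

lemma vt_m (hm : 1 ≤ m) : vt V e m = V + e 0 + bs e m := by
  obtain ⟨n, rfl⟩ : ∃ n, m = n + 1 := ⟨m - 1, by omega⟩
  rw [vt, bs, Finset.sum_range_succ']
  simp only [Nat.add_sub_cancel]
  abel

lemma Pres.vt_m1 (P : Pres D m V e) (hm : 1 ≤ m) : vt V e (m + 1) = V + bs e m := by
  rw [vt_succ, vt_m hm]
  have := P.anti 0
  rw [zero_add] at this
  rw [this]; abel

lemma Pres.e0_ne (P : Pres D m V e) (hm : 2 ≤ m) : e 0 ≠ 0 := by
  intro h
  have := P.pos 0 1 (by omega) (by omega)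
  rw [h, cr_zero_left] at this
  exact lt_irrefl _ this

lemma Pres.faceTop (P : Pres D m V e) (hm : 2 ≤ m) : MaxFace D (e 0) (V + bs e m) 1 := by
  obtain ⟨n, rfl⟩ : ∃ n, m = n + 1 := ⟨m - 1, by omega⟩
  have hp : ∀ j ∈ Finset.range n, 0 < cr (e 0) (e (j + 1)) := fun j hj =>
    P.pos 0 (j + 1) (by omega) (by have := Finset.mem_range.1 hj; omega)
  have hle : ∀ t : ℕ → ℝ, (∀ j, t j ∈ Icc (0:ℝ) 1) → ∀ j ∈ Finset.range n,
      t (j + 1) * cr (e 0) (e (j + 1)) ≤ cr (e 0) (e (j + 1)) := by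
    intro t ht j hj
    nlinarith [hp j hj, (ht (j + 1)).2]
  refine ⟨zero_le_one, ?_, ?_, ?_⟩
  · intro s hs
    refine (P.mem _).2 ⟨fun j => if j = 0 then s else 1, ?_, ?_⟩
    · intro j; simp only; split_ifs
      · exact hs
      · simp
    · rw [Finset.sum_range_succ']
      simp [bs]; abel
  · intro y hy
    obtain ⟨t, ht, rfl⟩ := (P.mem y).1 hy
    rw [Finset.sum_range_succ', cr_add_right, cr_add_right, cr_add_right, cr_sum_right, bs,
      cr_sum_right]
    simp only [cr_smul_right, cr_self, mul_zero, add_zero, Nat.add_sub_cancel]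
    have := Finset.sum_le_sum (hle t ht)
    linarith
  · intro y hy h
    obtain ⟨t, ht, rfl⟩ := (P.mem y).1 hy
    rw [Finset.sum_range_succ', cr_add_right, cr_add_right, cr_add_right, cr_sum_right, bs,
      cr_sum_right] at h
    simp only [cr_smul_right, cr_self, mul_zero, add_zero, Nat.add_sub_cancel] at h
    have h2 := (Finset.sum_eq_sum_iff_of_le (hle t ht)).1 (by linarith)
    refine ⟨t 0, ht 0, ?_⟩
    rw [Finset.sum_range_succ', bs, Nat.add_sub_cancel]
    have : ∑ j ∈ Finset.range n, t (j + 1) • e (j + 1) = ∑ j ∈ Finset.range n, e (j + 1) := by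
      refine Finset.sum_congr rfl fun j hj => ?_
      have h3 := h2 j hj
      have h4 := hp j hj
      have : t (j + 1) = 1 := by
        apply mul_right_cancel₀ h4.ne'; linarith
      rw [this, one_smul]
    rw [this]; abel

lemma Pres.mem_symm (P : Pres D m V e) {y : ℝ × ℝ} (h : y ∈ D) : V + vt V e m - y ∈ D := by
  obtain ⟨t, ht, rfl⟩ := (P.mem y).1 h
  refine (P.mem _).2 ⟨fun j => 1 - t j, fun j =>
    ⟨by linarith [(ht j).2], by linarith [(ht j).1]⟩, ?_⟩
  simp only [sub_smul, one_smul, Finset.sum_sub_distrib, vt]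
  abel

lemma Pres.int_symm (P : Pres D m V e) {y : ℝ × ℝ} (h : y ∈ interior D) :
    V + vt V e m - y ∈ interior D := by
  rw [mem_interior] at h ⊢
  obtain ⟨U, h1, h2, h3⟩ := h
  refine ⟨(fun z => V + vt V e m - z) ⁻¹' U, ?_, h2.preimage (by fun_prop), by simpa using h3⟩
  intro z hz
  have := P.mem_symm (h1 hz)
  simpa using this

lemma Pres.faceBot (P : Pres D m V e) (hm : 2 ≤ m) : MaxFace D (-e 0) (V + e 0) 1 := by
  have F := P.faceTop hm
  have hW := vt_m (V := V) (e := e) (m := m) (by omega)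
  have e1 : cr (e 0) (V + vt V e m) = cr (e 0) V + cr (e 0) (V + bs e m) := by
    rw [hW]; simp only [cr_add_right, cr_self]; ring
  refine ⟨zero_le_one, ?_, ?_, ?_⟩
  · intro s hs
    have := P.mem_symm (F.mem s hs)
    convert this using 1
    rw [hW, smul_neg]; abel
  · intro y hy
    have := F.le _ (P.mem_symm hy)
    rw [cr_sub_right, e1] at this
    rw [cr_neg_left, cr_neg_left, cr_add_right, cr_self]
    linarith
  · intro y hy h
    rw [cr_neg_left, cr_neg_left, cr_add_right, cr_self] at h
    obtain ⟨s, hs, h2⟩ := F.eq _ (P.mem_symm hy) (by rw [cr_sub_right, e1]; linarith)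
    refine ⟨s, hs, ?_⟩
    rw [hW] at h2
    have : y = V + (V + e 0 + bs e m) - (V + bs e m + s • e 0) := by rw [← h2]; abel
    rw [this, smul_neg]; abel

lemma Tl.seg_eq (T : Tl D x k) (P : Pres D m V e) (hm : 2 ≤ m) (p : ℝ × ℝ) :
    nseg x (e 0) p 1 = nseg x (e 0) (p + bs e m) 1 := by
  have := T.edge' (P.e0_ne hm) (P.faceTop hm) (P.faceBot hm) p
  rw [this]; congr 1
  rw [one_smul]; abel

/-- for small `δ` the half-open segment only sees its start -/
lemma Tl.nseg_tiny (T : Tl D x k) {r : ℝ × ℝ} (hr : r ≠ 0) (p : ℝ × ℝ) :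
    ∀ᶠ δ : ℝ in 𝓝[>] 0, nseg x r p δ = mu x p := by
  have hf := T.nseg_fin r p 1
  have h1 : ∀ᶠ δ : ℝ in 𝓝[>] 0, ∀ i ∈ {i | ∃ s ∈ Ico (0:ℝ) 1, p - x i = s • r},
      ∀ s ∈ Ico 0 δ, p - x i = s • r → x i = p := by
    rw [Filter.eventually_all_finite hf]
    rintro i ⟨s, hs, h⟩
    rcases hs.1.eq_or_lt with h0 | h0
    · refine Eventually.of_forall fun δ s' _ _ => ?_
      rw [← h0, zero_smul, sub_eq_zero] at h
      exact h.symm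
    · filter_upwards [Ioo_mem_nhdsGT h0] with δ hδ s' hs' h'
      exfalso
      have : s = s' := smul_left_injective ℝ hr (by simpa using h.symm.trans h')
      linarith [hs'.2, hδ.2]
  filter_upwards [h1, Ioo_mem_nhdsGT (zero_lt_one' ℝ)] with δ h2 h3
  rw [nseg, mu]
  congr 1
  ext i
  constructor
  · rintro ⟨s, hs, h⟩
    exact h2 i ⟨s, ⟨hs.1, hs.2.trans h3.2⟩, h⟩ s hs h
  · intro h
    have h : x i = p := h
    exact ⟨0, ⟨le_rfl, h3.1⟩, by rw [h]; simp⟩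

end KT


namespace KT
open Set Filter Topology Bornology
variable {ι : Type} {D : Set (ℝ × ℝ)} {x : ι → ℝ × ℝ} {k : ℕ} {m : ℕ} {V : ℝ × ℝ} {e : ℕ → ℝ × ℝ}

lemma Tl.period (T : Tl D x k) (P : Pres D m V e) (hm : 2 ≤ m) (p : ℝ × ℝ) :
    mu x p + mu x (p + bs e m - e 0) = mu x (p - e 0) + mu x (p + bs e m) := by
  have hr := P.e0_ne hm
  obtain ⟨δ, ⟨⟨⟨h1, h2⟩, h3⟩, h4⟩, h5⟩ := ((((T.nseg_tiny hr p).and (T.nseg_tiny hr (p - e 0))).and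
    (T.nseg_tiny hr (p + bs e m))).and (T.nseg_tiny hr (p + bs e m - e 0))).and
    self_mem_nhdsWithin |>.exists
  have h5 : 0 < δ := h5
  have key : ∀ q, nseg x (e 0) q δ + nseg x (e 0) (q - δ • e 0) 1 =
      nseg x (e 0) q 1 + nseg x (e 0) (q - e 0) δ := by
    intro q
    have a := T.nseg_add hr q h5.le zero_le_one
    have b := T.nseg_add hr q zero_le_one h5.le
    rw [one_smul] at b
    rw [← a, ← b, add_comm]
  have k1 := key p
  have k2 := key (p + bs e m)
  have s1 := T.seg_eq P hm p
  have s2 := T.seg_eq P hm (p - δ • e 0)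
  have : p - δ • e 0 + bs e m = p + bs e m - δ • e 0 := by abel
  rw [this] at s2
  omega

lemma bs_rot (_ : Pres D m V e) (hm : 1 ≤ m) (i : ℕ) :
    vt V e (i + m) = vt V e i + e i + bs (fun j => e (j + i)) m := by
  have : vt V e (i + m) = vt (vt V e i) (fun j => e (j + i)) m := by
    simp only [vt]
    rw [Finset.sum_range_add, add_assoc]
    simp only [add_comm i]
  rw [this, vt_m hm, zero_add]

lemma Tl.vert_step (T : Tl D x k) (P : Pres D m V e) (hm : 2 ≤ m) (z : ℝ × ℝ) (i : ℕ) :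
    mu x (z - vt V e i) + mu x (z - vt V e (i + m)) =
    mu x (z - vt V e (i + 1)) + mu x (z - vt V e (i + 1 + m)) := by
  have P' := P.rot (by omega) i
  have := T.period P' hm (z - vt V e (i + 1 + m))
  have h2 := bs_rot P (by omega) i
  have h1 := vt_succ (V := V) (e := e) i
  have h3 : vt V e (i + 1 + m) = vt V e (i + m) - e i := by
    have h4 := vt_succ (V := V) (e := e) (i + m)
    rw [P.anti] at h4
    rw [show i + 1 + m = i + m + 1 by ring, h4]; abel
  simp only [zero_add] at this
  have a1 : z - vt V e (i + 1 + m) + bs (fun j => e (j + i)) m - e i = z - vt V e (i + 1) := by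
    rw [h3, h2, h1]; abel
  have a2 : z - vt V e (i + 1 + m) - e i = z - vt V e (i + m) := by
    rw [h3]; abel
  have a3 : z - vt V e (i + 1 + m) + bs (fun j => e (j + i)) m = z - vt V e i := by
    rw [h3, h2]; abel
  rw [a1, a2, a3] at this
  omega

lemma Tl.vert (T : Tl D x k) (P : Pres D m V e) (hm : 2 ≤ m) (z : ℝ × ℝ) (i : ℕ) :
    mu x (z - vt V e 0) + mu x (z - vt V e (0 + m)) =
    mu x (z - vt V e i) + mu x (z - vt V e (i + m)) := by
  induction i with
  | zero => rfl
  | succ i ih => rw [ih, T.vert_step P hm]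

/-- if `z` is a vertex of some translate then for each vertex pair ... -/
lemma Tl.vert_ex (T : Tl D x k) (P : Pres D m V e) (hm : 2 ≤ m) {z : ℝ × ℝ} {i : ℕ}
    (h : (∃ l, x l = z - vt V e i) ∨ (∃ l, x l = z - vt V e (i + m))) (j : ℕ) :
    (∃ l, x l = z - vt V e j) ∨ (∃ l, x l = z - vt V e (j + m)) := by
  simp only [← T.mu_pos] at *
  have h1 := T.vert P hm z i
  have h2 := T.vert P hm z j
  omega

lemma Tl.nseg_sum (T : Tl D x k) {r : ℝ × ℝ} (hr : r ≠ 0) (p : ℝ × ℝ) (S : Finset ℝ) :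
    {i | ∃ s ∈ S, p - x i = s • r}.Finite ∧
    {i | ∃ s ∈ S, p - x i = s • r}.ncard = ∑ s ∈ S, mu x (p - s • r) := by
  classical
  induction S using Finset.induction_on with
  | empty => simp
  | insert a S ha ih =>
    have e1 : {i | ∃ s ∈ insert a S, p - x i = s • r} =
        {i | x i = p - a • r} ∪ {i | ∃ s ∈ S, p - x i = s • r} := by
      ext i
      simp only [mem_union, mem_ofPred_eq, Finset.mem_insert, exists_eq_or_imp]
      refine or_congr ?_ Iff.rfl
      constructor
      · intro h; rw [← h]; abel
      · intro h; rw [h]; abel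
    rw [e1, Finset.sum_insert ha]
    refine ⟨(T.mu_fin _).union ih.1, ?_⟩
    rw [ncard_union_eq _ (T.mu_fin _) ih.1, ih.2, mu]
    rw [Set.disjoint_left]
    rintro i h ⟨s, hs, h2⟩
    have h : x i = p - a • r := h
    rw [h, sub_sub_cancel] at h2
    have : a = s := smul_left_injective ℝ hr h2
    exact ha (this ▸ hs)

lemma Tl.period_int (T : Tl D x k) (P : Pres D m V e) (hm : 2 ≤ m) (p : ℝ × ℝ) (n : ℤ) :
    (mu x (p + (n:ℝ) • e 0 + bs e m) : ℤ) - mu x (p + (n:ℝ) • e 0) =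
      mu x (p + bs e m) - mu x p := by
  have step : ∀ q, (mu x (q + bs e m) : ℤ) - mu x q =
      mu x (q - e 0 + bs e m) - mu x (q - e 0) := by
    intro q
    have := T.period P hm q
    have h : q + bs e m - e 0 = q - e 0 + bs e m := by abel
    rw [h] at this
    omega
  induction n using Int.induction_on with
  | zero => simp
  | succ n ih =>
    rw [step, ← ih]
    have : p + (((n:ℤ) + 1 : ℤ) : ℝ) • e 0 - e 0 = p + ((n : ℤ):ℝ) • e 0 := by
      push_cast; rw [add_smul, one_smul]; abel
    rw [this]
  | pred n ih =>
    rw [← ih, step (p + ((-(n:ℤ) : ℤ) : ℝ) • e 0)]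
    have : p + ((-(n:ℤ) - 1 : ℤ) : ℝ) • e 0 = p + ((-(n : ℤ) : ℤ):ℝ) • e 0 - e 0 := by
      push_cast; rw [sub_smul, one_smul]; abel
    rw [this]

/-- a row of unmatched translates in direction `0` -/
def Row (x : ι → ℝ × ℝ) (m : ℕ) (e : ℕ → ℝ × ℝ) : Prop :=
  ∃ (y : ℝ × ℝ) (l : ℝ), 0 < l ∧ l < 1 ∧ ∀ n : ℤ, (∃ i, x i = y + (n:ℝ) • e 0) ∧
    (∃ i, x i = y + (l + n) • e 0 + bs e m)

lemma Tl.seg_sums (T : Tl D x k) (P : Pres D m V e) (hm : 2 ≤ m) (p : ℝ × ℝ) :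
    ∃ S : Finset ℝ, 0 ∈ S ∧ (∀ s ∈ S, s ∈ Ico (0:ℝ) 1) ∧
      ∑ s ∈ S, mu x (p - s • e 0) = ∑ s ∈ S, mu x (p - s • e 0 + bs e m) := by
  classical
  have hr := P.e0_ne hm
  have hf : ∀ p, {s : ℝ | s ∈ Ico (0:ℝ) 1 ∧ ∃ i, p - x i = s • e 0}.Finite := by
    intro p
    refine Set.Finite.subset ((T.nseg_fin (e 0) p 1).biUnion (t := fun i => {s : ℝ | p - x i = s • e 0})
      fun i _ => ?_) ?_
    · refine Set.Subsingleton.finite ?_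
      intro a ha b hb
      exact smul_left_injective ℝ hr ((show p - x i = a • e 0 from ha).symm.trans hb)
    · rintro s ⟨hs, i, hi⟩
      exact mem_biUnion (show i ∈ {i | ∃ s ∈ Ico (0:ℝ) 1, p - x i = s • e 0} from ⟨s, hs, hi⟩) hi
  set S : Finset ℝ := insert 0 ((hf p).toFinset ∪ (hf (p + bs e m)).toFinset) with hS
  have hS1 : ∀ s ∈ S, s ∈ Ico (0:ℝ) 1 := by
    intro s hs
    simp only [hS, Finset.mem_insert, Finset.mem_union, Finite.mem_toFinset, mem_ofPred_eq] at hs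
    rcases hs with h | h | h
    · simp [h]
    · exact h.1
    · exact h.1
  refine ⟨S, by simp [hS], hS1, ?_⟩
  have h1 := (T.nseg_sum hr p S).2
  have h2 := (T.nseg_sum hr (p + bs e m) S).2
  have h3 : ∀ s : ℝ, p - s • e 0 + bs e m = p + bs e m - s • e 0 := fun s => by abel
  simp only [h3]
  rw [← h1, ← h2]
  have := T.seg_eq P hm p
  unfold nseg at this
  convert this using 2
  · ext i
    constructor
    · rintro ⟨s, hs, h⟩
      exact ⟨s, hS1 s hs, h⟩
    · rintro ⟨s, hs, h⟩
      refine ⟨s, ?_, h⟩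
      simp only [hS, Finset.mem_insert, Finset.mem_union, Finite.mem_toFinset, mem_ofPred_eq]
      exact Or.inr (Or.inl ⟨hs, i, h⟩)
  · ext i
    constructor
    · rintro ⟨s, hs, h⟩
      exact ⟨s, hS1 s hs, h⟩
    · rintro ⟨s, hs, h⟩
      refine ⟨s, ?_, h⟩
      simp only [hS, Finset.mem_insert, Finset.mem_union, Finite.mem_toFinset, mem_ofPred_eq]
      exact Or.inr (Or.inr ⟨hs, i, h⟩)

lemma Tl.row_of (T : Tl D x k) (P : Pres D m V e) (hm : 2 ≤ m) {y : ℝ × ℝ} {l : ℝ}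
    (hl0 : 0 < l) (hl1 : l < 1) (h1 : mu x (y + bs e m) < mu x y)
    (h2 : mu x (y + l • e 0) < mu x (y + l • e 0 + bs e m)) : Row x m e := by
  refine ⟨y, l, hl0, hl1, fun n => ⟨?_, ?_⟩⟩
  · rw [← T.mu_pos]
    have := T.period_int P hm y n
    omega
  · rw [← T.mu_pos]
    have := T.period_int P hm (y + l • e 0) n
    have h3 : y + (l + n) • e 0 = y + l • e 0 + (n:ℝ) • e 0 := by rw [add_smul]; abel
    rw [h3]
    omega

lemma Tl.dich (T : Tl D x k) (P : Pres D m V e) (hm : 2 ≤ m) :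
    (∀ y, mu x (y + bs e m) = mu x y) ∨ Row x m e := by
  by_contra hn
  push Not at hn
  obtain ⟨⟨y, hy⟩, hrow⟩ := hn
  obtain ⟨S, h0, hS, hsum⟩ := T.seg_sums P hm y
  rcases lt_or_gt_of_ne hy with h | h
  · obtain ⟨s, hs, hlt⟩ : ∃ s ∈ S, mu x (y - s • e 0) < mu x (y - s • e 0 + bs e m) := by
      by_contra hc
      push Not at hc
      have := Finset.sum_lt_sum hc ⟨0, h0, by simpa using h⟩
      omega
    have hs0 : s ≠ 0 := by
      rintro rfl
      simp at hlt
      omega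
    have hs1 := hS s hs
    have hs2 : 0 < s := lt_of_le_of_ne hs1.1 (Ne.symm hs0)
    refine hrow (T.row_of P hm (y := y) (l := 1 - s) (by linarith [hs1.2]) (by linarith) h ?_)
    have := T.period_int P hm (y - s • e 0) 1
    have h3 : y + (1 - s) • e 0 = y - s • e 0 + ((1:ℤ):ℝ) • e 0 := by
      rw [sub_smul]; push_cast; abel
    rw [h3]
    omega
  · obtain ⟨s, hs, hlt⟩ : ∃ s ∈ S, mu x (y - s • e 0 + bs e m) < mu x (y - s • e 0) := by
      by_contra hc
      push Not at hc
      have := Finset.sum_lt_sum hc ⟨0, h0, by simpa using h⟩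
      omega
    have hs0 : s ≠ 0 := by
      rintro rfl
      simp at hlt
      omega
    have hs1 := hS s hs
    have hs2 : 0 < s := lt_of_le_of_ne hs1.1 (Ne.symm hs0)
    refine hrow (T.row_of P hm (y := y - s • e 0) (l := s) hs2 hs1.2 hlt ?_)
    simpa using h

end KT


namespace KT
open Set Filter Topology Bornology
variable {ι : Type} {D : Set (ℝ × ℝ)} {x : ι → ℝ × ℝ} {k : ℕ} {m : ℕ} {V : ℝ × ℝ} {e : ℕ → ℝ × ℝ}

/-- interior indices plus pushable boundary indices -/
lemma Tl.push_count (T : Tl D x k) {z d : ℝ × ℝ} {A B : Finset ι}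
    (hA : ∀ i ∈ A, z - x i ∈ interior D)
    (hB : ∀ i ∈ B, z - x i ∉ interior D ∧
      ∀ᶠ δ : ℝ in 𝓝[>] 0, z - x i + δ • d ∈ interior D) : A.card + B.card ≤ k := by
  classical
  have hd : Disjoint A B := by
    rw [Finset.disjoint_left]
    intro i h1 h2
    exact (hB i h2).1 (hA i h1)
  rw [← Finset.card_union_of_disjoint hd]
  have h1 : ∀ᶠ δ : ℝ in 𝓝[>] 0, ∀ i ∈ A ∪ B, z - x i + δ • d ∈ interior D := by
    rw [Finset.eventually_all]
    intro i hi
    rcases Finset.mem_union.1 hi with h | h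
    · exact (line_tendsto (z - x i) d).eventually_mem (isOpen_interior.mem_nhds (hA i h))
    · exact (hB i h).2
  obtain ⟨δ, hδ⟩ := h1.exists
  refine T.tile.2.2 (z + δ • d) _ fun i hi => ?_
  have := hδ i hi
  convert this using 1
  abel

/-- counting lemma -/
lemma Tl.count (T : Tl D x k) (P r d : ℝ × ℝ) {σ c : ℝ} (hσ : 0 < σ) (hc : 0 ≤ c) (s : ℕ)
    (hJ : ∀ t : ℝ, ∃ J : Finset ι, J.card = s ∧ ∀ i ∈ J, P + t • r - x i ∉ interior D ∧
      ∀ᶠ δ : ℝ in 𝓝[>] 0, P + t • r - x i + δ • d ∈ interior D)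
    (S : Finset ℕ) (w : ℕ → ℕ) (F : ℕ × Bool × ℕ → ι) (a : ℕ × Bool × ℕ → ℝ)
    (ha : ∀ q, q.2.2 ∈ S → |a q - q.1| ≤ c)
    (hint : ∀ q, q.2.2 ∈ S → ∀ t ∈ Ioc (a q) (a q + σ), P + t • r - x (F q) ∈ interior D)
    (hw : ∀ Q : Finset (ℕ × Bool × ℕ), ∀ i, (∀ q ∈ Q, q.2.2 ∈ S ∧ F q = i) →
      ∑ q ∈ Q, w q.2.2 ≤ 2) :
    (∑ j ∈ S, (w j : ℝ)) * σ ≤ (k : ℝ) - s := by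
  classical
  set g := ∑ j ∈ S, w j with hg
  have main : ∀ N : ℕ, (N * g : ℝ) ≤ ((N + 2 * c) / σ + 2) * ((k:ℝ) - s) := by
    intro N
    set Q : Finset (ℕ × Bool × ℕ) := Finset.range N ×ˢ (Finset.univ ×ˢ S) with hQ
    have hQS : ∀ q ∈ Q, q.1 < N ∧ q.2.2 ∈ S := by
      intro q hq
      simp only [hQ, Finset.mem_product, Finset.mem_range] at hq
      exact ⟨hq.1, hq.2.2⟩
    have hsum : ∑ q ∈ Q, w q.2.2 = 2 * (N * g) := by
      rw [hQ, Finset.sum_product]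
      simp only [Finset.sum_product, Finset.sum_const, Finset.card_univ, Fintype.card_bool,
        Finset.card_range, smul_eq_mul]
      ring
    set L := ⌊(N + 2 * c) / σ⌋₊ + 2 with hL
    let l : ℕ × Bool × ℕ → ℕ := fun q => ⌊(a q + c) / σ⌋₊ + 1
    have hl : ∀ q ∈ Q, l q ∈ Finset.range L := by
      intro q hq
      obtain ⟨h1, h2⟩ := hQS q hq
      have h3 := abs_le.1 (ha q h2)
      have h4 : (q.1 : ℝ) ≤ N := by exact_mod_cast h1.le
      rw [Finset.mem_range, hL]
      have : ⌊(a q + c) / σ⌋₊ ≤ ⌊(N + 2 * c) / σ⌋₊ := by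
        apply Nat.floor_le_floor
        refine div_le_div_of_nonneg_right ?_ hσ.le
        linarith [h3.2]
      simp only [l]; omega
    have ht : ∀ q ∈ Q, (-c + l q * σ) ∈ Ioc (a q) (a q + σ) := by
      intro q hq
      obtain ⟨h1, h2⟩ := hQS q hq
      have h3 := abs_le.1 (ha q h2)
      have h5 : (0:ℝ) ≤ q.1 := by positivity
      have h6 : 0 ≤ (a q + c) / σ := div_nonneg (by linarith [h3.1]) hσ.le
      have h7 := Nat.floor_le h6
      have h8 := Nat.lt_floor_add_one ((a q + c) / σ)
      rw [le_div_iff₀ hσ] at h7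
      rw [div_lt_iff₀ hσ] at h8
      simp only [l]
      push_cast
      constructor <;> nlinarith
    have hk : s ≤ k := by
      obtain ⟨J, h1, h2⟩ := hJ 0
      have := T.push_count (z := P + (0:ℝ) • r) (d := d) (A := ∅) (B := J) (by simp) h2
      simp at this
      omega
    have hfib : ∀ b ∈ Finset.range L, ∑ q ∈ Q with l q = b, w q.2.2 ≤ 2 * (k - s) := by
      intro b hb
      set Qb := {q ∈ Q | l q = b} with hQb
      obtain ⟨J, h1, h2⟩ := hJ (-c + b * σ)
      have h3 := T.push_count (z := P + (-c + b * σ) • r) (d := d) (A := Qb.image F) (B := J) (by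
        intro i hi
        obtain ⟨q, hq, rfl⟩ := Finset.mem_image.1 hi
        rw [hQb, Finset.mem_filter] at hq
        have h4 := ht q hq.1
        rw [hq.2] at h4
        exact hint q (hQS q hq.1).2 _ h4) h2
      rw [← Finset.sum_fiberwise_of_maps_to (t := Qb.image F) (g := F)
        (fun q hq => Finset.mem_image_of_mem _ hq)]
      calc _ ≤ ∑ i ∈ Qb.image F, 2 := by
            refine Finset.sum_le_sum fun i _ => hw _ i ?_
            intro q hq
            rw [Finset.mem_filter, hQb, Finset.mem_filter] at hq
            exact ⟨(hQS q hq.1.1).2, hq.2⟩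
        _ = 2 * (Qb.image F).card := by rw [Finset.sum_const, smul_eq_mul, mul_comm]
        _ ≤ 2 * (k - s) := by omega
    have h9 : 2 * (N * g) ≤ L * (2 * (k - s)) := by
      rw [← hsum, ← Finset.sum_fiberwise_of_maps_to hl]
      calc _ ≤ ∑ b ∈ Finset.range L, 2 * (k - s) := Finset.sum_le_sum hfib
        _ = _ := by rw [Finset.sum_const, smul_eq_mul, Finset.card_range]
    have h10 : (N * g : ℝ) ≤ L * ((k:ℝ) - s) := by
      rw [← Nat.cast_sub hk]
      have : N * g ≤ L * (k - s) := by nlinarith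
      exact_mod_cast this
    refine h10.trans ?_
    have h11 : (0:ℝ) ≤ (k:ℝ) - s := by rw [← Nat.cast_sub hk]; positivity
    refine mul_le_mul_of_nonneg_right ?_ h11
    rw [hL]; push_cast
    have : 0 ≤ (N + 2 * c) / σ := by positivity
    linarith [Nat.floor_le this]
  have hgg : (∑ j ∈ S, (w j : ℝ)) = g := by rw [hg]; push_cast; rfl
  rw [hgg]
  by_contra hcon
  push Not at hcon
  set K := (k:ℝ) - s
  have h2 : ∀ N : ℕ, (N:ℝ) * (g * σ - K) ≤ (2 * c + 2 * σ) * K := by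
    intro N
    have := main N
    have h3 : ((N + 2 * c) / σ + 2) * K = ((N + 2 * c + 2 * σ) * K) / σ := by
      field_simp
    rw [h3, le_div_iff₀ hσ] at this
    linarith
  obtain ⟨N, hN⟩ := exists_nat_gt ((2 * c + 2 * σ) * K / (g * σ - K))
  rw [div_lt_iff₀ (by linarith)] at hN
  linarith [h2 N]

end KT


namespace KT
open Set Filter Topology Bornology
variable {ι : Type} {D : Set (ℝ × ℝ)} {x : ι → ℝ × ℝ} {k : ℕ} {m : ℕ} {V : ℝ × ℝ} {e : ℕ → ℝ × ℝ}

lemma Pres.vt_add (P : Pres D m V e) (j : ℕ) : vt V e (j + m) = V + vt V e m - vt V e j := by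
  induction j with
  | zero => rw [vt_zero]; simp
  | succ j ih =>
    rw [show j + 1 + m = j + m + 1 by ring, vt_succ, ih, P.anti, vt_succ]; abel

lemma Pres.ht_lt (P : Pres D m V e) {i j : ℕ} (h1 : 1 ≤ i) (hij : i < j) (hj : j ≤ m) :
    cr (e 0) (vt V e i) < cr (e 0) (vt V e j) := by
  induction j, hij using Nat.le_induction with
  | base =>
    rw [vt_succ, cr_add_right]
    have := P.pos 0 i (by omega) (by omega)
    linarith
  | succ j hj' ih =>
    have := ih (by omega)
    rw [vt_succ, cr_add_right]
    have := P.pos 0 j (by omega) (by omega)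
    linarith

lemma Pres.ht_inj (P : Pres D m V e) {i j : ℕ} (hi : 2 ≤ i ∧ i < m) (hj : 2 ≤ j ∧ j < m)
    (h : cr (e 0) (vt V e i) = cr (e 0) (vt V e j)) : i = j := by
  rcases lt_trichotomy i j with h1 | h1 | h1
  · have := P.ht_lt (i := i) (j := j) (by omega) h1 (by omega); linarith
  · exact h1
  · have := P.ht_lt (i := j) (j := i) (by omega) h1 (by omega); linarith

lemma Tl.row_count (T : Tl D x k) (P : Pres D m V e) (hm : 2 ≤ m) {y : ℝ × ℝ} {l : ℝ}
    (hl0 : 0 < l) (hl1 : l < 1) (hrow : ∀ n : ℤ, (∃ i, x i = y + (n:ℝ) • e 0) ∧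
    (∃ i, x i = y + (l + n) • e 0 + bs e m)) (s : ℕ) (d : ℝ × ℝ)
    (hJ : ∀ t : ℝ, ∃ J : Finset ι, J.card = s ∧ ∀ i ∈ J,
      y + V + bs e m + t • e 0 - x i ∉ interior D ∧
      ∀ᶠ δ : ℝ in 𝓝[>] 0, y + V + bs e m + t • e 0 - x i + δ • d ∈ interior D)
    (S : Finset ℕ) (hS : ∀ j ∈ S, 2 ≤ j ∧ j < m) (w : ℕ → ℕ) {σ σ' : ℝ} (hσ : 0 < σ) (hσ' : σ < σ')
    (hch : ∀ j ∈ S, ∀ t ∈ Ioo 0 σ', vt V e j - t • e 0 ∈ interior D)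
    (hw1 : ∀ j ∈ S, w j ≤ 2)
    (hw2 : ∀ j ∈ S, ∀ j' ∈ S, cr (e 0) (vt V e j) + cr (e 0) (vt V e j') =
      cr (e 0) (V + vt V e m) → w j + w j' ≤ 2) :
    (∑ j ∈ S, (w j : ℝ)) * σ ≤ (k : ℝ) - s := by
  classical
  have hr := P.e0_ne hm
  set P0 := y + V + bs e m with hP0
  let c : ℕ × Bool × ℕ → ℝ := fun q => q.1 + if q.2.1 then l else 0
  have hcinj : ∀ q q', c q = c q' → q.1 = q'.1 ∧ q.2.1 = q'.2.1 := by
    rintro ⟨n, b, j⟩ ⟨n', b', j'⟩ h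
    simp only [c] at h ⊢
    have aux : ∀ (n n' : ℕ), (n:ℝ) + l = n' → False := by
      intro n n' h
      have h1 : (n:ℝ) < n' := by linarith
      have h2 : (n':ℝ) < ((n + 1 : ℕ) : ℝ) := by push_cast; linarith
      rw [Nat.cast_lt] at h1 h2
      omega
    cases b <;> cases b' <;> simp at h ⊢
    · exact h
    · exact aux _ _ h.symm
    · exact aux _ _ h
    · exact h
  have hex : ∀ q, ∃ (i : ι) (sg : Bool), (sg = true → x i = P0 + c q • e 0 - vt V e q.2.2) ∧
      (sg = false → x i = P0 + c q • e 0 - vt V e (q.2.2 + m)) := by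
    intro q
    have : (∃ l, x l = P0 + c q • e 0 - vt V e q.2.2) ∨
        (∃ l, x l = P0 + c q • e 0 - vt V e (q.2.2 + m)) := by
      obtain ⟨n, b, j⟩ := q
      cases b
      · refine T.vert_ex P hm (i := 1) (Or.inr ?_) _
        obtain ⟨i, hi⟩ := (hrow n).1
        refine ⟨i, ?_⟩
        rw [hi, add_comm 1 m, P.vt_m1 (by omega)]
        simp [c, hP0]; abel
      · refine T.vert_ex P hm (i := 0) (Or.inl ?_) _
        obtain ⟨i, hi⟩ := (hrow n).2
        refine ⟨i, ?_⟩
        rw [hi, vt_zero]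
        simp only [c, hP0, if_true, Int.cast_natCast]
        rw [add_comm l]; abel
    rcases this with ⟨i, hi⟩ | ⟨i, hi⟩
    · exact ⟨i, true, fun _ => hi, by simp⟩
    · exact ⟨i, false, by simp, fun _ => hi⟩
  choose F sg hF1 hF2 using hex
  have uniq : ∀ q q' (b : Bool), sg q = b → sg q' = b → q.2.2 ∈ S → q'.2.2 ∈ S → F q = F q' →
      q = q' := by
    intro q q' b hb hb' hq hq' hFF
    have e1 : P0 + c q • e 0 - vt V e q.2.2 = P0 + c q' • e 0 - vt V e q'.2.2 ∨
        P0 + c q • e 0 + vt V e q.2.2 = P0 + c q' • e 0 + vt V e q'.2.2 := by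
      cases b
      · right
        have h1 := hF2 q hb
        have h2 := hF2 q' hb'
        rw [hFF, h2, P.vt_add, P.vt_add] at h1
        have h3 := congrArg (fun u => u + (V + vt V e m)) h1
        rw [eq_comm]
        convert h3 using 1 <;> abel
      · left
        rw [← hF1 q hb, ← hF1 q' hb', hFF]
    have e2 : cr (e 0) (vt V e q.2.2) = cr (e 0) (vt V e q'.2.2) := by
      rcases e1 with h | h
      · have h1 := congrArg (cr (e 0)) h
        simp only [cr_add_right, cr_sub_right, cr_smul_right, cr_self] at h1
        linarith
      · have h1 := congrArg (cr (e 0)) h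
        simp only [cr_add_right, cr_smul_right, cr_self] at h1
        linarith
    have e3 := P.ht_inj (hS _ hq) (hS _ hq') e2
    rw [e3] at e1
    have e4 : c q • e 0 = c q' • e 0 := by
      rcases e1 with h | h
      · simpa using h
      · simpa using h
    obtain ⟨e5, e6⟩ := hcinj _ _ (smul_left_injective ℝ hr e4)
    exact Prod.ext e5 (Prod.ext e6 e3)
  refine T.count P0 (e 0) d hσ (c := 1 + σ') (by linarith) s hJ S w F
    (fun q => if sg q then c q - σ' else c q) ?_ ?_ ?_
  · intro q _
    have h1 : 0 ≤ c q - q.1 ∧ c q - q.1 ≤ 1 := by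
      simp only [c]; split_ifs <;> constructor <;> linarith
    rw [abs_le]
    split_ifs <;> constructor <;> linarith [h1.1, h1.2]
  · intro q hq t ht
    cases hs : sg q
    · simp only [hs] at ht
      simp only [Bool.false_eq_true, if_false] at ht
      have h1 := P.int_symm (hch _ hq (t - c q) ⟨by linarith [ht.1], by linarith [ht.2]⟩)
      convert h1 using 1
      rw [hF2 q hs, P.vt_add, sub_smul]; abel
    · simp only [hs, if_true] at ht
      have h1 := hch _ hq (c q - t) ⟨by linarith [ht.2], by linarith [ht.1]⟩
      convert h1 using 1
      rw [hF1 q hs, sub_smul]; abel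
  · intro Q i hQ
    rw [← Finset.sum_filter_add_sum_filter_not Q (fun q => sg q = true)]
    have cases1 : ∀ (R : Finset (ℕ × Bool × ℕ)), (∀ q ∈ R, ∀ q' ∈ R, q = q') →
        R = ∅ ∨ ∃ q ∈ R, R = {q} := by
      intro R hR
      rcases R.eq_empty_or_nonempty with h | ⟨q, hq⟩
      · exact Or.inl h
      · refine Or.inr ⟨q, hq, Finset.eq_singleton_iff_unique_mem.2 ⟨hq, fun q' hq' => hR _ hq' _ hq⟩⟩
    have A := cases1 {q ∈ Q | sg q = true} (by
      intro q hq q' hq'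
      rw [Finset.mem_filter] at hq hq'
      have h1 := hQ q hq.1
      have h2 := hQ q' hq'.1
      exact uniq q q' true hq.2 hq'.2 h1.1 h2.1 (h1.2.trans h2.2.symm))
    have B := cases1 {q ∈ Q | ¬ sg q = true} (by
      intro q hq q' hq'
      rw [Finset.mem_filter] at hq hq'
      have h1 := hQ q hq.1
      have h2 := hQ q' hq'.1
      exact uniq q q' false (by simpa using hq.2) (by simpa using hq'.2) h1.1 h2.1
        (h1.2.trans h2.2.symm))
    rcases A with A | ⟨q, hq, A⟩ <;> rcases B with B | ⟨q', hq', B⟩ <;> rw [A, B]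
    · simp
    · rw [Finset.mem_filter] at hq'
      simpa using hw1 _ (hQ q' hq'.1).1
    · rw [Finset.mem_filter] at hq
      simpa using hw1 _ (hQ q hq.1).1
    · rw [Finset.mem_filter] at hq hq'
      rw [Finset.sum_singleton, Finset.sum_singleton]
      have h1 := hQ q hq.1
      have h2 := hQ q' hq'.1
      refine hw2 _ h1.1 _ h2.1 ?_
      have h3 := hF1 q hq.2
      have h4 := hF2 q' (by simpa using hq'.2)
      rw [h2.2, ← h1.2, h3, P.vt_add] at h4
      have h5 := congrArg (cr (e 0)) h4
      simp only [cr_add_right, cr_sub_right, cr_smul_right, cr_self] at h5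
      rw [cr_add_right]
      linarith

end KT


namespace KT
open Set Filter Topology Bornology
variable {ι : Type} {D : Set (ℝ × ℝ)} {x : ι → ℝ × ℝ} {k : ℕ} {m : ℕ} {V : ℝ × ℝ} {e : ℕ → ℝ × ℝ}

lemma Pres.mem_fin (P : Pres D m V e) (A : Finset ℕ) (hA : A ⊆ Finset.range m) :
    V + ∑ j ∈ A, e j ∈ D := by
  classical
  refine (P.mem _).2 ⟨fun j => if j ∈ A then 1 else 0, ?_, ?_⟩
  · intro j; simp only; split_ifs <;> simp
  · simp only [ite_smul, one_smul, zero_smul]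
    rw [← Finset.sum_filter, Finset.filter_mem_eq_inter, Finset.inter_eq_right.2 hA]

lemma Pres.int_side (P : Pres D m V e) (hc : Convex ℝ D) {j : ℕ} (h2 : 2 ≤ j) (hj : j < m) :
    vt V e j - e 0 ∈ interior D := by
  obtain ⟨n, rfl⟩ : ∃ n, j = n + 1 := ⟨j - 1, by omega⟩
  set β := ∑ i ∈ Finset.range n, e (i + 1) with hβ
  have h0 : ∑ i ∈ Finset.range (n + 1), e i = β + e 0 := Finset.sum_range_succ' _ _
  have h1 : vt V e (n + 1) = V + e 0 + β := by
    rw [vt, h0]; abel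
  have hn : (Finset.range n).Nonempty := ⟨0, Finset.mem_range.2 (by omega)⟩
  have : V + β ∈ interior D := by
    refine mid_int hc (a := e 0) (c := e (n + 1)) ?_ ?_ ?_ ?_ ?_ ?_
    · simpa using P.mem_fin ∅ (by simp)
    · rw [← h1]
      exact P.mem_fin _ (Finset.range_subset_range.2 (by omega))
    · have := P.mem_fin (Finset.Ico 1 (n + 2)) (by
        intro i hi
        rw [Finset.mem_Ico] at hi
        rw [Finset.mem_range]; omega)
      convert this using 1
      rw [Finset.sum_Ico_eq_sum_range]
      simp only [add_comm 1]
      rw [show n + 2 - 1 = n + 1 by omega, Finset.sum_range_succ, ← hβ]; abel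
    · rw [hβ, cr_sum_right]
      refine Finset.sum_pos (fun i hi => P.pos _ _ (by omega) ?_) hn
      rw [Finset.mem_range] at hi; omega
    · rw [cr_comm, hβ, cr_sum_right, ← Finset.sum_neg_distrib]
      refine Finset.sum_pos (fun i hi => ?_) hn
      rw [Finset.mem_range] at hi
      rw [← cr_comm]
      exact P.pos _ _ (by omega) (by omega)
    · exact P.pos _ _ (by omega) (by omega)
  rw [h1]
  convert this using 1
  abel

lemma chord_int (hc : Convex ℝ D) {A r : ℝ × ℝ} {t0 t : ℝ} (hA : A ∈ D)
    (h1 : A - t0 • r ∈ interior D) (ht : 0 < t) (ht0 : t ≤ t0) : A - t • r ∈ interior D := by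
  have h := combo_int hc h1 hA (t := t / t0) (div_pos ht (by linarith))
    ((div_le_one (by linarith)).2 ht0)
  convert h using 1
  have : t0 ≠ 0 := by linarith
  rw [sub_sub_cancel_left, smul_neg, smul_smul, div_mul_cancel₀ _ this]
  abel

lemma Pres.chords (P : Pres D m V e) (hc : Convex ℝ D) (S : Finset ℕ)
    (hS : ∀ j ∈ S, 2 ≤ j ∧ j < m) :
    ∃ σ' : ℝ, 1 < σ' ∧ ∀ j ∈ S, ∀ t ∈ Ioo 0 σ', vt V e j - t • e 0 ∈ interior D := by
  have h1 : ∀ᶠ δ : ℝ in 𝓝[>] 0, ∀ j ∈ S, vt V e j - e 0 + δ • (- e 0) ∈ interior D := by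
    rw [Finset.eventually_all]
    intro j hj
    exact (line_tendsto _ _).eventually_mem
      (isOpen_interior.mem_nhds (P.int_side hc (hS j hj).1 (hS j hj).2))
  obtain ⟨δ, h2, h3⟩ := (h1.and self_mem_nhdsWithin).exists
  have h3 : 0 < δ := h3
  refine ⟨1 + δ, by linarith, fun j hj t ht => ?_⟩
  refine chord_int hc (t0 := 1 + δ) ?_ ?_ ht.1 ht.2.le
  · exact P.mem_fin _ (Finset.range_subset_range.2 (hS j hj).2.le)
  · convert h2 j hj using 1
    rw [add_smul, one_smul, smul_neg]; abel

/-- pushing an index of the upper row -/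
lemma Pres.top_push (P : Pres D m V e) (hc : Convex ℝ D) (hm : 3 ≤ m) {u : ℝ}
    (hu0 : 0 ≤ u) (hu1 : u < 1) : V + bs e m + u • e 0 ∉ interior D ∧
    ∀ᶠ δ : ℝ in 𝓝[>] 0, V + bs e m + u • e 0 + δ • (e 0 - e 1) ∈ interior D := by
  have F := P.faceTop (by omega)
  constructor
  · intro h
    have := int_lt (P.e0_ne (by omega)) F.le h
    rw [cr_add_right, cr_smul_right, cr_self] at this
    linarith
  · have h3 : V + bs e m + -e 1 ∈ D := by
      have := P.mem_fin (Finset.Ico 2 m) (by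
        intro i hi
        rw [Finset.mem_Ico] at hi
        rw [Finset.mem_range]; omega)
      convert this using 1
      obtain ⟨n, rfl⟩ : ∃ n, m = n + 2 := ⟨m - 2, by omega⟩
      rw [Finset.sum_Ico_eq_sum_range, bs]
      simp only [Nat.add_sub_cancel, show n + 2 - 1 = n + 1 by omega]
      rw [Finset.sum_range_succ']
      have : ∀ i, e (i + 1 + 1) = e (2 + i) := fun i => by congr 1; ring
      simp only [this, zero_add]
      abel
    filter_upwards [Ioo_mem_nhdsGT (show (0:ℝ) < (1 - u) / 2 by linarith)] with δ hδ
    have h1 := F.mem 0 ⟨le_rfl, zero_le_one⟩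
    have h2 := F.mem 1 ⟨zero_le_one, le_rfl⟩
    rw [zero_smul, add_zero] at h1
    rw [one_smul] at h2
    have := tri_int hc h1 h2 h3 (s := u + δ) (t := δ) ?_ (by linarith [hδ.1]) hδ.1
      (by linarith [hδ.2])
    · convert this using 1
      rw [add_smul, smul_neg, smul_sub]; abel
    · rw [cr_neg_right]
      have := P.pos 0 1 (by omega) (by omega)
      linarith

lemma Pres.row_push (P : Pres D m V e) (hc : Convex ℝ D) (hm : 3 ≤ m) {y : ℝ × ℝ}
    (hrow : ∀ n : ℤ, ∃ i, x i = y + (n:ℝ) • e 0) (c t : ℝ) :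
    ∃ (n : ℤ) (i : ι), x i = y + (n:ℝ) • e 0 ∧
      y + c • e 0 + V + bs e m + t • e 0 - (x i + c • e 0) ∉ interior D ∧
      ∀ᶠ δ : ℝ in 𝓝[>] 0,
        y + c • e 0 + V + bs e m + t • e 0 - (x i + c • e 0) + δ • (e 0 - e 1) ∈ interior D := by
  obtain ⟨i, hi⟩ := hrow ⌊t⌋
  refine ⟨⌊t⌋, i, hi, ?_⟩
  have h := P.top_push hc hm (u := t - ⌊t⌋) (by linarith [Int.floor_le t])
    (by linarith [Int.lt_floor_add_one t])
  have e1 : y + c • e 0 + V + bs e m + t • e 0 - (x i + c • e 0) =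
      V + bs e m + (t - ⌊t⌋) • e 0 := by
    rw [hi, sub_smul]; abel
  rw [e1]
  exact h

lemma Pres.row_push1 (P : Pres D m V e) (hc : Convex ℝ D) (hm : 3 ≤ m) {y : ℝ × ℝ}
    (hrow : ∀ n : ℤ, ∃ i, x i = y + (n:ℝ) • e 0) (t : ℝ) :
    ∃ J : Finset ι, J.card = 1 ∧ ∀ i ∈ J,
      y + V + bs e m + t • e 0 - x i ∉ interior D ∧
      ∀ᶠ δ : ℝ in 𝓝[>] 0, y + V + bs e m + t • e 0 - x i + δ • (e 0 - e 1) ∈ interior D := by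
  obtain ⟨n, i, h1, h2⟩ := P.row_push hc hm hrow 0 t
  refine ⟨{i}, by simp, ?_⟩
  intro j hj
  rw [Finset.mem_singleton] at hj
  subst hj
  simpa only [zero_smul, add_zero] using h2

/-- many edges: a row forces `5 ≤ k` -/
lemma Tl.row5 (T : Tl D x k) (P : Pres D m V e) (hm : 5 ≤ m) (h : Row x m e) : 5 ≤ k := by
  obtain ⟨y, l, h0, h1, hr⟩ := h
  have hS : ∀ j ∈ ({2, 3, 4} : Finset ℕ), 2 ≤ j ∧ j < m := by
    intro j hj
    simp only [Finset.mem_insert, Finset.mem_singleton] at hj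
    omega
  obtain ⟨σ', h2, h3⟩ := P.chords T.conv _ hS
  have := T.row_count P (by omega) h0 h1 hr 1 _
    (P.row_push1 T.conv (by omega) fun n => (hr n).1) {2, 3, 4} hS (fun _ => 1)
    (σ := (1 + σ') / 2) (σ' := σ') (by linarith) (by linarith) h3 (by simp) (by simp)
  norm_num at this
  have h5 : (4:ℝ) < k := by linarith
  exact_mod_cast h5

lemma Tl.row4_ne (T : Tl D x k) (P : Pres D 4 V e) (h : Row x 4 e)
    (hne : cr (e 0) (e 1) ≠ cr (e 0) (e 3)) : 5 ≤ k := by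
  obtain ⟨y, l, h0, h1, hr⟩ := h
  have hS : ∀ j ∈ ({2, 3} : Finset ℕ), 2 ≤ j ∧ j < 4 := by
    intro j hj
    simp only [Finset.mem_insert, Finset.mem_singleton] at hj
    omega
  obtain ⟨σ', h2, h3⟩ := P.chords T.conv _ hS
  have p2 := P.pos 0 2 (by norm_num) (by norm_num)
  have c2 : cr (e 0) (vt V e 2) = cr (e 0) V + cr (e 0) (e 1) := by
    simp [vt, Finset.sum_range_succ, cr_add_right, cr_self]
  have c3 : cr (e 0) (vt V e 3) = cr (e 0) V + cr (e 0) (e 1) + cr (e 0) (e 2) := by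
    simp [vt, Finset.sum_range_succ, cr_add_right, cr_self]; ring
  have c4 : cr (e 0) (V + vt V e 4) =
      2 * cr (e 0) V + cr (e 0) (e 1) + cr (e 0) (e 2) + cr (e 0) (e 3) := by
    simp [vt, Finset.sum_range_succ, cr_add_right, cr_self]; ring
  have key : ∃ w : ℕ → ℕ, (∀ j ∈ ({2, 3} : Finset ℕ), w j ≤ 2) ∧
      (∀ j ∈ ({2, 3} : Finset ℕ), ∀ j' ∈ ({2, 3} : Finset ℕ), cr (e 0) (vt V e j) +
      cr (e 0) (vt V e j') = cr (e 0) (V + vt V e 4) → w j + w j' ≤ 2) ∧ w 2 + w 3 = 3 := by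
    by_cases hh : cr (e 0) (e 1) = cr (e 0) (e 2) + cr (e 0) (e 3)
    · refine ⟨fun j => if j = 2 then 1 else 2, by simp, ?_, by simp⟩
      simp only [Finset.mem_insert, Finset.mem_singleton, forall_eq_or_imp, forall_eq, c2, c3, c4]
      refine ⟨⟨fun _ => by simp, fun h => ?_⟩, ⟨fun h => ?_, fun h => ?_⟩⟩
      · exact absurd (by linarith) hne
      · exact absurd (by linarith) hne
      · linarith
    · refine ⟨fun j => if j = 2 then 2 else 1, by simp, ?_, by simp⟩
      simp only [Finset.mem_insert, Finset.mem_singleton, forall_eq_or_imp, forall_eq, c2, c3, c4]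
      refine ⟨⟨fun h => ?_, fun h => ?_⟩, ⟨fun h => ?_, fun h => ?_⟩⟩
      · exact absurd (by linarith) hh
      · exact absurd (by linarith) hne
      · exact absurd (by linarith) hne
      · simp
  obtain ⟨w, w1, w2, w3⟩ := key
  have := T.row_count P (by omega) h0 h1 hr 1 _
    (P.row_push1 T.conv (by omega) fun n => (hr n).1) {2, 3} hS w
    (σ := (1 + σ') / 2) (σ' := σ') (by linarith) (by linarith) h3 w1 w2
  rw [Finset.sum_pair (by norm_num)] at this
  have w3' : (w 2 : ℝ) + w 3 = 3 := by exact_mod_cast w3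
  rw [w3'] at this
  push_cast at this
  have h5 : (4:ℝ) < k := by linarith
  exact_mod_cast h5

end KT


namespace KT
open Set Filter Topology Bornology
variable {ι : Type} {D : Set (ℝ × ℝ)} {x : ι → ℝ × ℝ} {k : ℕ} {m : ℕ} {V : ℝ × ℝ} {e : ℕ → ℝ × ℝ}

lemma chord_full (hc : Convex ℝ D) {A r : ℝ × ℝ} {L t : ℝ} (hA : A ∈ D)
    (h1 : A - r ∈ interior D) (hB : A - L • r ∈ D) (ht : 0 < t) (htL : t < L) :
    A - t • r ∈ interior D := by
  rcases le_or_gt t 1 with h | h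
  · exact chord_int hc (t0 := 1) hA (by simpa using h1) ht h
  · have := chord_int hc (A := A - L • r) (r := -r) (t0 := L - 1) (t := L - t) hB (by
      convert h1 using 1
      rw [smul_neg, sub_smul, one_smul]; abel) (by linarith) (by linarith)
    convert this using 1
    rw [smul_neg, sub_smul]; abel

lemma Tl.row4_gam (T : Tl D x k) (P : Pres D 4 V e) (h : Row x 4 e) (hk : k ≤ 4) :
    ∃ γ : ℝ, 0 < γ ∧ γ < 1 ∧ e 1 - e 3 = γ • e 0 ∧
      (∀ j ∈ ({2, 3} : Finset ℕ), ∀ t ∈ Ioo 0 (1 + γ), vt V e j - t • e 0 ∈ interior D) := by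
  have heq : cr (e 0) (e 1) = cr (e 0) (e 3) := by
    by_contra hne
    have := T.row4_ne P h hne
    omega
  obtain ⟨γ, hγ⟩ := cr_eq_zero (P.e0_ne (by norm_num)) (y := e 1 - e 3)
    (by rw [cr_sub_right]; linarith)
  have p03 := P.pos 0 3 (by norm_num) (by norm_num)
  have p13 := P.pos 1 3 (by norm_num) (by norm_num)
  have hpos : 0 < γ := by
    have h1 := congrArg (fun u => cr u (e 3)) hγ
    simp only [cr_sub_left, cr_self, cr_smul_left] at h1
    by_contra hn
    push Not at hn
    nlinarith
  have hS : ∀ j ∈ ({2, 3} : Finset ℕ), 2 ≤ j ∧ j < 4 := by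
    intro j hj
    simp only [Finset.mem_insert, Finset.mem_singleton] at hj
    omega
  have hch : ∀ j ∈ ({2, 3} : Finset ℕ), ∀ t ∈ Ioo 0 (1 + γ),
      vt V e j - t • e 0 ∈ interior D := by
    intro j hj t ht
    refine chord_full T.conv ?_ (P.int_side T.conv (hS j hj).1 (hS j hj).2) ?_ ht.1 ht.2
    · exact P.mem_fin _ (Finset.range_subset_range.2 (hS j hj).2.le)
    · rw [add_smul, ← hγ, one_smul]
      simp only [Finset.mem_insert, Finset.mem_singleton] at hj
      rcases hj with rfl | rfl
      · have := P.mem_fin {3} (by decide)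
        convert this using 1
        simp only [vt, Finset.sum_range_succ, Finset.sum_range_zero, Finset.sum_singleton]; abel
      · have := P.mem_fin {2, 3} (by decide)
        convert this using 1
        rw [Finset.sum_pair (by norm_num)]
        simp only [vt, Finset.sum_range_succ, Finset.sum_range_zero]; abel
  refine ⟨γ, hpos, ?_, hγ, hch⟩
  by_contra hn
  push Not at hn
  obtain ⟨y, l, h0, h1, hr⟩ := h
  have := T.row_count P (by omega) h0 h1 hr 1 _
    (P.row_push1 T.conv (by omega) fun n => (hr n).1) {2, 3} hS (fun _ => 1)
    (σ := 7 / 4) (σ' := 1 + γ) (by linarith) (by linarith) hch (by simp) (by simp)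
  norm_num at this
  have h5 : (k:ℝ) ≤ 4 := by exact_mod_cast hk
  linarith

lemma Tl.mu_iff (T : Tl D x k) {b : ℝ × ℝ} (h : ∀ y, mu x (y + b) = mu x y) (y : ℝ × ℝ) :
    (∃ i, x i = y + b) ↔ ∃ i, x i = y := by
  rw [← T.mu_pos, ← T.mu_pos, h]

lemma Tl.row4 (T : Tl D x k) (P : Pres D 4 V e) (h : Row x 4 e) : 5 ≤ k := by
  classical
  by_contra hk
  have hk : k ≤ 4 := by omega
  obtain ⟨γ, g0, g1, hγ, hch⟩ := T.row4_gam P h hk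
  have a4 : e 4 = - e 0 := P.anti 0
  have a5 : e 5 = - e 1 := P.anti 1
  have a6 : e 6 = - e 2 := P.anti 2
  have p01 := P.pos 0 1 (by norm_num) (by norm_num)
  have p02 := P.pos 0 2 (by norm_num) (by norm_num)
  have p03 := P.pos 0 3 (by norm_num) (by norm_num)
  have p12 := P.pos 1 2 (by norm_num) (by norm_num)
  have p13 := P.pos 1 3 (by norm_num) (by norm_num)
  have p23 := P.pos 2 3 (by norm_num) (by norm_num)
  have he1 : e 1 = e 3 + γ • e 0 := by rw [← hγ]; abel
  have m1 : ∀ y, mu x (y + bs (fun j => e (j + 1)) 4) = mu x y := by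
    rcases T.dich (P.rot (by norm_num) 1) (by norm_num) with h1 | h1
    · exact h1
    · exfalso
      obtain ⟨γ', g0', _, hγ', _⟩ := T.row4_gam (P.rot (by norm_num) 1) h1 hk
      simp only [Nat.reduceAdd, a4] at hγ'
      have he2 : e 2 = γ' • e 1 - e 0 := by rw [← hγ']; abel
      have : cr (e 2) (e 3) = (γ * γ' - 1) * cr (e 0) (e 3) := by
        rw [he2, he1]
        simp only [cr_sub_left, cr_smul_left, cr_add_left, cr_self]; ring
      have h12 : cr (e 1) (e 2) = cr (e 0) (e 1) := by
        rw [he2, cr_sub_right, cr_smul_right, cr_self, cr_comm (e 1) (e 0)]; ring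
      have g1' : γ' < 1 := by assumption
      have : γ * γ' < 1 := by nlinarith
      nlinarith [mul_pos (sub_pos.2 this) p03]
  have m3 : ∀ y, mu x (y + bs (fun j => e (j + 3)) 4) = mu x y := by
    rcases T.dich (P.rot (by norm_num) 3) (by norm_num) with h1 | h1
    · exact h1
    · exfalso
      obtain ⟨γ', g0', _, hγ', _⟩ := T.row4_gam (P.rot (by norm_num) 3) h1 hk
      simp only [Nat.reduceAdd, zero_add, a4, a6] at hγ'
      have he2 : e 2 = γ' • e 3 + e 0 := by rw [← hγ']; abel
      have : cr (e 1) (e 2) = (γ * γ' - 1) * cr (e 0) (e 3) := by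
        rw [he2, he1]
        simp only [cr_add_right, cr_smul_right, cr_add_left, cr_smul_left, cr_self]
        rw [cr_comm (e 3) (e 0)]; ring
      have g1' : γ' < 1 := by assumption
      have : γ * γ' < 1 := by nlinarith
      nlinarith [mul_pos (sub_pos.2 this) p03]
  have b13 : bs (fun j => e (j + 1)) 4 + bs (fun j => e (j + 3)) 4 = -((2 + γ) • e 0) := by
    simp only [bs, Finset.sum_range_succ, Finset.sum_range_zero, Nat.add_sub_cancel]
    simp only [show 4 - 1 = 3 from rfl, Finset.sum_range_succ, Finset.sum_range_zero,
      Nat.reduceAdd, a4, a5, a6, add_smul, ← hγ, two_smul, zero_add]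
    abel
  obtain ⟨y, l, h0, h1, hr⟩ := h
  have row2 : ∀ n : ℤ, ∃ i, x i = (y + γ • e 0) + (n:ℝ) • e 0 := by
    intro n
    obtain ⟨i, hi⟩ := (hr (n - 2)).1
    rw [← T.mu_iff m1, ← T.mu_iff m3]
    refine ⟨i, ?_⟩
    rw [hi, add_assoc _ (bs _ _) (bs _ _), b13]
    push_cast
    simp only [sub_smul, add_smul]; abel
  have hS : ∀ j ∈ ({2, 3} : Finset ℕ), 2 ≤ j ∧ j < 4 := by
    intro j hj
    simp only [Finset.mem_insert, Finset.mem_singleton] at hj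
    omega
  have hJ : ∀ t : ℝ, ∃ J : Finset ι, J.card = 2 ∧ ∀ i ∈ J,
      y + V + bs e 4 + t • e 0 - x i ∉ interior D ∧
      ∀ᶠ δ : ℝ in 𝓝[>] 0, y + V + bs e 4 + t • e 0 - x i + δ • (e 0 - e 1) ∈ interior D := by
    intro t
    obtain ⟨n1, i1, h1, h2⟩ := P.row_push T.conv (by omega) (fun n => (hr n).1) 0 t
    obtain ⟨n2, i2, h3, h4⟩ := P.row_push T.conv (by omega) row2 0 (t - γ)
    have hne : i1 ≠ i2 := by
      rintro rfl
      rw [h1, add_assoc, ← add_smul, add_right_inj] at h3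
      have h5 := smul_left_injective ℝ (P.e0_ne (by norm_num)) h3
      have h6 : (n2:ℝ) < n1 := by linarith
      have h7 : (n1:ℝ) < ((n2 + 1 : ℤ) : ℝ) := by push_cast; linarith
      rw [Int.cast_lt] at h6 h7
      omega
    refine ⟨{i1, i2}, Finset.card_pair hne, ?_⟩
    intro i hi
    simp only [Finset.mem_insert, Finset.mem_singleton] at hi
    rcases hi with rfl | rfl
    · simpa only [zero_smul, add_zero] using h2
    · simp only [zero_smul, add_zero] at h4
      have : y + γ • e 0 + V + bs e 4 + (t - γ) • e 0 - x i =
        y + V + bs e 4 + t • e 0 - x i := by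
        rw [sub_smul]; abel
      rwa [this] at h4
  have := T.row_count P (by omega) h0 h1 hr 2 _ hJ {2, 3} hS (fun _ => 1)
    (σ := 1 + γ / 2) (σ' := 1 + γ) (by linarith) (by linarith) hch (by simp) (by simp)
  norm_num at this
  have h5 : (k:ℝ) ≤ 4 := by exact_mod_cast hk
  linarith

end KT


namespace KT
open Set Filter Topology Bornology
variable {ι : Type} {D : Set (ℝ × ℝ)} {x : ι → ℝ × ℝ} {k : ℕ} {m : ℕ} {V : ℝ × ℝ} {e : ℕ → ℝ × ℝ}

/-- periods of the translation multiset -/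
def Per (x : ι → ℝ × ℝ) (g : ℝ × ℝ) : Prop := ∀ y, mu x (y + g) = mu x y

lemma Per.zero : Per x 0 := fun y => by rw [add_zero]
lemma Per.add {g h : ℝ × ℝ} (hg : Per x g) (hh : Per x h) : Per x (g + h) := fun y => by
  rw [← add_assoc, hh, hg]
lemma Per.neg {g : ℝ × ℝ} (hg : Per x g) : Per x (-g) := fun y => by
  rw [← hg (y + -g), neg_add_cancel_right]
lemma Per.sub {g h : ℝ × ℝ} (hg : Per x g) (hh : Per x h) : Per x (g - h) := by
  rw [sub_eq_add_neg]; exact hg.add hh.neg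

lemma Tl.five (T : Tl D x k) {V d : ℝ × ℝ} (g : Fin 5 → ℝ × ℝ) (hg : Function.Injective g)
    (hP : ∀ j, Per x (g j)) (hd : ∀ j, ∀ᶠ δ : ℝ in 𝓝[>] 0, V + g j + δ • d ∈ interior D) :
    5 ≤ k := by
  classical
  obtain ⟨i0, _⟩ := T.ne
  have h1 : ∀ j, ∃ i, x i = x i0 - g j := by
    intro j
    rw [← T.mu_pos, ← hP j, sub_add_cancel, T.mu_pos]
    exact ⟨i0, rfl⟩
  choose f hf using h1
  have hinj : Function.Injective f := by
    intro a b hab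
    apply hg
    have := hf a
    rw [hab, hf b] at this
    simpa using this.symm
  obtain ⟨δ, hδ⟩ := (eventually_all.2 hd).exists
  have := T.tile.2.2 (x i0 + V + δ • d) (Finset.univ.image f) (by
    intro i hi
    obtain ⟨j, _, rfl⟩ := Finset.mem_image.1 hi
    convert hδ j using 1
    rw [hf]; abel)
  rwa [Finset.card_image_of_injective _ hinj, Finset.card_univ, Fintype.card_fin] at this

lemma inj5 {a0 a1 a2 a3 a4 : ℝ × ℝ} (h01 : a0 ≠ a1) (h02 : a0 ≠ a2) (h03 : a0 ≠ a3) (h04 : a0 ≠ a4)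
    (h12 : a1 ≠ a2) (h13 : a1 ≠ a3) (h14 : a1 ≠ a4) (h23 : a2 ≠ a3) (h24 : a2 ≠ a4)
    (h34 : a3 ≠ a4) : Function.Injective ![a0, a1, a2, a3, a4] := by
  intro i j h
  fin_cases i <;> fin_cases j <;> simp_all

lemma ne_of_cr {a b : ℝ × ℝ} (h : 0 < cr a b) : a ≠ b := by
  rintro rfl
  rw [cr_self] at h
  exact lt_irrefl _ h

lemma ne0_of_cr {a b : ℝ × ℝ} (h : 0 < cr a b) : (0 : ℝ × ℝ) ≠ a := by
  rintro rfl
  rw [cr_zero_left] at h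
  exact lt_irrefl _ h

/-- sum of two consecutive edges -/
def ff (e : ℕ → ℝ × ℝ) (i : ℕ) : ℝ × ℝ := e i + e (i + 1)

lemma Pres.ff_pos (P : Pres D m V e) {i j : ℕ} (h1 : i < j) (h2 : j < i + m) :
    0 < cr (ff e i) (ff e j) := by
  simp only [ff, cr_add_left, cr_add_right]
  have a := P.pos i j h1 h2
  have b : 0 ≤ cr (e i) (e (j + 1)) := by
    rcases eq_or_lt_of_le (show j + 1 ≤ i + m by omega) with h | h
    · rw [h, P.anti, cr_neg_right, cr_self, neg_zero]
    · exact (P.pos i (j + 1) (by omega) h).le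
  have c : 0 ≤ cr (e (i + 1)) (e j) := by
    rcases eq_or_lt_of_le (show i + 1 ≤ j by omega) with h | h
    · rw [h, cr_self]
    · exact (P.pos (i + 1) j h (by omega)).le
  have d := P.pos (i + 1) (j + 1) (by omega) (by omega)
  linarith

lemma Pres.ff_anti (P : Pres D m V e) (i : ℕ) : ff e (i + m) = - ff e i := by
  rw [ff, ff, P.anti, show i + m + 1 = i + 1 + m by ring, P.anti]; abel

lemma Tl.per_bs (T : Tl D x k) (P : Pres D m V e) (hm : 2 ≤ m) (hk : k ≤ 4)
    (hr : ∀ (V : ℝ × ℝ) (e : ℕ → ℝ × ℝ), Pres D m V e → Row x m e → 5 ≤ k) (i : ℕ) :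
    Per x (bs (fun j => e (j + i)) m) := by
  rcases T.dich (P.rot (by omega) i) hm with h | h
  · exact h
  · have := hr _ _ (P.rot (by omega) i) h
    omega

lemma Tl.per_ff (T : Tl D x k) (P : Pres D m V e) (hm : 2 ≤ m) (hk : k ≤ 4)
    (hr : ∀ (V : ℝ × ℝ) (e : ℕ → ℝ × ℝ), Pres D m V e → Row x m e → 5 ≤ k) (i : ℕ) :
    Per x (ff e i) := by
  have h := (T.per_bs P hm hk hr i).sub (T.per_bs P hm hk hr (i + 1))
  have : bs (fun j => e (j + i)) m - bs (fun j => e (j + (i + 1))) m = ff e i := by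
    obtain ⟨n, rfl⟩ : ∃ n, m = n + 2 := ⟨m - 2, by omega⟩
    simp only [bs, show n + 2 - 1 = n + 1 by omega]
    rw [Finset.sum_range_succ', Finset.sum_range_succ]
    have h1 : e (n + 1 + (i + 1)) = - e i := by
      rw [← P.anti]; congr 1; ring
    have h2 : ∀ j, e (j + 1 + 1 + i) = e (j + 1 + (i + 1)) := fun j => by congr 1; ring
    rw [h1]
    simp only [h2, ff]
    rw [show 0 + 1 + i = i + 1 by ring]
    abel
  rwa [this] at h

lemma push_of_int {p d : ℝ × ℝ} (h : p ∈ interior D) :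
    ∀ᶠ δ : ℝ in 𝓝[>] 0, p + δ • d ∈ interior D :=
  (line_tendsto p d).eventually_mem (isOpen_interior.mem_nhds h)

lemma push_tri (hc : Convex ℝ D) {p a b : ℝ × ℝ} (h0 : p ∈ D) (h1 : p + a ∈ D)
    (h2 : p + a + b ∈ D) (hab : 0 < cr a b) :
    ∀ᶠ δ : ℝ in 𝓝[>] 0, p + δ • ((2:ℝ) • a + b) ∈ interior D := by
  filter_upwards [Ioo_mem_nhdsGT (show (0:ℝ) < 1 / 2 by norm_num)] with δ hδ
  rw [add_assoc] at h2
  have := tri_int hc h0 h1 h2 (by rw [cr_add_right, cr_self]; linarith) hδ.1 hδ.1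
    (by linarith [hδ.2])
  convert this using 1
  module

lemma Pres.int_ff (P : Pres D m V e) (hc : Convex ℝ D) {j : ℕ} (hj : 1 ≤ j) (hjm : j + 2 < m) :
    V + ff e j ∈ interior D := by
  obtain ⟨j, rfl⟩ : ∃ i, j = i + 1 := ⟨j - 1, by omega⟩
  refine mid_int hc (a := e j) (c := e (j + 3)) ?_ ?_ ?_ ?_ ?_ ?_
  · simpa using P.mem_fin ∅ (by simp)
  · have := P.mem_fin {j, j + 1, j + 2} (by
      intro i hi
      simp only [Finset.mem_insert, Finset.mem_singleton] at hi
      rw [Finset.mem_range]; omega)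
    convert this using 1
    rw [Finset.sum_insert (by simp), Finset.sum_insert (by simp), Finset.sum_singleton, ff]
    abel
  · have := P.mem_fin {j + 1, j + 2, j + 3} (by
      intro i hi
      simp only [Finset.mem_insert, Finset.mem_singleton] at hi
      rw [Finset.mem_range]; omega)
    convert this using 1
    rw [Finset.sum_insert (by simp), Finset.sum_insert (by simp), Finset.sum_singleton, ff]
    abel
  · rw [ff, cr_add_right]
    exact add_pos (P.pos _ _ (by omega) (by omega)) (P.pos _ _ (by omega) (by omega))
  · rw [ff, cr_add_left]
    exact add_pos (P.pos _ _ (by omega) (by omega)) (P.pos _ _ (by omega) (by omega))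
  · exact P.pos _ _ (by omega) (by omega)

lemma Pres.push_set (P : Pres D m V e) (hc : Convex ℝ D) (hm : 4 ≤ m) (A : Finset ℕ)
    (hA : A ⊆ {0, 1}) :
    ∀ᶠ δ : ℝ in 𝓝[>] 0, V + ∑ j ∈ A, e j + δ • ((2:ℝ) • e 2 + e 3) ∈ interior D := by
  have hA2 : 2 ∉ A := fun h => by have := hA h; simp at this
  have hA3 : 3 ∉ A := fun h => by have := hA h; simp at this
  have hlt : ∀ i ∈ A, i < 2 := by
    intro i hi
    have := hA hi
    simp only [Finset.mem_insert, Finset.mem_singleton] at this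
    omega
  refine push_tri hc ?_ ?_ ?_ (P.pos 2 3 (by omega) (by omega))
  · refine P.mem_fin A fun i hi => Finset.mem_range.2 ?_
    have := hlt i hi; omega
  · have := P.mem_fin (insert 2 A) fun i hi => Finset.mem_range.2 (by
      rcases Finset.mem_insert.1 hi with h | h
      · omega
      · have := hlt i h; omega)
    rw [Finset.sum_insert hA2] at this
    convert this using 1; abel
  · have := P.mem_fin (insert 3 (insert 2 A)) fun i hi => Finset.mem_range.2 (by
      rcases Finset.mem_insert.1 hi with h | h
      · omega
      · rcases Finset.mem_insert.1 h with h | h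
        · omega
        · have := hlt i h; omega)
    rw [Finset.sum_insert (by simp [hA3]), Finset.sum_insert hA2] at this
    convert this using 1; abel

lemma Pres.push0 (P : Pres D m V e) (hc : Convex ℝ D) (hm : 4 ≤ m) :
    ∀ᶠ δ : ℝ in 𝓝[>] 0, V + 0 + δ • ((2:ℝ) • e 2 + e 3) ∈ interior D := by
  simpa using P.push_set hc hm ∅ (by simp)

lemma Pres.pushf (P : Pres D m V e) (hc : Convex ℝ D) (hm : 4 ≤ m) :
    ∀ᶠ δ : ℝ in 𝓝[>] 0, V + ff e 0 + δ • ((2:ℝ) • e 2 + e 3) ∈ interior D := by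
  have := P.push_set hc hm {0, 1} (by simp)
  rwa [Finset.sum_pair (by norm_num)] at this

lemma Tl.m6 (T : Tl D x k) (P : Pres D m V e) (hm : 6 ≤ m) : 5 ≤ k := by
  by_contra hk
  have hk : k ≤ 4 := by omega
  have hf := T.per_ff P (by omega) hk fun V e P h => T.row5 P (by omega) h
  have h := T.five (V := V) (d := (2:ℝ) • e 2 + e 3) ![0, ff e 0, ff e 1, ff e 2, ff e 3]
    (inj5 (ne0_of_cr (P.ff_pos (i := 0) (j := 1) (by omega) (by omega)))
      (ne0_of_cr (P.ff_pos (i := 1) (j := 2) (by omega) (by omega)))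
      (ne0_of_cr (P.ff_pos (i := 2) (j := 3) (by omega) (by omega)))
      (ne0_of_cr (P.ff_pos (i := 3) (j := 4) (by omega) (by omega)))
      (ne_of_cr (P.ff_pos (by omega) (by omega))) (ne_of_cr (P.ff_pos (by omega) (by omega)))
      (ne_of_cr (P.ff_pos (by omega) (by omega))) (ne_of_cr (P.ff_pos (by omega) (by omega)))
      (ne_of_cr (P.ff_pos (by omega) (by omega))) (ne_of_cr (P.ff_pos (by omega) (by omega))))
    (by
      intro j
      fin_cases j
      · exact Per.zero
      · exact hf 0
      · exact hf 1
      · exact hf 2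
      · exact hf 3)
    (by
      intro j
      fin_cases j
      · exact P.push0 T.conv (by omega)
      · exact P.pushf T.conv (by omega)
      · exact push_of_int (P.int_ff T.conv (by omega) (by omega))
      · exact push_of_int (P.int_ff T.conv (by omega) (by omega))
      · exact push_of_int (P.int_ff T.conv (by omega) (by omega)))
  omega

lemma Tl.m4 (T : Tl D x k) (P : Pres D 4 V e) : 5 ≤ k := by
  by_contra hk
  have hk : k ≤ 4 := by omega
  have hrr : ∀ (V : ℝ × ℝ) (e : ℕ → ℝ × ℝ), Pres D 4 V e → Row x 4 e → 5 ≤ k :=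
    fun V e P h => T.row4 P h
  have hf := T.per_ff P (by omega) hk hrr
  have hb := T.per_bs P (by omega) hk hrr 0
  have hb0 : bs (fun j => e (j + 0)) 4 = e 1 + e 2 + e 3 := by
    simp [bs, Finset.sum_range_succ]
  rw [hb0] at hb
  have g1 : Per x (e 1) := by
    have := hb.sub (hf 2)
    convert this using 1
    simp only [ff]; abel
  have g2 : Per x (e 2) := by
    have := (hf 1).sub g1
    convert this using 1
    simp only [ff]; abel
  have g0 : Per x (e 0) := by
    have := (hf 0).sub g1
    convert this using 1
    simp only [ff]; abel
  have p01 := P.pos 0 1 (by norm_num) (by norm_num)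
  have p02 := P.pos 0 2 (by norm_num) (by norm_num)
  have p12 := P.pos 1 2 (by norm_num) (by norm_num)
  have p23 := P.pos 2 3 (by norm_num) (by norm_num)
  have p13 := P.pos 1 3 (by norm_num) (by norm_num)
  have h := T.five (V := V) (d := (2:ℝ) • e 2 + e 3) ![0, e 0, e 1, e 2, ff e 0]
    (inj5 (ne0_of_cr p01) (ne0_of_cr p12) (ne0_of_cr p23)
      (ne0_of_cr (P.ff_pos (i := 0) (j := 1) (by omega) (by omega)))
      (ne_of_cr p01) (ne_of_cr p02)
      (ne_of_cr (by rw [ff, cr_add_right, cr_self]; linarith)) (ne_of_cr p12)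
      (Ne.symm (ne_of_cr (by rw [ff, cr_add_left, cr_self]; linarith)))
      (Ne.symm (ne_of_cr (by rw [ff, cr_add_left]; linarith))))
    (by
      intro j
      fin_cases j
      · exact Per.zero
      · exact g0
      · exact g1
      · exact g2
      · exact hf 0)
    (by
      intro j
      fin_cases j
      · exact P.push0 T.conv (by omega)
      · simpa using P.push_set T.conv (by omega) {0} (by simp)
      · refine push_of_int ?_
        have := P.int_side T.conv (j := 2) (by omega) (by omega)
        convert this using 1
        simp only [vt, Finset.sum_range_succ, Finset.sum_range_zero]; abel
      · refine push_of_int ?_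
        refine mid_int T.conv (a := e 1) (c := e 3) ?_ ?_ ?_ p12 p23 p13
        · simpa using P.mem_fin ∅ (by simp)
        · have := P.mem_fin {1, 2} (by decide)
          rwa [Finset.sum_pair (by norm_num), ← add_assoc] at this
        · have := P.mem_fin {2, 3} (by decide)
          rwa [Finset.sum_pair (by norm_num), ← add_assoc] at this
      · exact P.pushf T.conv (by omega))
  omega

lemma Tl.m5_aux (T : Tl D x k) (P : Pres D 5 V e) (hk : k ≤ 4) :
    ff e 0 + ff e 3 = ff e 1 ∨ ff e 0 + ff e 3 = ff e 2 := by
  by_contra hn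
  push Not at hn
  have hf := T.per_ff P (by omega) hk fun V e P h => T.row5 P (by omega) h
  have p03 := P.ff_pos (i := 0) (j := 3) (by omega) (by omega)
  have h := T.five (V := V) (d := (2:ℝ) • e 2 + e 3) ![0, ff e 0, ff e 1, ff e 2, ff e 0 + ff e 3]
    (inj5 (ne0_of_cr (P.ff_pos (i := 0) (j := 1) (by omega) (by omega)))
      (ne0_of_cr (P.ff_pos (i := 1) (j := 2) (by omega) (by omega)))
      (ne0_of_cr (P.ff_pos (i := 2) (j := 3) (by omega) (by omega)))
      (ne0_of_cr (b := ff e 3) (by rw [cr_add_left, cr_self]; linarith))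
      (ne_of_cr (P.ff_pos (by omega) (by omega))) (ne_of_cr (P.ff_pos (by omega) (by omega)))
      (ne_of_cr (by rw [cr_add_right, cr_self]; linarith))
      (ne_of_cr (P.ff_pos (by omega) (by omega)))
      hn.1.symm hn.2.symm)
    (by
      intro j
      fin_cases j
      · exact Per.zero
      · exact hf 0
      · exact hf 1
      · exact hf 2
      · exact (hf 0).add (hf 3))
    (by
      intro j
      fin_cases j
      · exact P.push0 T.conv (by omega)
      · exact P.pushf T.conv (by omega)
      · exact push_of_int (P.int_ff T.conv (by omega) (by omega))
      · exact push_of_int (P.int_ff T.conv (by omega) (by omega))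
      · refine push_of_int ?_
        have q12 := P.pos 1 2 (by norm_num) (by norm_num)
        have q13 := P.pos 1 3 (by norm_num) (by norm_num)
        have q14 := P.pos 1 4 (by norm_num) (by norm_num)
        have q23 := P.pos 2 3 (by norm_num) (by norm_num)
        have q24 := P.pos 2 4 (by norm_num) (by norm_num)
        have := mid_int T.conv (p := V + ff e 0) (a := e 2) (b := ff e 3) (c := -e 1) (by
            have := P.mem_fin {0, 1} (by decide)
            rwa [Finset.sum_pair (by norm_num)] at this)
          (by
            have := P.mem_fin {0, 1, 2, 3, 4} (by decide)
            convert this using 1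
            simp [ff]; abel)
          (by
            have := P.mem_fin {0, 3, 4} (by decide)
            convert this using 1
            simp [ff]; abel)
          (by rw [ff, cr_add_right]; linarith)
          (by rw [ff, cr_add_left, cr_neg_right, cr_neg_right, ← cr_comm, ← cr_comm]; linarith)
          (by rw [cr_neg_right, ← cr_comm]; exact q12)
        rwa [add_assoc] at this)
  omega

lemma Tl.m5 (T : Tl D x k) (P : Pres D 5 V e) : 5 ≤ k := by
  by_contra hk
  have hk : k ≤ 4 := by omega
  have key : ∀ i, ff e i + ff e (i + 3) = ff e (i + 1) ∨ ff e i + ff e (i + 3) = ff e (i + 2) := by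
    intro i
    have := T.m5_aux (P.rot (by omega) i) hk
    have h1 : ∀ j, ff (fun j => e (j + i)) j = ff e (i + j) := by
      intro j
      simp only [ff]
      rw [show j + i = i + j by ring, show j + 1 + i = i + j + 1 by ring]
    simpa only [h1, add_zero] using this
  have f5 : ff e 5 = - ff e 0 := P.ff_anti 0
  have f6 : ff e 6 = - ff e 1 := P.ff_anti 1
  have f7 : ff e 7 = - ff e 2 := P.ff_anti 2
  have k0 := key 0
  have k1 := key 1
  have k2 := key 2
  have k3 := key 3
  have k4 := key 4
  simp only [Nat.reduceAdd, zero_add, f5, f6, f7] at k0 k1 k2 k3 k4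
  have rel : ff e 0 - ff e 1 + ff e 2 - ff e 3 + ff e 4 = 0 := by
    have : e 5 = - e 0 := P.anti 0
    simp only [ff, Nat.reduceAdd, this]; abel
  have n12 := ne_of_cr (P.ff_pos (i := 1) (j := 2) (by omega) (by omega))
  have n0 := (ne0_of_cr (P.ff_pos (i := 0) (j := 1) (by omega) (by omega))).symm
  have n1 := (ne0_of_cr (P.ff_pos (i := 1) (j := 2) (by omega) (by omega))).symm
  have n2 := (ne0_of_cr (P.ff_pos (i := 2) (j := 3) (by omega) (by omega))).symm
  have n3 := (ne0_of_cr (P.ff_pos (i := 3) (j := 4) (by omega) (by omega))).symm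
  clear key
  generalize ff e 0 = a0 at *
  generalize ff e 1 = a1 at *
  generalize ff e 2 = a2 at *
  generalize ff e 3 = a3 at *
  generalize ff e 4 = a4 at *
  have r1 := congrArg Prod.fst rel
  have r2 := congrArg Prod.snd rel
  simp only [Prod.fst_add, Prod.fst_sub, Prod.snd_add, Prod.snd_sub, Prod.fst_zero, Prod.snd_zero] at r1 r2
  rw [Prod.ext_iff, Prod.ext_iff] at k0 k1 k2 k3 k4
  simp only [Prod.fst_add, Prod.fst_sub, Prod.snd_add, Prod.snd_sub, Prod.fst_neg, Prod.snd_neg] at k0 k1 k2 k3 k4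
  rcases k0 with ⟨k0, k0y⟩ | ⟨k0, k0y⟩
  · rcases k2 with ⟨k2, k2y⟩ | ⟨k2, k2y⟩
    · exact n12 (Prod.ext (by linarith) (by linarith))
    · rcases k1 with ⟨k1, k1y⟩ | ⟨k1, k1y⟩
      · exact n3 (Prod.ext (by simp only [Prod.fst_zero]; linarith) (by simp only [Prod.snd_zero]; linarith))
      · exact n2 (Prod.ext (by simp only [Prod.fst_zero]; linarith) (by simp only [Prod.snd_zero]; linarith))
  · rcases k3 with ⟨k3, k3y⟩ | ⟨k3, k3y⟩
    · rcases k4 with ⟨k4, k4y⟩ | ⟨k4, k4y⟩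
      · exact n1 (Prod.ext (by simp only [Prod.fst_zero]; linarith) (by simp only [Prod.snd_zero]; linarith))
      · exact n0 (Prod.ext (by simp only [Prod.fst_zero]; linarith) (by simp only [Prod.snd_zero]; linarith))
    · exact n12 (Prod.ext (by linarith) (by linarith))

lemma Tl.main (T : Tl D x k) (P : Pres D m V e) (hm : 4 ≤ m) : 5 ≤ k := by
  rcases (by omega : m = 4 ∨ m = 5 ∨ 6 ≤ m) with rfl | rfl | h
  · exact T.m4 P
  · exact T.m5 P
  · exact T.m6 P h

end KT

/-- Theorem 2: a convex domain which is neither a parallelogram nor a centrally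
symmetric hexagon admits no `k`-fold translative tiling of the plane with `k ≤ 4`. -/
theorem no_low_multiplicity_tiling (D : Set (ℝ × ℝ))
    (hD : IsCompact D) (hconv : Convex ℝ D) (hint : (interior D).Nonempty)
    (hnotpar : ¬ IsParallelogram D) (hnothex : ¬ IsCentrallySymmetricHexagon D)
    (k : ℕ) (hk : 0 < k) (ι : Type) (x : ι → ℝ × ℝ)
    (htile : IsKFoldTranslativeTiling D x k) :
    5 ≤ k := by
  have T : KT.Tl D x k := ⟨hD, hconv, hint, hk, htile⟩
  obtain ⟨m, V, e, hm, P⟩ := T.pres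
  rcases (by omega : m = 2 ∨ m = 3 ∨ 4 ≤ m) with rfl | rfl | h
  · exact absurd P.par hnotpar
  · exact absurd (P.hex hconv hint) hnothex
  · exact T.main P h
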